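/- There is a constant C such that for every n ≥ 2, the symmetric group S_n has a presentation with at most 18 generators and at most 58 relators whose length is at most C·(1 + log₂ n). -/

import Mathlib

/-- `G` has a presentation with at most `g` generators, at most `r` relators, and
length (number of generators plus the total length of the reduced relator words) at
most `L`. -/
def HasBoundedPresentation (G : Type) [Group G] (g r : ℕ) (L : ℝ) : Prop :=
  ∃ (m : ℕ) (π : FreeGroup (Fin m) →* G) (R : Finset (FreeGroup (Fin m))),
    m ≤ g ∧ Function.Surjective π ∧ R.card ≤ r ∧
    π.ker = Subgroup.normalClosure (R : Set (FreeGroup (Fin m))) ∧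
    ((m + ∑ w ∈ R, FreeGroup.norm w : ℕ) : ℝ) ≤ L

open Equiv

/-- The relations satisfied by the star transpositions `s a = (* a)`. -/
structure StarRel {Ω G : Type} [Group G] (s : Ω → G) : Prop where
  sq : ∀ a, s a * s a = 1
  br : ∀ a b, a ≠ b → s a * s b * s a = s b * s a * s b
  cm : ∀ a b c, a ≠ b → a ≠ c → b ≠ c → s a * s b * s a * s c = s c * (s a * s b * s a)

/-- `g` permutes the family `s` by conjugation according to `π`. -/
def Cp {Ω G : Type} [Group G] (s : Ω → G) (g : G) (π : Perm Ω) : Prop :=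
  ∀ ω, g * s ω * g⁻¹ = s (π ω)

section
variable {Ω G : Type} [Group G] {s : Ω → G}

theorem Cp.one : Cp s 1 1 := fun ω => by simp

theorem Cp.mul {g g' : G} {π π' : Perm Ω} (h : Cp s g π) (h' : Cp s g' π') :
    Cp s (g * g') (π * π') := fun ω => by
  rw [Perm.mul_apply, ← h, ← h']; group

theorem Cp.inv {g : G} {π : Perm Ω} (h : Cp s g π) : Cp s g⁻¹ π⁻¹ := fun ω => by
  have := h (π⁻¹ ω)
  have e : π (π⁻¹ ω) = ω := π.apply_symm_apply ω
  rw [e] at this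
  rw [← this]; group

theorem Cp.pow {g : G} {π : Perm Ω} (h : Cp s g π) (n : ℕ) : Cp s (g ^ n) (π ^ n) := by
  induction n with
  | zero => simpa using Cp.one
  | succ n ih => rw [pow_succ, pow_succ]; exact ih.mul h

theorem Cp.congr {g : G} {π π' : Perm Ω} (h : Cp s g π) (e : ∀ ω, π ω = π' ω) : Cp s g π' :=
  fun ω => by rw [h, e]

theorem StarRel.inv (hs : StarRel s) (a : Ω) : (s a)⁻¹ = s a :=
  inv_eq_of_mul_eq_one_left (hs.sq a)

theorem StarRel.cp_swap [DecidableEq Ω] (hs : StarRel s) {a b : Ω} (hab : a ≠ b) :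
    Cp s (s a * s b * s a) (swap a b) := by
  intro c
  have hi : (s a * s b * s a)⁻¹ = s a * s b * s a := by
    simp [mul_inv_rev, hs.inv, mul_assoc]
  have ha := hs.sq a
  have hb := hs.sq b
  rw [hi]
  by_cases h1 : c = a
  · subst h1
    rw [swap_apply_left]
    calc s c * s b * s c * s c * (s c * s b * s c)
        = s c * s b * (s c * s c) * (s c * s b * s c) := by group
      _ = s c * s b * (s b * s c * s b) := by rw [ha, hs.br c b hab, mul_one]
      _ = s c * (s b * s b) * s c * s b := by group
      _ = s b := by rw [hb, mul_one, ha, one_mul]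
  · by_cases h2 : c = b
    · subst h2
      rw [swap_apply_right]
      calc s a * s c * s a * s c * (s a * s c * s a)
          = s c * s a * s c * s c * (s a * s c * s a) := by rw [hs.br a c hab]
        _ = s c * s a * (s c * s c) * (s a * s c * s a) := by group
        _ = s c * (s a * s a) * s c * s a := by rw [hb]; group
        _ = s a := by rw [ha, mul_one, hb, one_mul]
    · rw [swap_apply_of_ne_of_ne h1 h2, hs.cm a b c hab (Ne.symm h1) (Ne.symm h2)]
      calc s c * (s a * s b * s a) * (s a * s b * s a)
          = s c * (s a * s b * (s a * s a) * s b * s a) := by group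
        _ = s c * (s a * (s b * s b) * s a) := by rw [ha]; group
        _ = s c := by rw [hb, mul_one, ha, mul_one]

/-- Propagation of the action of `g` along an orbit of `y`. -/
theorem Cp.seed {y y' g : G} {η η' : Perm Ω} {π : Ω → Ω} (hy : Cp s y η) (hy' : Cp s y' η')
    (hrel : g * y * g⁻¹ = y') (hπ : ∀ ω, π (η ω) = η' (π ω)) {ω : Ω}
    (h0 : g * s ω * g⁻¹ = s (π ω)) (k : ℕ) :
    g * s ((η ^ k) ω) * g⁻¹ = s (π ((η ^ k) ω)) := by
  induction k with
  | zero => simpa using h0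
  | succ k ih =>
    rw [pow_succ', Perm.mul_apply, hπ, ← hy, ← hy', ← ih, ← hrel]
    group

theorem Cp.mem_normalizer {g : G} {π : Perm Ω} (h : Cp s g π) :
    g ∈ Subgroup.normalizer (Subgroup.closure (Set.range s) : Set G) := by
  rw [Subgroup.mem_normalizer_iff]
  have key : ∀ {g : G} {π : Perm Ω}, Cp s g π → ∀ n, n ∈ Subgroup.closure (Set.range s) →
      g * n * g⁻¹ ∈ Subgroup.closure (Set.range s) := by
    intro g π h n hn
    induction hn using Subgroup.closure_induction with
    | mem x hx =>
      obtain ⟨ω, rfl⟩ := hx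
      rw [h]
      exact Subgroup.subset_closure ⟨_, rfl⟩
    | one => simp
    | mul x y _ _ hx hy =>
      have : g * (x * y) * g⁻¹ = (g * x * g⁻¹) * (g * y * g⁻¹) := by group
      rw [this]; exact mul_mem hx hy
    | inv x _ hx =>
      have : g * x⁻¹ * g⁻¹ = (g * x * g⁻¹)⁻¹ := by group
      rw [this]; exact inv_mem hx
  intro n
  constructor
  · exact key h n
  · intro hn
    have := key h.inv _ hn
    have e : g⁻¹ * (g * n * g⁻¹) * g⁻¹⁻¹ = n := by group
    rwa [e] at this

/-- the star group is faithfully represented -/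
theorem StarRel.faithful [DecidableEq Ω] (hs : StarRel s) (φ : G →* Perm (Option Ω))
    (hφ : ∀ ω, φ (s ω) = swap none (some ω)) (S : Finset Ω) :
    ∀ n ∈ Subgroup.closure (s '' (S : Set Ω)), φ n = 1 → n = 1 := by
  induction S using Finset.induction_on with
  | empty => intro n hn _; simpa using hn
  | insert k S hk ih =>
    intro n hn hn1
    set K := Subgroup.closure (s '' (S : Set Ω)) with hK
    have hsK : ∀ j ∈ S, s j ∈ K := fun j hj => Subgroup.subset_closure ⟨j, hj, rfl⟩
    have fix : ∀ c ∈ K, φ c (some k) = some k := by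
      intro c hc
      induction hc using Subgroup.closure_induction with
      | mem x hx =>
        obtain ⟨j, hj, rfl⟩ := hx
        rw [hφ, swap_apply_of_ne_of_ne (by simp)]
        intro h
        have : k = j := by simpa using h
        subst this
        exact hk hj
      | one => simp
      | mul x y _ _ hx hy => rw [map_mul, Perm.mul_apply, hy, hx]
      | inv x _ hx => rw [map_inv, Perm.inv_eq_iff_eq, hx]
    have dec : n ∈ K ∨ (∃ c ∈ K, n = c * s k) ∨ (∃ c ∈ K, ∃ j ∈ S, n = c * s k * s j) := by
      have step : ∀ (x : G), (x ∈ K ∨ (∃ c ∈ K, x = c * s k) ∨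
          (∃ c ∈ K, ∃ j ∈ S, x = c * s k * s j)) → ∀ y ∈ s '' ((insert k S : Finset Ω) : Set Ω),
          (x * y ∈ K ∨ (∃ c ∈ K, x * y = c * s k) ∨
          (∃ c ∈ K, ∃ j ∈ S, x * y = c * s k * s j)) := by
        rintro x hx _ ⟨i, hi, rfl⟩
        have hi' : i = k ∨ i ∈ S := by simpa using hi
        rcases hx with hx | ⟨c, hc, rfl⟩ | ⟨c, hc, j, hj, rfl⟩
        · rcases hi' with rfl | hi'
          · exact Or.inr (Or.inl ⟨x, hx, rfl⟩)
          · exact Or.inl (mul_mem hx (hsK i hi'))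
        · rcases hi' with rfl | hi'
          · left; rw [mul_assoc, hs.sq, mul_one]; exact hc
          · exact Or.inr (Or.inr ⟨c, hc, i, hi', rfl⟩)
        · have hkj : k ≠ j := fun h => hk (h ▸ hj)
          rcases hi' with rfl | hi'
          · right; right
            refine ⟨c * s j, mul_mem hc (hsK j hj), j, hj, ?_⟩
            calc c * s i * s j * s i = c * (s i * s j * s i) := by group
              _ = _ := by rw [hs.br i j hkj]; group
          · by_cases hij : i = j
            · subst hij
              right; left
              exact ⟨c, hc, by rw [mul_assoc, hs.sq, mul_one]⟩
            · have hki : k ≠ i := fun h => hk (h ▸ hi')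
              right; right
              refine ⟨c * (s j * s i * s j), mul_mem hc (mul_mem (mul_mem (hsK j hj) (hsK i hi'))
                (hsK j hj)), j, hj, ?_⟩
              have := hs.cm j k i (Ne.symm hkj) (Ne.symm hij) hki
              calc c * s k * s j * s i
                  = c * ((s j)⁻¹ * (s j * s k * s j * s i)) := by group
                _ = _ := by rw [this, hs.inv]; group
      clear hn1
      refine Subgroup.closure_induction_right (p := fun x _ => (x ∈ K ∨ (∃ c ∈ K, x = c * s k) ∨
          (∃ c ∈ K, ∃ j ∈ S, x = c * s k * s j))) ?_ ?_ ?_ hn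
      · exact Or.inl (one_mem _)
      · intro x hx y hy ihx
        exact step x ihx y hy
      · intro x hx y hy ihx
        obtain ⟨i, hi, rfl⟩ := hy
        rw [hs.inv]
        exact step x ihx _ ⟨i, hi, rfl⟩
    rcases dec with h | ⟨c, hc, rfl⟩ | ⟨c, hc, j, hj, rfl⟩
    · exact ih n h hn1
    · exfalso
      have := congrArg (fun f : Perm (Option Ω) => f none) hn1
      simp [hφ, fix c hc] at this
    · exfalso
      have := congrArg (fun f : Perm (Option Ω) => f (some j)) hn1
      simp [hφ, fix c hc] at this
      subst this
      exact hk hj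
end

open Equiv

/-- The letters used to write down the relators. The letters `X..` stand for powers of `x`. -/
structure W (H : Type) where
  (s x t h w b θ T B Θ z Xp Xgg Xg Xgi Xh XM XN : H)

namespace W

def map {H K : Type} [Group H] [Group K] (f : H →* K) (V : W H) : W K where
  s := f V.s
  x := f V.x
  t := f V.t
  h := f V.h
  w := f V.w
  b := f V.b
  θ := f V.θ
  T := f V.T
  B := f V.B
  Θ := f V.Θ
  z := f V.z
  Xp := f V.Xp
  Xgg := f V.Xgg
  Xg := f V.Xg
  Xgi := f V.Xgi
  Xh := f V.Xh
  XM := f V.XM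
  XN := f V.XN

section
variable {H : Type} [Group H] (V : W H)

/-- the star at infinity -/
def Sinf : H := V.w * V.s * V.w⁻¹
def S1 : H := V.x * V.s * V.x⁻¹
def Sm1 : H := V.x⁻¹ * V.s * V.x
def Sg : H := V.Xg * V.s * V.Xg⁻¹
def Smgi : H := V.Xgi⁻¹ * V.s * V.Xgi
/-- the star at `j * M` -/
def SM (j : ℕ) : H := V.XM ^ j * V.s * (V.XM ^ j)⁻¹
def SN : H := V.XN * V.s * V.XN⁻¹
/-- the long cycle -/
def xt : H := V.s * V.Sinf * V.s * V.x
/-- `xt` cut into `k` cycles of length `M` and the rest -/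
def a : ℕ → H
  | 0 => V.xt
  | k + 1 => V.SM k * V.SM (k + 1) * V.SM k * a k
def a' : H := V.s * V.SN * V.s * V.xt
def D : H := V.θ * (V.XM * V.θ * V.XM⁻¹)
def D' : H := V.Θ * (V.XN * V.Θ * V.XN⁻¹)
def bj (j : ℕ) : H := V.XM ^ j * V.b * (V.XM ^ j)⁻¹
def ebis : H := (V.b * V.bj 1)⁻¹ * V.a 2
def rest : H := (V.b * V.bj 1 * V.bj 2 * V.bj 3)⁻¹ * V.a 4
def ζ : H := V.Θ * V.B * V.Θ⁻¹
def α : H := V.s * V.S1 * V.s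
def s01 : H := V.Θ * V.s * V.Θ⁻¹
def s02 : H := V.Θ * V.Θ * V.s * (V.Θ * V.Θ)⁻¹

def rels1 : List (H × H) :=
  [(V.t * V.x * V.t⁻¹, V.x ^ 4), (V.Xp, 1), (V.h * V.x * V.h⁻¹, V.Xgg),
   (V.h * V.s * V.h⁻¹, V.s), (V.w * V.h * V.w⁻¹, V.h⁻¹), (V.w * V.w, 1),
   (V.x * V.Sinf * V.x⁻¹, V.Sinf), (V.w * V.S1 * V.w⁻¹, V.Sm1), (V.w * V.Sg * V.w⁻¹, V.Smgi),
   (V.s * V.s, 1), (V.Sinf * V.s * V.Sinf, V.s * V.Sinf * V.s),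
   (V.Sinf * V.s * V.Sinf * V.S1, V.S1 * (V.Sinf * V.s * V.Sinf)),
   (V.Sinf * V.s * V.Sinf * V.Sg, V.Sg * (V.Sinf * V.s * V.Sinf)),
   ((V.x * V.w) ^ 3, 1), (V.x * V.x * V.w * V.Xh * V.w * V.x * V.x * V.w, V.t),
   (V.Xg * V.w * V.Xgi * V.w * V.Xg * V.w, V.h)]

def rels1' (e : ℕ) : List (H × H) :=
  [(V.b * V.a 1 * V.b⁻¹, V.a 1), (V.b * V.s * V.b⁻¹, V.a 1 * V.s * (V.a 1)⁻¹),
   (V.b * V.Sinf * V.b⁻¹, V.Sinf), (V.θ * V.a 3 * V.θ⁻¹, V.a 3),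
   (V.θ * V.s * V.θ⁻¹, V.SM 1), (V.θ * V.SM 1 * V.θ⁻¹, V.SM 2), (V.θ * V.Sinf * V.θ⁻¹, V.Sinf),
   (V.θ * V.θ * V.θ, 1), (V.D * V.D, 1), (V.T * V.b * V.T⁻¹, V.b * V.b),
   (V.T * V.ebis * V.T⁻¹, V.ebis), (V.T * V.s * V.T⁻¹, V.s), (V.T * V.Sinf * V.T⁻¹, V.Sinf),
   (V.D * V.T * V.D⁻¹ * V.T, 1),
   (V.T * (V.θ * V.T * V.θ⁻¹) * (V.θ * V.θ * V.T * (V.θ * V.θ)⁻¹), 1),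
   (V.rest ^ (e + 1), 1)]

def rels2 : List (H × H) :=
  [(V.B * V.a' * V.B⁻¹, V.a'), (V.B * V.s * V.B⁻¹, V.a' * V.s * V.a'⁻¹),
   (V.B * V.Sinf * V.B⁻¹, V.Sinf), (V.D' * V.B * V.D'⁻¹ * V.B, 1),
   (V.B * V.ζ * (V.Θ * V.Θ * V.B * (V.Θ * V.Θ)⁻¹), 1),
   (V.ζ * V.xt * V.ζ⁻¹, V.xt), (V.ζ * V.s * V.ζ⁻¹, V.s), (V.Θ * V.Θ * V.Θ, 1),
   (V.Θ * V.a' * V.Θ⁻¹, V.B⁻¹ * V.a'), (V.Θ * V.Sinf * V.Θ⁻¹, V.Sinf), (V.D' * V.D', 1),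
   (V.xt * V.s01 * V.xt⁻¹, V.s01), (V.α * V.s01 * V.α⁻¹, V.s01),
   (V.xt * V.s02 * V.xt⁻¹, V.s02), (V.α * V.s02 * V.α⁻¹, V.s02)]

def relsz : Bool → List (H × H)
  | false => [(V.z, 1)]
  | true => [(V.z * V.z, 1), (V.Sinf * V.z * V.Sinf, V.z * V.Sinf * V.z),
     (V.xt * V.z * V.xt⁻¹, V.z), (V.α * V.z * V.α⁻¹, V.z), (V.Θ * V.z * V.Θ⁻¹, V.z)]

def rels (e : ℕ) (δ : Bool) : List (H × H) := V.rels1 ++ V.rels1' e ++ V.rels2 ++ V.relsz δ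

/-- all the pairs in the list are equalities -/
def Holds (l : List (H × H)) : Prop := ∀ q ∈ l, q.1 = q.2

/-- the auxiliary letters really are powers of `x` -/
structure Pow (p gg g gi h M N : ℕ) : Prop where
  Xp : V.Xp = V.x ^ p
  Xgg : V.Xgg = V.x ^ gg
  Xg : V.Xg = V.x ^ g
  Xgi : V.Xgi = V.x ^ gi
  Xh : V.Xh = V.x ^ h
  XM : V.XM = V.x ^ M
  XN : V.XN = V.x ^ N

end

section
variable {H K : Type} [Group H] [Group K] (f : H →* K) (V : W H)

theorem map_Sinf : (V.map f).Sinf = f V.Sinf := by simp [Sinf, map]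
theorem map_S1 : (V.map f).S1 = f V.S1 := by simp [S1, map]
theorem map_Sm1 : (V.map f).Sm1 = f V.Sm1 := by simp [Sm1, map]
theorem map_Sg : (V.map f).Sg = f V.Sg := by simp [Sg, map]
theorem map_Smgi : (V.map f).Smgi = f V.Smgi := by simp [Smgi, map]
theorem map_SM (j : ℕ) : (V.map f).SM j = f (V.SM j) := by simp [SM, map]
theorem map_SN : (V.map f).SN = f V.SN := by simp [SN, map]
theorem map_xt : (V.map f).xt = f V.xt := by simp [xt, map_Sinf]; simp [map]
theorem map_a (k : ℕ) : (V.map f).a k = f (V.a k) := by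
  induction k with
  | zero => exact map_xt f V
  | succ k ih => simp [a, ih, map_SM]
theorem map_a' : (V.map f).a' = f V.a' := by simp [a', map_xt, map_SN]; simp [map]
theorem map_D : (V.map f).D = f V.D := by simp [D, map]
theorem map_D' : (V.map f).D' = f V.D' := by simp [D', map]
theorem map_bj (j : ℕ) : (V.map f).bj j = f (V.bj j) := by simp [bj, map]
theorem map_ebis : (V.map f).ebis = f V.ebis := by simp [ebis, map_bj, map_a]; simp [map]
theorem map_rest : (V.map f).rest = f V.rest := by simp [rest, map_bj, map_a]; simp [map]
theorem map_ζ : (V.map f).ζ = f V.ζ := by simp [ζ, map]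
theorem map_α : (V.map f).α = f V.α := by simp [α, map_S1]; simp [map]
theorem map_s01 : (V.map f).s01 = f V.s01 := by simp [s01, map]
theorem map_s02 : (V.map f).s02 = f V.s02 := by simp [s02, map]

theorem map_rels1 : (V.map f).rels1 = V.rels1.map (Prod.map f f) := by
  simp only [rels1, map_Sinf, map_S1, map_Sm1, map_Sg, map_Smgi]
  simp [map]

theorem map_rels1' (e : ℕ) : (V.map f).rels1' e = (V.rels1' e).map (Prod.map f f) := by
  simp only [rels1', map_Sinf, map_a, map_D, map_SM, map_ebis, map_rest]
  simp [map]

theorem map_rels2 : (V.map f).rels2 = V.rels2.map (Prod.map f f) := by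
  simp only [rels2, map_Sinf, map_a', map_D', map_ζ, map_xt, map_α, map_s01, map_s02]
  simp [map]

theorem map_relsz (δ : Bool) : (V.map f).relsz δ = (V.relsz δ).map (Prod.map f f) := by
  cases δ <;> simp only [relsz, map_Sinf, map_xt, map_α] <;> simp [map]

theorem map_rels (e : ℕ) (δ : Bool) :
    (V.map f).rels e δ = (V.rels e δ).map (Prod.map f f) := by
  simp only [rels, map_rels1, map_rels1', map_rels2, map_relsz, List.map_append]

theorem Holds.map {l : List (H × H)} (hl : Holds l) : Holds (l.map (Prod.map f f)) := by
  intro q hq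
  obtain ⟨r, hr, rfl⟩ := List.mem_map.1 hq
  simp [Prod.map, hl r hr]

theorem Holds.of_map {f : H →* K} (hf : Function.Injective f) {l : List (H × H)}
    (hl : Holds (l.map (Prod.map f f))) : Holds l := by
  intro q hq
  exact hf (hl _ (List.mem_map.2 ⟨q, hq, rfl⟩))

theorem Pow.map {V : W H} {p gg g gi h M N : ℕ} (hV : V.Pow p gg g gi h M N) :
    (V.map f).Pow p gg g gi h M N := by
  constructor <;> simp [W.map, hV.Xp, hV.Xgg, hV.Xg, hV.Xgi, hV.Xh, hV.XM, hV.XN]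

theorem Pow.of_map {f : H →* K} (hf : Function.Injective f) {V : W H} {p gg g gi h M N : ℕ}
    (hV : (V.map f).Pow p gg g gi h M N) : V.Pow p gg g gi h M N := by
  constructor <;> apply hf <;> simp only [map_pow]
  · exact hV.Xp
  · exact hV.Xgg
  · exact hV.Xg
  · exact hV.Xgi
  · exact hV.Xh
  · exact hV.XM
  · exact hV.XN

theorem rels_length (e : ℕ) (δ : Bool) : (V.rels e δ).length ≤ 58 := by
  cases δ <;> simp [rels, rels1, rels1', rels2, relsz]

theorem holds_rels_iff (e : ℕ) (δ : Bool) : Holds (V.rels e δ) ↔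
    Holds V.rels1 ∧ Holds (V.rels1' e) ∧ Holds V.rels2 ∧ Holds (V.relsz δ) := by
  simp only [Holds, rels, List.mem_append]
  constructor
  · intro h
    exact ⟨fun q hq => h q (by tauto), fun q hq => h q (by tauto), fun q hq => h q (by tauto),
      fun q hq => h q (by tauto)⟩
  · rintro ⟨h1, h2, h3, h4⟩ q (((hq | hq) | hq) | hq)
    exacts [h1 q hq, h2 q hq, h3 q hq, h4 q hq]
end
end W

open Equiv

namespace W
variable {Q : Type} [Group Q] {V : W Q}

theorem conj_pow_eq {y g : Q} (h : g * y * g⁻¹ = y) (n : ℕ) : y ^ n * g * (y ^ n)⁻¹ = g := by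
  have h1 : Commute g y := mul_inv_eq_iff_eq_mul.1 h
  have h2 : Commute (y ^ n) g := (h1.pow_right n).symm
  rw [h2.eq]; group

theorem kill1 {e p gg g gi h M N : ℕ} (hs : V.s = 1) (h1 : Holds V.rels1) (h1' : Holds (V.rels1' e))
    (hP : V.Pow p gg g gi h M N) (hp : p.Prime) (he : e + 1 < p) :
    V.x = 1 ∧ V.t = 1 ∧ V.h = 1 ∧ V.w = 1 ∧ V.b = 1 ∧ V.θ = 1 ∧ V.T = 1 := by
  have hSinf : V.Sinf = 1 := by simp [Sinf, hs]
  have hSM : ∀ j, V.SM j = 1 := by simp [SM, hs]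
  have hxt : V.xt = V.x := by simp [xt, hs, hSinf]
  have ha : ∀ k, V.a k = V.x := by
    intro k
    induction k with
    | zero => exact hxt
    | succ k ih => simp [a, hSM, ih]
  simp only [Holds, rels1, List.forall_mem_cons] at h1
  obtain ⟨-, r2, -, -, -, r6, -, -, -, -, -, -, -, r14, r15, r16, -⟩ := h1
  simp only [Holds, rels1', List.forall_mem_cons, ha] at h1'
  obtain ⟨r17, -, -, r20, -, -, -, r24, r25, r26, -, -, -, r30, r31, r32, -⟩ := h1'
  have hD : V.D = V.θ * V.θ := by
    simp only [D, hP.XM]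
    rw [conj_pow_eq r20]
  have hbj : ∀ j, V.bj j = V.b := by
    intro j
    simp only [bj, hP.XM, ← pow_mul]
    rw [conj_pow_eq r17]
  have hθ : V.θ = 1 := by
    rw [hD] at r25
    calc V.θ = (V.θ * V.θ * V.θ)⁻¹ * (V.θ * V.θ * (V.θ * V.θ)) := by group
      _ = 1 := by rw [r24, r25]; simp
  rw [hD, hθ] at r30
  rw [hθ] at r31
  simp only [mul_one, one_mul, inv_one] at r30 r31
  have hT : V.T = 1 := by
    rw [r30, one_mul] at r31
    exact r31
  have hb : V.b = 1 := by
    rw [hT] at r26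
    simpa using r26
  have hx1 : V.x ^ (e + 1) = 1 := by
    simpa [rest, hbj, hb, ha] using r32
  have hxp : V.x ^ p = 1 := by rw [← hP.Xp]; exact r2
  have hx : V.x = 1 := by
    have hc : Nat.Coprime (e + 1) p :=
      Nat.Coprime.symm ((Nat.Prime.coprime_iff_not_dvd hp).2
        (fun hd => absurd (Nat.le_of_dvd (Nat.succ_pos e) hd) (by omega)))
    have h3 := orderOf_dvd_of_pow_eq_one hx1
    have h4 := orderOf_dvd_of_pow_eq_one hxp
    exact orderOf_eq_one_iff.1 (Nat.eq_one_of_dvd_coprimes hc h3 h4)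
  have hw : V.w = 1 := by
    simp only [hx, one_mul] at r14
    calc V.w = (V.w * V.w)⁻¹ * V.w ^ 3 := by group
      _ = 1 := by rw [r14, r6]; simp
  refine ⟨hx, ?_, ?_, hw, hb, hθ, hT⟩
  · simp [hx, hw, hP.Xh] at r15
    exact r15.symm
  · simp [hx, hw, hP.Xg, hP.Xgi] at r16
    exact r16.symm

theorem kill2 (hN : V.XN = 1) (h2 : Holds V.rels2) : V.B = 1 ∧ V.Θ = 1 := by
  simp only [Holds, rels2, List.forall_mem_cons] at h2
  obtain ⟨-, -, -, r36, r37, -, -, r40, -, -, r43, -⟩ := h2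
  have hD : V.D' = V.Θ * V.Θ := by simp [D', hN]
  have hθ : V.Θ = 1 := by
    rw [hD] at r43
    calc V.Θ = (V.Θ * V.Θ * V.Θ)⁻¹ * (V.Θ * V.Θ * (V.Θ * V.Θ)) := by group
      _ = 1 := by rw [r40, r43]; simp
  refine ⟨?_, hθ⟩
  rw [hD, hθ] at r36
  rw [ζ, hθ] at r37
  simp only [mul_one, one_mul, inv_one] at r36 r37
  rw [r36, one_mul] at r37
  exact r37
end W

open Equiv
set_option linter.unusedSectionVars false

/-! ### Stage 1 : permutations of the projective line -/

section
variable {p : ℕ} [Fact p.Prime]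

def px (p : ℕ) : Perm (Option (ZMod p)) := optionCongr (Equiv.addRight 1)
def pmul (u : (ZMod p)ˣ) : Perm (Option (ZMod p)) := optionCongr (Units.mulLeft u)

def pwFun (p : ℕ) [Fact p.Prime] : Option (ZMod p) → Option (ZMod p)
  | none => some 0
  | some i => if i = 0 then none else some (-i⁻¹)

theorem pwFun_inv : Function.Involutive (pwFun p) := by
  intro ω
  cases ω with
  | none => simp [pwFun]
  | some i =>
    by_cases h : i = 0
    · simp [pwFun, h]
    · simp [pwFun, h, inv_neg]

def pw (p : ℕ) [Fact p.Prime] : Perm (Option (ZMod p)) := pwFun_inv.toPerm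

@[simp] theorem px_none : px p none = none := rfl
@[simp] theorem px_some (i : ZMod p) : px p (some i) = some (i + 1) := rfl
@[simp] theorem pmul_none (u : (ZMod p)ˣ) : pmul u none = none := rfl
@[simp] theorem pmul_some (u : (ZMod p)ˣ) (i : ZMod p) : pmul u (some i) = some (u * i) := rfl
@[simp] theorem pw_none : pw p none = some 0 := rfl
@[simp] theorem pw_zero : pw p (some 0) = none := by
  show pwFun p (some 0) = none
  simp [pwFun]
theorem pw_some {i : ZMod p} (h : i ≠ 0) : pw p (some i) = some (-i⁻¹) := by
  show pwFun p (some i) = _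
  simp [pwFun, h]
@[simp] theorem pw_pw (ω) : pw p (pw p ω) = ω := pwFun_inv ω

theorem px_pow_none (n : ℕ) : (px p ^ n) none = none := by
  induction n with
  | zero => rfl
  | succ n ih => rw [pow_succ', Perm.mul_apply, ih, px_none]

theorem px_pow_some (n : ℕ) (i : ZMod p) : (px p ^ n) (some i) = some (i + n) := by
  induction n with
  | zero => simp
  | succ n ih => rw [pow_succ', Perm.mul_apply, ih, px_some]; push_cast; ring_nf

theorem pmul_pow_none (u : (ZMod p)ˣ) (n : ℕ) : (pmul u ^ n) none = none := by
  induction n with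
  | zero => rfl
  | succ n ih => rw [pow_succ', Perm.mul_apply, ih, pmul_none]

theorem pmul_pow_some (u : (ZMod p)ˣ) (n : ℕ) (i : ZMod p) :
    (pmul u ^ n) (some i) = some ((u : ZMod p) ^ n * i) := by
  induction n with
  | zero => simp
  | succ n ih => rw [pow_succ', Perm.mul_apply, ih, pmul_some, pow_succ']; ring_nf

theorem pmul_inv_none (u : (ZMod p)ˣ) : (pmul u)⁻¹ none = none := by
  rw [Perm.inv_eq_iff_eq]; rfl

theorem pmul_inv_some (u : (ZMod p)ˣ) (i : ZMod p) :
    (pmul u)⁻¹ (some i) = some ((u : ZMod p)⁻¹ * i) := by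
  rw [Perm.inv_eq_iff_eq, pmul_some, mul_inv_cancel_left₀ u.ne_zero]

theorem pw_pmul (u : (ZMod p)ˣ) (ω) : pw p (pmul u ω) = (pmul u)⁻¹ (pw p ω) := by
  cases ω with
  | none => rw [pmul_none, pw_none, pmul_inv_some, mul_zero]
  | some i =>
    by_cases h : i = 0
    · subst h
      simp [pmul_inv_none]
    · rw [pmul_some, pw_some (by simp [h]), pw_some h, pmul_inv_some]
      congr 1
      rw [mul_inv]; ring

end

namespace W
variable {G : Type} [Group G] (V : W G)

/-- the stars of the projective line -/
def st (p : ℕ) : Option (ZMod p) → G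
  | none => V.Sinf
  | some i => V.x ^ i.val * V.s * (V.x ^ i.val)⁻¹

end W

/-- the permutations realised by conjugation -/
def Realised {Ω G : Type} [Group G] (s : Ω → G) : Subgroup (Perm Ω) where
  carrier := {π | ∃ y, Cp s y π}
  one_mem' := ⟨1, Cp.one⟩
  mul_mem' := by
    rintro a b ⟨y, hy⟩ ⟨y', hy'⟩
    exact ⟨y * y', hy.mul hy'⟩
  inv_mem' := by
    rintro a ⟨y, hy⟩
    exact ⟨y⁻¹, hy.inv⟩

section
variable {Ω G : Type} [Group G] {s : Ω → G}

theorem Realised.sq {π : Perm Ω} (h : π ∈ Realised s) {a : Ω} (ha : s a * s a = 1) :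
    s (π a) * s (π a) = 1 := by
  obtain ⟨y, hy⟩ := h
  rw [← hy]
  calc y * s a * y⁻¹ * (y * s a * y⁻¹) = y * (s a * s a) * y⁻¹ := by group
    _ = 1 := by rw [ha]; group

theorem Realised.br {π : Perm Ω} (h : π ∈ Realised s) {a b : Ω}
    (ha : s a * s b * s a = s b * s a * s b) :
    s (π a) * s (π b) * s (π a) = s (π b) * s (π a) * s (π b) := by
  obtain ⟨y, hy⟩ := h
  rw [← hy, ← hy]
  calc _ = y * (s a * s b * s a) * y⁻¹ := by group
    _ = _ := by rw [ha]; group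

theorem Realised.cm {π : Perm Ω} (h : π ∈ Realised s) {a b c : Ω}
    (ha : s a * s b * s a * s c = s c * (s a * s b * s a)) :
    s (π a) * s (π b) * s (π a) * s (π c) = s (π c) * (s (π a) * s (π b) * s (π a)) := by
  obtain ⟨y, hy⟩ := h
  rw [← hy, ← hy, ← hy]
  calc _ = y * (s a * s b * s a * s c) * y⁻¹ := by group
    _ = _ := by rw [ha]; group
end

namespace W
variable {G : Type} [Group G] {V : W G} {p : ℕ} [Fact p.Prime]

theorem x_pow_mod (hx : V.x ^ p = 1) (n : ℕ) : V.x ^ ((n : ZMod p)).val = V.x ^ n := by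
  rw [ZMod.val_natCast]
  exact (pow_eq_pow_mod n hx).symm

theorem st_nat (hx : V.x ^ p = 1) (n : ℕ) :
    V.st p (some (n : ZMod p)) = V.x ^ n * V.s * (V.x ^ n)⁻¹ := by
  simp only [st, x_pow_mod hx]

theorem st_neg (hx : V.x ^ p = 1) (n : ℕ) :
    V.st p (some (-(n : ZMod p))) = (V.x ^ n)⁻¹ * V.s * V.x ^ n := by
  have h1 : (-(n : ZMod p)) = ((p * n - n : ℕ) : ZMod p) := by
    have : n ≤ p * n := Nat.le_mul_of_pos_left n (Fact.out : p.Prime).pos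
    push_cast [Nat.cast_sub this]
    simp
  have h2 : V.x ^ (p * n - n) = (V.x ^ n)⁻¹ := by
    rw [eq_inv_iff_mul_eq_one, ← pow_add, Nat.sub_add_cancel
      (Nat.le_mul_of_pos_left n (Fact.out : p.Prime).pos), pow_mul, hx, one_pow]
  rw [h1, st_nat hx, h2, inv_inv]

/-- Stage 1 : the star relations on the projective line. -/
theorem stage1 (u : (ZMod p)ˣ) (hu : ∀ v : (ZMod p)ˣ, ∃ k : ℕ, u ^ k = v) {h M N : ℕ}
    (h1 : Holds V.rels1)
    (hP : V.Pow p (u ^ 2 : ZMod p).val (u : ZMod p).val ((u⁻¹ : (ZMod p)ˣ) : ZMod p).val h M N) :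
    V.x ^ p = 1 ∧ StarRel (V.st p) ∧ Cp (V.st p) V.x (px p) ∧ Cp (V.st p) V.w (pw p) := by
  simp only [Holds, rels1, List.forall_mem_cons] at h1
  obtain ⟨-, r2, r3, r4, r5, r6, r7, r8, r9, r10, r11, r12, r13, -⟩ := h1
  have hx : V.x ^ p = 1 := by rw [← hP.Xp]; exact r2
  have st0 : V.st p (some 0) = V.s := by simp [st]
  have st1 : V.st p (some 1) = V.S1 := by simpa [S1] using st_nat hx 1
  have stm1 : V.st p (some (-1)) = V.Sm1 := by simpa [Sm1] using st_neg hx 1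
  have stg : V.st p (some u) = V.Sg := by
    simp only [st, Sg, hP.Xg]
  have stgi : V.st p (some (-(u : ZMod p)⁻¹)) = V.Smgi := by
    have := st_neg (V := V) hx ((u⁻¹ : (ZMod p)ˣ) : ZMod p).val
    rw [ZMod.natCast_zmod_val] at this
    rw [Smgi, hP.Xgi, ← this, Units.val_inv_eq_inv_val]
  -- action of x
  have cx : Cp (V.st p) V.x (px p) := by
    intro ω
    cases ω with
    | none => exact r7
    | some i =>
      have e : some (i + 1) = some (((i.val + 1 : ℕ) : ZMod p)) := by
        push_cast; rw [ZMod.natCast_zmod_val]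
      rw [px_some, e, st_nat hx, st, pow_succ']
      group
  -- action of h
  have ch : Cp (V.st p) V.h (pmul (u ^ 2)) := by
    intro ω
    cases ω with
    | none =>
      have e : V.h * V.w = V.w * V.h⁻¹ := by
        rw [← r5]
        calc V.h * V.w = (V.h * V.w) * 1 := by group
          _ = V.w * V.w * (V.h * V.w) * (V.w * V.w)⁻¹ * (V.w * V.w) := by rw [r6]; group
          _ = V.w * (V.w * V.h * V.w⁻¹) * (V.w * V.w) := by group
          _ = _ := by rw [r6, mul_one]
      have e2 : V.h⁻¹ * V.s * V.h = V.s := by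
        calc V.h⁻¹ * V.s * V.h = V.h⁻¹ * (V.h * V.s * V.h⁻¹) * V.h := by rw [r4]
          _ = V.s := by group
      show V.h * V.Sinf * V.h⁻¹ = V.Sinf
      calc V.h * V.Sinf * V.h⁻¹ = (V.h * V.w) * V.s * (V.h * V.w)⁻¹ := by rw [Sinf]; group
        _ = V.w * (V.h⁻¹ * V.s * V.h) * V.w⁻¹ := by rw [e]; group
        _ = V.Sinf := by rw [e2, Sinf]
    | some i =>
      have e1 : V.h * V.x ^ i.val * V.h⁻¹ = V.x ^ ((u ^ 2 : ZMod p).val * i.val) := by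
        rw [pow_mul, ← hP.Xgg, ← r3]
        simp [conj_pow]
      have e2 : some (((u ^ 2 : (ZMod p)ˣ) : ZMod p) * i) =
          some ((((u ^ 2 : ZMod p).val * i.val : ℕ) : ZMod p)) := by
        push_cast; rw [ZMod.natCast_zmod_val, ZMod.natCast_zmod_val]
      rw [pmul_some, e2, st_nat hx, st, ← e1]
      calc _ = (V.h * V.x ^ i.val * V.h⁻¹) * (V.h * V.s * V.h⁻¹) *
            (V.h * V.x ^ i.val * V.h⁻¹)⁻¹ := by group
        _ = _ := by rw [r4]
  have orb : ∀ i : ZMod p, i ≠ 0 → ∃ k : ℕ, some i = (pmul (u ^ 2) ^ k) (some 1) ∨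
      some i = (pmul (u ^ 2) ^ k) (some (u : ZMod p)) := by
    intro i hi
    obtain ⟨k, hk⟩ := hu (Units.mk0 i hi)
    have hk' : (u : ZMod p) ^ k = i := by
      have := congrArg (fun v : (ZMod p)ˣ => (v : ZMod p)) hk
      simpa using this
    obtain ⟨l, rfl | rfl⟩ := Nat.even_or_odd' k
    · refine ⟨l, Or.inl ?_⟩
      rw [pmul_pow_some, ← hk']; push_cast; rw [pow_mul, mul_one]
    · refine ⟨l, Or.inr ?_⟩
      rw [pmul_pow_some, ← hk']; push_cast; rw [pow_succ, pow_mul]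
  have cw : Cp (V.st p) V.w (pw p) := by
    intro ω
    cases ω with
    | none =>
      rw [pw_none, st0]
      show V.w * (V.w * V.s * V.w⁻¹) * V.w⁻¹ = V.s
      calc _ = (V.w * V.w) * V.s * (V.w * V.w)⁻¹ := by group
        _ = V.s := by rw [r6]; group
    | some i =>
      by_cases hi : i = 0
      · subst hi
        rw [pw_zero, st0]; rfl
      · obtain ⟨k, hk | hk⟩ := orb i hi
        · rw [hk]
          refine Cp.seed ch ch.inv r5 (pw_pmul _) ?_ k
          rw [pw_some one_ne_zero, st1, inv_one, stm1]; exact r8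
        · rw [hk]
          refine Cp.seed ch ch.inv r5 (pw_pmul _) ?_ k
          rw [pw_some u.ne_zero, stg, stgi]; exact r9
  refine ⟨hx, ?_, cx, cw⟩
  have rx : px p ∈ Realised (V.st p) := ⟨_, cx⟩
  have rw' : pw p ∈ Realised (V.st p) := ⟨_, cw⟩
  have rh : pmul (u ^ 2) ∈ Realised (V.st p) := ⟨_, ch⟩
  have tr1 : ∀ a, ∃ π ∈ Realised (V.st p), π none = a := by
    intro a
    cases a with
    | none => exact ⟨1, one_mem _, rfl⟩
    | some i =>
      refine ⟨px p ^ i.val * pw p, mul_mem (pow_mem rx _) rw', ?_⟩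
      rw [Perm.mul_apply, pw_none, px_pow_some, ZMod.natCast_zmod_val, zero_add]
  have tr2 : ∀ a b, a ≠ b → ∃ π ∈ Realised (V.st p), π none = a ∧ π (some 0) = b := by
    intro a b hab
    obtain ⟨π, hπ, rfl⟩ := tr1 a
    obtain ⟨c, rfl⟩ := π.surjective b
    cases c with
    | none => exact absurd rfl hab
    | some i =>
      refine ⟨π * px p ^ i.val, mul_mem hπ (pow_mem rx _), ?_, ?_⟩
      · rw [Perm.mul_apply, px_pow_none]
      · rw [Perm.mul_apply, px_pow_some, ZMod.natCast_zmod_val, zero_add]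
  refine ⟨?_, ?_, ?_⟩
  · intro a
    obtain ⟨π, hπ, rfl⟩ := tr1 a
    have := Realised.sq (mul_mem hπ rw') (a := some 0) (by rw [st0]; exact r10)
    rwa [Perm.mul_apply, pw_zero] at this
  · intro a b hab
    obtain ⟨π, hπ, rfl, rfl⟩ := tr2 a b hab
    refine Realised.br hπ ?_
    rw [st0]; exact r11
  · intro a b c hab hac hbc
    obtain ⟨π, hπ, rfl, rfl⟩ := tr2 a b hab
    obtain ⟨c, rfl⟩ := π.surjective c
    cases c with
    | none => exact absurd rfl hac
    | some i =>
      have hi : i ≠ 0 := by rintro rfl; exact hbc rfl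
      obtain ⟨k, hk | hk⟩ := orb i hi
      · have := Realised.cm (mul_mem hπ (pow_mem rh k)) (a := none) (b := some 0) (c := some 1)
          (by rw [st0, st1]; exact r12)
        simpa only [Perm.mul_apply, pmul_pow_none, pmul_pow_some _ _ 0, mul_zero, ← hk] using this
      · have := Realised.cm (mul_mem hπ (pow_mem rh k)) (a := none) (b := some 0)
          (c := some (u : ZMod p)) (by rw [st0, stg]; exact r13)
        simpa only [Perm.mul_apply, pmul_pow_none, pmul_pow_some _ _ 0, mul_zero, ← hk] using this
end W

open Equiv
set_option linter.unusedSectionVars false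

/-! ### Permutations supported on embedded pieces -/

/-- extend a permutation along an embedding -/
noncomputable def via {A Ω : Type} (e : A ↪ Ω) : Perm A →* Perm Ω := Perm.viaEmbeddingHom e

section
variable {A Ω : Type} {e e' : A ↪ Ω}

theorem via_apply (σ : Perm A) (a : A) : via e σ (e a) = e (σ a) := by
  rw [via, Perm.viaEmbeddingHom_apply]; exact Perm.viaEmbedding_apply σ e a

theorem via_notMem (σ : Perm A) {ω : Ω} (h : ∀ a, e a ≠ ω) : via e σ ω = ω := by
  rw [via, Perm.viaEmbeddingHom_apply]
  exact Perm.viaEmbedding_apply_of_notMem σ e ω (by rintro ⟨a, ha⟩; exact h a ha)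

theorem via_conj {κ : Perm Ω} (h : ∀ a, κ (e a) = e' a) (σ : Perm A) :
    κ * via e σ * κ⁻¹ = via e' σ := by
  rw [mul_inv_eq_iff_eq_mul]
  ext ω
  simp only [Perm.mul_apply]
  by_cases hω : ∃ a, e a = ω
  · obtain ⟨a, rfl⟩ := hω
    rw [via_apply, h, h, via_apply]
  · push Not at hω
    rw [via_notMem σ hω, via_notMem σ]
    intro a ha
    rw [← h] at ha
    exact hω a (κ.injective ha)

theorem via_commute (h : ∀ a a', e a ≠ e' a') (σ τ : Perm A) : Commute (via e σ) (via e' τ) := by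
  show via e σ * via e' τ = via e' τ * via e σ
  ext ω
  simp only [Perm.mul_apply]
  by_cases hω : ∃ a, e a = ω
  · obtain ⟨a, rfl⟩ := hω
    rw [via_apply, via_notMem (e := e') τ (fun a' => (h a a').symm),
      via_notMem (e := e') τ (fun a' => (h _ a').symm), via_apply]
  · push Not at hω
    rw [via_notMem σ hω]
    by_cases hω' : ∃ a, e' a = ω
    · obtain ⟨a, rfl⟩ := hω'
      rw [via_apply, via_notMem σ (fun a' => h a' _)]
    · push Not at hω'
      rw [via_notMem τ hω', via_notMem σ hω]

/-- the piece with index `j` -/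
def piece (e : Fin 4 × A ↪ Ω) (j : Fin 4) : A ↪ Ω :=
  ⟨fun a => e (j, a), fun a b h => by simpa using e.injective h⟩

theorem piece_apply (e : Fin 4 × A ↪ Ω) (j : Fin 4) (a : A) : piece e j a = e (j, a) := rfl

/-- permute the pieces -/
noncomputable def PP (e : Fin 4 × A ↪ Ω) (σ : Perm (Fin 4)) : Perm Ω :=
  via e (Equiv.prodCongr σ (Equiv.refl A))

theorem PP_mul (e : Fin 4 × A ↪ Ω) (σ τ : Perm (Fin 4)) : PP e (σ * τ) = PP e σ * PP e τ := by
  rw [PP, PP, PP, ← map_mul]; rfl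

theorem PP_one (e : Fin 4 × A ↪ Ω) : PP e 1 = 1 := by
  rw [PP, ← map_one (via e)]; rfl

theorem PP_apply (e : Fin 4 × A ↪ Ω) (σ : Perm (Fin 4)) (j : Fin 4) (a : A) :
    PP e σ (e (j, a)) = e (σ j, a) := by
  rw [PP, via_apply]; rfl

theorem PP_notMem (e : Fin 4 × A ↪ Ω) (σ : Perm (Fin 4)) {ω : Ω}
    (h : ∀ j a, e (j, a) = ω → σ j = j) : PP e σ ω = ω := by
  by_cases hω : ∃ q, e q = ω
  · obtain ⟨⟨j, a⟩, rfl⟩ := hω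
    rw [PP_apply, h j a rfl]
  · push Not at hω
    exact via_notMem _ hω

/-- a permutation of one piece -/
noncomputable def vv (e : Fin 4 × A ↪ Ω) (j : Fin 4) : Perm A →* Perm Ω := via (piece e j)

theorem vv_apply (e : Fin 4 × A ↪ Ω) (j : Fin 4) (ρ : Perm A) (a : A) :
    vv e j ρ (e (j, a)) = e (j, ρ a) := via_apply (e := piece e j) ρ a

theorem vv_notMem (e : Fin 4 × A ↪ Ω) (j : Fin 4) (ρ : Perm A) {ω : Ω}
    (h : ∀ a, e (j, a) ≠ ω) : vv e j ρ ω = ω := via_notMem (e := piece e j) ρ h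

theorem vv_ne (e : Fin 4 × A ↪ Ω) {i j : Fin 4} (hij : i ≠ j) (ρ : Perm A) (a : A) :
    vv e j ρ (e (i, a)) = e (i, a) := vv_notMem e j ρ (fun b hb => hij (by
      have := e.injective hb
      simp at this
      exact this.1.symm))

theorem vv_commute (e : Fin 4 × A ↪ Ω) {i j : Fin 4} (hij : i ≠ j) (ρ ρ' : Perm A) :
    Commute (vv e i ρ) (vv e j ρ') := via_commute (fun a a' h => hij (by
      have := e.injective h
      simp at this
      exact this.1)) ρ ρ'

theorem vv_conj (e : Fin 4 × A ↪ Ω) {i j : Fin 4} {κ : Perm Ω} (h : ∀ a, κ (e (i, a)) = e (j, a))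
    (ρ : Perm A) : κ * vv e i ρ * κ⁻¹ = vv e j ρ := via_conj (e := piece e i) (e' := piece e j) h ρ

theorem vv_PP (e : Fin 4 × A ↪ Ω) (σ : Perm (Fin 4)) (i : Fin 4) (ρ : Perm A) :
    PP e σ * vv e i ρ * (PP e σ)⁻¹ = vv e (σ i) ρ := vv_conj e (fun a => PP_apply e σ i a) ρ

/-- the basic three-cycle of pieces -/
def c3 : Perm (Fin 4) := swap 0 1 * swap 1 2

theorem PP_conj (e : Fin 4 × A ↪ Ω) {κ : Perm Ω} {τ : Perm (Fin 4)}
    (h : ∀ j a, j ≠ 3 → κ (e (j, a)) = e (τ j, a)) :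
    κ * PP e c3 * κ⁻¹ = PP e (τ * c3 * τ⁻¹) := by
  rw [mul_inv_eq_iff_eq_mul]
  ext ω
  simp only [Perm.mul_apply]
  by_cases hω : ∃ j a, j ≠ 3 ∧ e (j, a) = ω
  · obtain ⟨j, a, hj, rfl⟩ := hω
    have hj' : c3 j ≠ 3 := by revert hj; revert j; decide
    rw [PP_apply, h _ _ hj', h _ _ hj, PP_apply]
    simp
  · push Not at hω
    rw [PP_notMem, PP_notMem]
    · intro j a hja
      have : j = τ 3 := by
        by_contra hj
        obtain ⟨k, rfl⟩ := τ.surjective j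
        have hk : k ≠ 3 := by rintro rfl; exact hj rfl
        rw [← h k a hk] at hja
        exact hω k a hk (κ.injective hja)
      subst this
      have : c3 3 = 3 := by decide
      simp [this]
    · intro j a hja
      have : j = 3 := by
        by_contra hj
        exact hω j a hj hja
      subst this
      decide
end

open Equiv
set_option linter.unusedSectionVars false
set_option linter.unusedVariables false

/-! ### The cut cycles on the projective line -/

section
variable {p : ℕ} [Fact p.Prime]

/-- points of the line by natural numbers -/
def pt (p n : ℕ) : Option (ZMod p) := some (n : ZMod p)

theorem pt_inj {m n : ℕ} (hm : m < p) (hn : n < p) (h : pt p m = pt p n) : m = n := by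
  have h1 : (m : ZMod p) = n := by simpa [pt] using h
  rw [ZMod.natCast_eq_natCast_iff', Nat.mod_eq_of_lt hm, Nat.mod_eq_of_lt hn] at h1
  exact h1

theorem pt_ne_none (n : ℕ) : pt p n ≠ none := by simp [pt]

theorem exists_pt (i : ZMod p) : ∃ n < p, some i = pt p n :=
  ⟨i.val, ZMod.val_lt i, by simp [pt]⟩

/-- the long cycle -/
def pxt (p : ℕ) : Perm (Option (ZMod p)) := swap (pt p 0) none * px p

theorem pxt_pt (n : ℕ) (h : n + 1 < p) : pxt p (pt p n) = pt p (n + 1) := by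
  have e : px p (pt p n) = pt p (n + 1) := by simp [pt]
  rw [pxt, Perm.mul_apply, e, swap_apply_of_ne_of_ne]
  · intro h'
    have := pt_inj h (by omega) h'
    omega
  · exact pt_ne_none _

theorem pxt_last : pxt p (pt p (p - 1)) = none := by
  have hp : 0 < p := (Fact.out : p.Prime).pos
  have e : px p (pt p (p - 1)) = pt p 0 := by
    simp [pt, Nat.cast_sub hp]
  rw [pxt, Perm.mul_apply, e, swap_apply_left]

theorem pxt_none : pxt p none = pt p 0 := by
  rw [pxt, Perm.mul_apply, px_none, swap_apply_right]

/-- the cycle `pxt` with `k` cycles of length `M` cut off -/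
def pa (p M : ℕ) : ℕ → Perm (Option (ZMod p))
  | 0 => pxt p
  | k + 1 => swap (pt p (k * M)) (pt p ((k + 1) * M)) * pa p M k

structure PaSpec (p M k : ℕ) : Prop where
  h1 : pa p M k none = pt p (k * M)
  h2 : ∀ n, k * M ≤ n → n + 1 < p → pa p M k (pt p n) = pt p (n + 1)
  h3 : pa p M k (pt p (p - 1)) = none
  h4 : ∀ j < k, ∀ r, r + 1 < M → pa p M k (pt p (j * M + r)) = pt p (j * M + (r + 1))
  h5 : ∀ j < k, pa p M k (pt p (j * M + (M - 1))) = pt p (j * M)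

theorem swap_pt {i j n : ℕ} (hi : i < p) (hj : j < p) (hn : n < p) (h1 : n ≠ i) (h2 : n ≠ j) :
    swap (pt p i) (pt p j) (pt p n) = pt p n :=
  swap_apply_of_ne_of_ne (fun h => h1 (pt_inj hn hi h)) (fun h => h2 (pt_inj hn hj h))

theorem paSpec {M : ℕ} (hM : 0 < M) (k : ℕ) (hk : k * M < p) : PaSpec p M k := by
  induction k with
  | zero =>
    refine ⟨?_, ?_, ?_, ?_, ?_⟩
    · rw [pa, pxt_none, zero_mul]
    · intro n _ hn
      exact pxt_pt n hn
    · exact pxt_last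
    · intro j hj; omega
    · intro j hj; omega
  | succ k ih =>
    have hs : (k + 1) * M = k * M + M := by ring
    have hk' : k * M < p := by omega
    obtain ⟨h1, h2, h3, h4, h5⟩ := ih hk'
    have hj : ∀ j < k, j * M + M ≤ k * M := by
      intro j hj
      have : (j + 1) * M ≤ k * M := Nat.mul_le_mul_right M hj
      rw [add_mul, one_mul] at this
      exact this
    refine ⟨?_, ?_, ?_, ?_, ?_⟩
    · rw [pa, Perm.mul_apply, h1, swap_apply_left]
    · intro n hn hn'
      rw [pa, Perm.mul_apply, h2 n (by omega) hn', swap_pt] <;> omega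
    · rw [pa, Perm.mul_apply, h3, swap_apply_of_ne_of_ne] <;> exact (pt_ne_none _).symm
    · intro j hjk r hr
      rcases Nat.lt_succ_iff_lt_or_eq.1 hjk with h | rfl
      · have := hj j h
        rw [pa, Perm.mul_apply, h4 j h r hr, swap_pt] <;> omega
      · rw [pa, Perm.mul_apply, h2 _ (by omega) (by omega), add_assoc, swap_pt] <;> omega
    · intro j hjk
      rcases Nat.lt_succ_iff_lt_or_eq.1 hjk with h | rfl
      · have := hj j h
        rw [pa, Perm.mul_apply, h5 j h, swap_pt] <;> omega
      · rw [pa, Perm.mul_apply, h2 _ (by omega) (by omega)]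
        have e : j * M + (M - 1) + 1 = (j + 1) * M := by omega
        rw [e, swap_apply_right]

/-- piece number `j` as a map from `ZMod M` -/
def qq (p M : ℕ) (j : ℕ) (r : ZMod M) : Option (ZMod p) := pt p (j * M + r.val)

variable {M : ℕ} [NeZero M]

theorem qq_lt {j k : ℕ} (hj : j < k) (r : ZMod M) : j * M + r.val < k * M := by
  have h1 : (j + 1) * M ≤ k * M := Nat.mul_le_mul_right M hj
  have h2 := ZMod.val_lt r
  rw [add_mul, one_mul] at h1
  omega

theorem qq_inj {k j j' : ℕ} (hk : k * M < p) (hj : j < k) (hj' : j' < k) {r r' : ZMod M}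
    (h : qq p M j r = qq p M j' r') : j = j' ∧ r = r' := by
  have h1 := qq_lt hj r
  have h2 := qq_lt hj' r'
  have h3 := pt_inj (by omega) (by omega) h
  have v1 := ZMod.val_lt r
  have v2 := ZMod.val_lt r'
  have hjj : j = j' := by
    rcases lt_trichotomy j j' with hlt | heq | hlt
    · have := qq_lt hlt r
      omega
    · exact heq
    · have := qq_lt hlt r'
      omega
  subst hjj
  exact ⟨rfl, ZMod.val_injective M (by omega)⟩

theorem val_succ (r : ZMod M) : (r.val + 1 < M ∧ (r + 1).val = r.val + 1) ∨
    (r.val = M - 1 ∧ (r + 1).val = 0) := by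
  have hr := ZMod.val_lt r
  have e : (r + 1).val = (r.val + 1) % M := by
    have : r + 1 = ((r.val + 1 : ℕ) : ZMod M) := by push_cast; rw [ZMod.natCast_zmod_val]
    rw [this, ZMod.val_natCast]
  by_cases h : r.val + 1 < M
  · left
    exact ⟨h, by rw [e, Nat.mod_eq_of_lt h]⟩
  · right
    have h' : r.val + 1 = M := by omega
    exact ⟨by omega, by rw [e, h', Nat.mod_self]⟩

theorem pa_qq {k : ℕ} (hk : k * M < p) {j : ℕ} (hj : j < k) (r : ZMod M) :
    pa p M k (qq p M j r) = qq p M j (r + 1) := by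
  obtain ⟨h1, h2, h3, h4, h5⟩ := paSpec (NeZero.pos M) k hk
  rcases val_succ r with ⟨h, e⟩ | ⟨h, e⟩
  · rw [qq, qq, e, h4 j hj _ h]
  · rw [qq, qq, e, h, h5 j hj, add_zero]

theorem pa_pow_none {k : ℕ} (hk : k * M < p) (n : ℕ) (hn : k * M + n < p) :
    (pa p M k ^ (n + 1)) none = pt p (k * M + n) := by
  obtain ⟨h1, h2, h3, h4, h5⟩ := paSpec (NeZero.pos M) k hk
  induction n with
  | zero => simpa using h1
  | succ n ih => rw [pow_succ', Perm.mul_apply, ih (by omega), h2 _ (by omega) (by omega)]; rfl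

theorem pa_pow_qq {k : ℕ} (hk : k * M < p) {j : ℕ} (hj : j < k) (r : ZMod M) (n : ℕ) :
    (pa p M k ^ n) (qq p M j r) = qq p M j (r + n) := by
  induction n with
  | zero => simp
  | succ n ih => rw [pow_succ', Perm.mul_apply, ih, pa_qq hk hj]; push_cast; ring_nf

/-- every point is in a piece or in the remaining cycle -/
theorem pa_cases {k : ℕ} (hk : k * M < p) (ω : Option (ZMod p)) :
    (∃ j < k, ∃ r : ZMod M, ω = qq p M j r) ∨
    (ω = none ∨ ∃ n, k * M + n < p ∧ ω = pt p (k * M + n)) := by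
  cases ω with
  | none => exact Or.inr (Or.inl rfl)
  | some i =>
    obtain ⟨n, hn, e⟩ := exists_pt i
    rw [e]
    by_cases h : n < k * M
    · left
      refine ⟨n / M, Nat.div_lt_of_lt_mul (by rwa [mul_comm] at h), ((n : ℕ) : ZMod M), ?_⟩
      rw [qq, ZMod.val_natCast, mul_comm, Nat.div_add_mod]
    · right; right
      exact ⟨n - k * M, by omega, by rw [Nat.add_sub_cancel' (by omega)]⟩

theorem rest_notMem {k : ℕ} (hk : k * M < p) {ω : Option (ZMod p)}
    (h : ω = none ∨ ∃ n, k * M + n < p ∧ ω = pt p (k * M + n)) :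
    ∀ j < k, ∀ r : ZMod M, qq p M j r ≠ ω := by
  intro j hj r e
  rcases h with rfl | ⟨n, hn, rfl⟩
  · exact pt_ne_none _ e
  · have h1 := qq_lt hj r
    have := pt_inj (by omega) hn e
    omega

theorem rest_orbit {k : ℕ} (hk : k * M < p) {ω : Option (ZMod p)}
    (h : ω = none ∨ ∃ n, k * M + n < p ∧ ω = pt p (k * M + n)) :
    ∃ n : ℕ, ω = (pa p M k ^ n) none := by
  rcases h with rfl | ⟨n, hn, rfl⟩
  · exact ⟨0, rfl⟩
  · exact ⟨n + 1, (pa_pow_none hk n hn).symm⟩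

theorem qq_zero (j : ℕ) : qq p M j 0 = pt p (j * M) := by simp [qq]

theorem pa_orbit {k : ℕ} (hk : k * M < p) (ω : Option (ZMod p)) :
    (∃ j < k, ∃ n : ℕ, ω = (pa p M k ^ n) (pt p (j * M))) ∨
    (∃ n : ℕ, ω = (pa p M k ^ n) none) := by
  rcases pa_cases hk ω with ⟨j, hj, r, rfl⟩ | h
  · left
    refine ⟨j, hj, r.val, ?_⟩
    rw [← qq_zero, pa_pow_qq hk hj, ZMod.natCast_zmod_val, zero_add]
  · exact Or.inr (rest_orbit hk h)

theorem pa_rest {k : ℕ} (hk : k * M < p) {ω : Option (ZMod p)}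
    (h : ∀ j < k, ∀ r : ZMod M, qq p M j r ≠ ω) :
    ∀ j < k, ∀ r : ZMod M, qq p M j r ≠ pa p M k ω := by
  intro j hj r e
  apply h j hj (r - 1)
  apply (pa p M k).injective
  rw [← e, pa_qq hk hj, sub_add_cancel]

/-- commutation with the cut cycle -/
theorem pa_commute {k : ℕ} (hk : k * M < p) {π : Perm (Option (ZMod p))}
    (h1 : ∀ j < k, ∀ r : ZMod M, π (qq p M j (r + 1)) = pa p M k (π (qq p M j r)))
    (h2 : ∀ ω, (∀ j < k, ∀ r : ZMod M, qq p M j r ≠ ω) → π ω = ω) (ω : Option (ZMod p)) :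
    π (pa p M k ω) = pa p M k (π ω) := by
  rcases pa_cases hk ω with ⟨j, hj, r, rfl⟩ | h
  · rw [pa_qq hk hj, h1 j hj]
  · have hrest := rest_notMem hk h
    rw [h2 ω hrest, h2 _ (pa_rest hk hrest)]

/-- what is left of the cut cycle after removing the cycles on the pieces -/
theorem pe_rest {k : ℕ} (hk : k * M < p) {β : Perm (Option (ZMod p))}
    (h2 : ∀ ω, (∀ j < k, ∀ r : ZMod M, qq p M j r ≠ ω) → β ω = ω) {ω : Option (ZMod p)}
    (h : ∀ j < k, ∀ r : ZMod M, qq p M j r ≠ ω) : (β⁻¹ * pa p M k) ω = pa p M k ω := by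
  rw [Perm.mul_apply, Perm.inv_eq_iff_eq, h2 _ (pa_rest hk h)]

theorem pe_qq {k : ℕ} (hk : k * M < p) {β : Perm (Option (ZMod p))}
    (h1 : ∀ j < k, ∀ r : ZMod M, β (qq p M j r) = qq p M j (r + 1)) {j : ℕ} (hj : j < k)
    (r : ZMod M) : (β⁻¹ * pa p M k) (qq p M j r) = qq p M j r := by
  rw [Perm.mul_apply, Perm.inv_eq_iff_eq, h1 j hj, pa_qq hk hj]

theorem pe_pow_none {k : ℕ} (hk : k * M < p) {β : Perm (Option (ZMod p))}
    (h2 : ∀ ω, (∀ j < k, ∀ r : ZMod M, qq p M j r ≠ ω) → β ω = ω) (n : ℕ) :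
    ((β⁻¹ * pa p M k) ^ n) none = (pa p M k ^ n) none ∧
      ∀ j < k, ∀ r : ZMod M, qq p M j r ≠ (pa p M k ^ n) none := by
  induction n with
  | zero => exact ⟨rfl, rest_notMem hk (Or.inl rfl)⟩
  | succ n ih =>
    have e1 := pe_rest hk h2 ih.2
    have e2 : ((β⁻¹ * pa p M k) ^ (n + 1)) none =
        (β⁻¹ * pa p M k) (((β⁻¹ * pa p M k) ^ n) none) := by rw [pow_succ']; rfl
    have e3 : (pa p M k ^ (n + 1)) none = pa p M k ((pa p M k ^ n) none) := by rw [pow_succ']; rfl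
    rw [e2, e3, ih.1, e1]
    exact ⟨rfl, pa_rest hk ih.2⟩

theorem pe_pow {k e : ℕ} (hk : k * M < p) (he : k * M + e = p) {β : Perm (Option (ZMod p))}
    (h1 : ∀ j < k, ∀ r : ZMod M, β (qq p M j r) = qq p M j (r + 1))
    (h2 : ∀ ω, (∀ j < k, ∀ r : ZMod M, qq p M j r ≠ ω) → β ω = ω) :
    (β⁻¹ * pa p M k) ^ (e + 1) = 1 := by
  have hn : ((β⁻¹ * pa p M k) ^ (e + 1)) none = none := by
    rw [(pe_pow_none hk h2 (e + 1)).1]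
    have : e = (e - 1) + 1 := by omega
    rw [pow_succ', Perm.mul_apply, this, pa_pow_none hk (e - 1) (by omega)]
    have e' : k * M + (e - 1) = p - 1 := by omega
    rw [e', (paSpec (NeZero.pos M) k hk).h3]
  ext1 ω
  rcases pa_cases hk ω with ⟨j, hj, r, rfl⟩ | h
  · have := pe_qq hk h1 hj r
    exact Perm.pow_apply_eq_self_of_apply_eq_self this _
  · obtain ⟨n, hn'⟩ := rest_orbit hk h
    rw [← (pe_pow_none hk h2 n).1] at hn'
    rw [hn', ← Perm.mul_apply, ← pow_add, add_comm, pow_add, Perm.mul_apply, hn]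
    rfl
end

open Equiv
set_option linter.unusedSectionVars false
set_option linter.unusedVariables false

/-! ### The permutations `b`, `θ`, `T` on the projective line -/

section
variable {p : ℕ} [Fact p.Prime] {M : ℕ} [NeZero M]

/-- the four pieces -/
def e1 (h4 : 4 * M < p) : Fin 4 × ZMod M ↪ Option (ZMod p) :=
  ⟨fun q => qq p M q.1 q.2, fun q q' h => by
    have := qq_inj h4 q.1.isLt q'.1.isLt h
    exact Prod.ext (Fin.ext this.1) this.2⟩

theorem e1_apply (h4 : 4 * M < p) (j : Fin 4) (r : ZMod M) : e1 h4 (j, r) = qq p M j r := rfl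

/-- multiplication by two -/
def dbl (hM : Odd M) : Perm (ZMod M) :=
  Units.mulLeft (ZMod.unitOfCoprime 2 (Nat.coprime_two_left.2 hM))

theorem dbl_apply (hM : Odd M) (r : ZMod M) : dbl hM r = 2 * r := by
  simp [dbl, Units.mulLeft]

/-- adding one -/
def rot (M : ℕ) : Perm (ZMod M) := Equiv.addRight 1

theorem rot_apply (r : ZMod M) : rot M r = r + 1 := rfl

theorem dbl_rot (hM : Odd M) : dbl hM * rot M * (dbl hM)⁻¹ = rot M * rot M := by
  rw [mul_inv_eq_iff_eq_mul]
  ext1 r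
  simp only [Perm.mul_apply, dbl_apply, rot_apply]
  ring

noncomputable def pb (h4 : 4 * M < p) : Perm (Option (ZMod p)) := vv (e1 h4) 0 (rot M)
noncomputable def pθ (h4 : 4 * M < p) : Perm (Option (ZMod p)) := PP (e1 h4) c3
noncomputable def pT (h4 : 4 * M < p) (hM : Odd M) : Perm (Option (ZMod p)) :=
  vv (e1 h4) 0 (dbl hM) * (vv (e1 h4) 1 (dbl hM))⁻¹
noncomputable def pD (h4 : 4 * M < p) : Perm (Option (ZMod p)) :=
  pθ h4 * (px p ^ M * pθ h4 * (px p ^ M)⁻¹)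
noncomputable def pbj (h4 : 4 * M < p) (j : ℕ) : Perm (Option (ZMod p)) :=
  (px p ^ M) ^ j * pb h4 * ((px p ^ M) ^ j)⁻¹
noncomputable def pebis (h4 : 4 * M < p) : Perm (Option (ZMod p)) :=
  (pb h4 * pbj h4 1)⁻¹ * pa p M 2
noncomputable def prest (h4 : 4 * M < p) : Perm (Option (ZMod p)) :=
  (pb h4 * pbj h4 1 * pbj h4 2 * pbj h4 3)⁻¹ * pa p M 4

variable (h4 : 4 * M < p) (hM : Odd M)

theorem e1_none (j : Fin 4) (r : ZMod M) : e1 h4 (j, r) ≠ none := pt_ne_none _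

theorem vv_none (j : Fin 4) (ρ : Perm (ZMod M)) : vv (e1 h4) j ρ none = none :=
  vv_notMem _ _ _ (fun a => e1_none h4 j a)

theorem PP_none (σ : Perm (Fin 4)) : PP (e1 h4) σ none = none :=
  PP_notMem _ _ (fun j a h => absurd h (e1_none h4 j a))

theorem kappa_qq (j : ℕ) (r : ZMod M) (n : ℕ) :
    ((px p ^ M) ^ n) (qq p M j r) = qq p M (j + n) r := by
  rw [← pow_mul, qq, pt, px_pow_some, qq, pt]
  push_cast; ring_nf

theorem kappa_e1 (j : Fin 4) (r : ZMod M) (hj : j ≠ 3) :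
    (px p ^ M) (e1 h4 (j, r)) = e1 h4 (finRotate 4 j, r) := by
  have h := kappa_qq (p := p) (j : ℕ) r 1
  rw [pow_one] at h
  rw [e1_apply, e1_apply, h]
  congr 1
  clear h
  revert hj; revert j; decide

theorem pD_eq : pD h4 = PP (e1 h4) (swap 0 1 * swap 2 3) := by
  rw [pD, pθ, PP_conj (e1 h4) (fun j a hj => kappa_e1 h4 j a hj), ← PP_mul]
  congr 1
  decide

theorem pbj_eq (j : Fin 4) : pbj h4 (j : ℕ) = vv (e1 h4) j (rot M) := by
  rw [pbj, pb]
  refine vv_conj _ ?_ _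
  intro a
  rw [e1_apply, kappa_qq, e1_apply]; simp

theorem pbj_1 : pbj h4 1 = vv (e1 h4) 1 (rot M) := pbj_eq h4 1
theorem pbj_2 : pbj h4 2 = vv (e1 h4) 2 (rot M) := pbj_eq h4 2
theorem pbj_3 : pbj h4 3 = vv (e1 h4) 3 (rot M) := pbj_eq h4 3

theorem e1_zero (j : Fin 4) : e1 h4 (j, 0) = pt p (j * M) := qq_zero _

theorem f17 (ω) : pb h4 (pa p M 1 ω) = pa p M 1 (pb h4 ω) := by
  refine pa_commute (by omega) ?_ ?_ ω
  · intro j hj r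
    obtain rfl : j = 0 := by omega
    have : ∀ r : ZMod M, pb h4 (qq p M 0 r) = qq p M 0 (r + 1) :=
      fun r => vv_apply (e1 h4) 0 (rot M) r
    rw [this, this, pa_qq (by omega) hj]
  · intro ω h
    exact vv_notMem _ 0 _ (fun a => h 0 (by omega) a)

theorem f18 : pb h4 (pt p 0) = pa p M 1 (pt p 0) := by
  have h1 : pt p 0 = qq p M 0 0 := by simp [qq]
  rw [h1, pa_qq (by omega) (by omega)]
  exact vv_apply (e1 h4) 0 (rot M) 0

theorem f19 : pb h4 none = none := vv_none h4 _ _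

theorem f20 (ω) : pθ h4 (pa p M 3 ω) = pa p M 3 (pθ h4 ω) := by
  refine pa_commute (by omega) ?_ ?_ ω
  · intro j hj r
    have : ∀ j (hj : j < 4) (r : ZMod M), pθ h4 (qq p M j r) = qq p M (c3 ⟨j, hj⟩) r :=
      fun j hj r => PP_apply (e1 h4) c3 ⟨j, hj⟩ r
    rw [this j (by omega), this j (by omega), pa_qq (by omega)]
    have key : ∀ (i : Fin 4), (i : ℕ) < 3 → ((c3 i : Fin 4) : ℕ) < 3 := by decide
    exact key ⟨j, by omega⟩ hj
  · intro ω h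
    refine PP_notMem _ _ ?_
    intro j a hja
    by_cases hj : (j : ℕ) < 3
    · exact absurd hja (h j hj a)
    · obtain rfl : j = 3 := by omega
      decide

theorem f21 : pθ h4 (pt p 0) = pt p (1 * M) := by
  have := PP_apply (e1 h4) c3 0 0
  rw [e1_zero, e1_zero] at this
  simpa [pθ, c3, swap_apply_of_ne_of_ne] using this

theorem f22 : pθ h4 (pt p (1 * M)) = pt p (2 * M) := by
  have := PP_apply (e1 h4) c3 1 0
  rw [e1_zero, e1_zero] at this
  simpa [pθ, c3, swap_apply_of_ne_of_ne] using this

theorem f22' : pθ h4 (pt p (2 * M)) = pt p 0 := by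
  have := PP_apply (e1 h4) c3 2 0
  rw [e1_zero, e1_zero] at this
  simpa [pθ, c3, swap_apply_of_ne_of_ne] using this

theorem f23 : pθ h4 none = none := PP_none h4 _

theorem f24 : pθ h4 * pθ h4 * pθ h4 = 1 := by
  rw [pθ, ← PP_mul, ← PP_mul, ← PP_one (e1 h4)]
  congr 1
  decide

theorem f25 : pD h4 * pD h4 = 1 := by
  rw [pD_eq, ← PP_mul, ← PP_one (e1 h4)]
  congr 1
  decide

theorem f26 : pT h4 hM * pb h4 * (pT h4 hM)⁻¹ = pb h4 * pb h4 := by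
  have h1 := (vv_commute (e1 h4) (i := 1) (j := 0) (by decide) (dbl hM) (rot M)).inv_left
  calc pT h4 hM * pb h4 * (pT h4 hM)⁻¹
      = vv (e1 h4) 0 (dbl hM) * ((vv (e1 h4) 1 (dbl hM))⁻¹ * vv (e1 h4) 0 (rot M)) *
        vv (e1 h4) 1 (dbl hM) * (vv (e1 h4) 0 (dbl hM))⁻¹ := by rw [pT, pb]; group
    _ = vv (e1 h4) 0 (dbl hM) * vv (e1 h4) 0 (rot M) * (vv (e1 h4) 0 (dbl hM))⁻¹ := by
        rw [h1.eq]; group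
    _ = pb h4 * pb h4 := by rw [pb, ← map_inv, ← map_mul, ← map_mul, dbl_rot, map_mul]

theorem beta2_qq : ∀ j < 2, ∀ r : ZMod M, (pb h4 * pbj h4 1) (qq p M j r) = qq p M j (r + 1) := by
  intro j hj r
  rw [pbj_1, pb, Perm.mul_apply]
  interval_cases j
  · rw [show qq p M 0 r = e1 h4 (0, r) from rfl, vv_ne _ (by decide), vv_apply]; rfl
  · rw [show qq p M 1 r = e1 h4 (1, r) from rfl, vv_apply, vv_ne _ (by decide)]; rfl

theorem beta2_rest : ∀ ω, (∀ j < 2, ∀ r : ZMod M, qq p M j r ≠ ω) → (pb h4 * pbj h4 1) ω = ω := by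
  intro ω h
  rw [pbj_1, pb, Perm.mul_apply, vv_notMem _ 1 _ (fun a => h 1 (by omega) a),
    vv_notMem _ 0 _ (fun a => h 0 (by omega) a)]

theorem pT_0 (r : ZMod M) : pT h4 hM (qq p M 0 r) = qq p M 0 (dbl hM r) := by
  rw [pT, Perm.mul_apply, ← map_inv, show qq p M 0 r = e1 h4 (0, r) from rfl, vv_ne _ (by decide),
    vv_apply]; rfl

theorem pT_1 (r : ZMod M) : pT h4 hM (qq p M 1 r) = qq p M 1 ((dbl hM)⁻¹ r) := by
  rw [pT, Perm.mul_apply, ← map_inv, show qq p M 1 r = e1 h4 (1, r) from rfl,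
    vv_apply, vv_ne _ (by decide)]; rfl

theorem pT_rest (ω) (h : ∀ j < 2, ∀ r : ZMod M, qq p M j r ≠ ω) : pT h4 hM ω = ω := by
  rw [pT, Perm.mul_apply, ← map_inv, vv_notMem _ 1 _ (fun a => h 1 (by omega) a),
    vv_notMem _ 0 _ (fun a => h 0 (by omega) a)]

theorem f27 (ω) : pT h4 hM (pebis h4 ω) = pebis h4 (pT h4 hM ω) := by
  have hk : 2 * M < p := by omega
  rcases pa_cases hk ω with ⟨j, hj, r, rfl⟩ | h
  · have hq : ∀ r, pebis h4 (qq p M j r) = qq p M j r := fun r => pe_qq hk (beta2_qq h4) hj r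
    rw [hq]
    interval_cases j
    · rw [pT_0, hq]
    · rw [pT_1, hq]
  · have h' := rest_notMem hk h
    have e : pebis h4 ω = pa p M 2 ω := pe_rest hk (beta2_rest h4) h'
    rw [pT_rest h4 hM ω h', e, pT_rest h4 hM _ (pa_rest hk h')]

theorem f28 : pT h4 hM (pt p 0) = pt p 0 := by
  have h1 : pt p 0 = qq p M 0 0 := by simp [qq]
  rw [h1, pT_0, dbl_apply, mul_zero]

theorem f29 : pT h4 hM none = none := by
  rw [pT, Perm.mul_apply, ← map_inv, vv_none, vv_none]

theorem f30 : pD h4 * pT h4 hM * (pD h4)⁻¹ * pT h4 hM = 1 := by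
  rw [pD_eq, pT]
  set P := PP (e1 h4) (swap 0 1 * swap 2 3) with hP
  have h0 : P * vv (e1 h4) 0 (dbl hM) * P⁻¹ = vv (e1 h4) 1 (dbl hM) := vv_PP _ _ _ _
  have h1 : P * vv (e1 h4) 1 (dbl hM) * P⁻¹ = vv (e1 h4) 0 (dbl hM) := vv_PP _ _ _ _
  calc _ = (P * vv (e1 h4) 0 (dbl hM) * P⁻¹) * (P * vv (e1 h4) 1 (dbl hM) * P⁻¹)⁻¹ *
        (vv (e1 h4) 0 (dbl hM) * (vv (e1 h4) 1 (dbl hM))⁻¹) := by group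
    _ = 1 := by rw [h0, h1]; group

theorem f31 : pT h4 hM * (pθ h4 * pT h4 hM * (pθ h4)⁻¹) *
    (pθ h4 * pθ h4 * pT h4 hM * (pθ h4 * pθ h4)⁻¹) = 1 := by
  rw [pθ, pT]
  set P := PP (e1 h4) c3 with hP
  have h0 : P * vv (e1 h4) 0 (dbl hM) * P⁻¹ = vv (e1 h4) 1 (dbl hM) := vv_PP _ _ _ _
  have h1 : P * vv (e1 h4) 1 (dbl hM) * P⁻¹ = vv (e1 h4) 2 (dbl hM) := vv_PP _ _ _ _
  have h2 : P * vv (e1 h4) 2 (dbl hM) * P⁻¹ = vv (e1 h4) 0 (dbl hM) := vv_PP _ _ _ _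
  have e1' : P * (vv (e1 h4) 0 (dbl hM) * (vv (e1 h4) 1 (dbl hM))⁻¹) * P⁻¹ =
      vv (e1 h4) 1 (dbl hM) * (vv (e1 h4) 2 (dbl hM))⁻¹ := by
    rw [← h1, ← h0]; group
  have e2' : P * P * (vv (e1 h4) 0 (dbl hM) * (vv (e1 h4) 1 (dbl hM))⁻¹) * (P * P)⁻¹ =
      vv (e1 h4) 2 (dbl hM) * (vv (e1 h4) 0 (dbl hM))⁻¹ := by
    calc _ = P * (P * (vv (e1 h4) 0 (dbl hM) * (vv (e1 h4) 1 (dbl hM))⁻¹) * P⁻¹) * P⁻¹ := by group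
      _ = (P * vv (e1 h4) 1 (dbl hM) * P⁻¹) * (P * vv (e1 h4) 2 (dbl hM) * P⁻¹)⁻¹ := by
        rw [e1']; group
      _ = _ := by rw [h1, h2]
  rw [e1', e2']; group

theorem f32 {e : ℕ} (he : 4 * M + e = p) : prest h4 ^ (e + 1) = 1 := by
  refine pe_pow h4 he ?_ ?_
  · intro j hj r
    rw [pbj_1, pbj_2, pbj_3, pb]
    simp only [Perm.mul_apply]
    interval_cases j
    · rw [show qq p M 0 r = e1 h4 (0, r) from rfl, vv_ne _ (by decide), vv_ne _ (by decide),
        vv_ne _ (by decide), vv_apply]; rfl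
    · rw [show qq p M 1 r = e1 h4 (1, r) from rfl, vv_ne _ (by decide), vv_ne _ (by decide),
        vv_apply, vv_ne _ (by decide)]; rfl
    · rw [show qq p M 2 r = e1 h4 (2, r) from rfl, vv_ne _ (by decide), 
        vv_apply, vv_ne _ (by decide), vv_ne _ (by decide)]; rfl
    · rw [show qq p M 3 r = e1 h4 (3, r) from rfl, 
        vv_apply, vv_ne _ (by decide), vv_ne _ (by decide), vv_ne _ (by decide)]; rfl
  · intro ω h
    rw [pbj_1, pbj_2, pbj_3, pb]
    simp only [Perm.mul_apply]
    rw [vv_notMem _ 3 _ (fun a => h 3 (by omega) a), vv_notMem _ 2 _ (fun a => h 2 (by omega) a),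
      vv_notMem _ 1 _ (fun a => h 1 (by omega) a), vv_notMem _ 0 _ (fun a => h 0 (by omega) a)]
end

open Equiv
set_option linter.unusedSectionVars false
set_option linter.unusedVariables false

namespace W
variable {G : Type} [Group G] {V : W G} {p : ℕ} [Fact p.Prime] {M : ℕ} [NeZero M]

theorem st_pt (hx : V.x ^ p = 1) (n : ℕ) :
    V.st p (pt p n) = V.x ^ n * V.s * (V.x ^ n)⁻¹ := st_nat hx n

theorem st_pt0 (hx : V.x ^ p = 1) : V.st p (pt p 0) = V.s := by simpa using st_pt hx 0

theorem st_SM (hx : V.x ^ p = 1) (hXM : V.XM = V.x ^ M) (j : ℕ) :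
    V.st p (pt p (j * M)) = V.SM j := by
  rw [st_pt hx, SM, hXM, ← pow_mul, mul_comm j M]

theorem cp_xt (hx : V.x ^ p = 1) (hs : StarRel (V.st p)) (cx : Cp (V.st p) V.x (px p)) :
    Cp (V.st p) V.xt (pxt p) := by
  have := hs.cp_swap (pt_ne_none (p := p) 0)
  rw [st_pt0 hx] at this
  exact this.mul cx

theorem cp_a (hx : V.x ^ p = 1) (hs : StarRel (V.st p)) (cx : Cp (V.st p) V.x (px p))
    (hXM : V.XM = V.x ^ M) (k : ℕ) (hk : k * M < p) : Cp (V.st p) (V.a k) (pa p M k) := by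
  induction k with
  | zero => exact cp_xt hx hs cx
  | succ k ih =>
    have hM := NeZero.pos M
    have hs' : (k + 1) * M = k * M + M := by ring
    have := hs.cp_swap (a := pt p (k * M)) (b := pt p ((k + 1) * M)) (fun h => by
      have := pt_inj (by omega) hk h
      omega)
    rw [st_SM hx hXM, st_SM hx hXM] at this
    exact this.mul (ih (by omega))

theorem conj_of_comm {π η : Perm (Option (ZMod p))} (h : ∀ ω, π (η ω) = η (π ω)) :
    π * η * π⁻¹ = η := by
  rw [mul_inv_eq_iff_eq_mul]; ext1 ω; exact h ω

/-- quotient killing: all stage 1 generators lie in the star subgroup -/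
theorem stage1_kill {e gg g gi h N : ℕ} (h1 : Holds V.rels1) (h1' : Holds (V.rels1' e))
    (hP : V.Pow p gg g gi h M N) (he : e + 1 < p) (S : Subgroup G)
    (hs : V.s ∈ S) (hx : V.x ∈ Subgroup.normalizer (S : Set G))
    (hw : V.w ∈ Subgroup.normalizer (S : Set G))
    (hb : V.b ∈ Subgroup.normalizer (S : Set G))
    (hθ : V.θ ∈ Subgroup.normalizer (S : Set G))
    (hT : V.T ∈ Subgroup.normalizer (S : Set G)) :
    V.x ∈ S ∧ V.t ∈ S ∧ V.h ∈ S ∧ V.w ∈ S ∧ V.b ∈ S ∧ V.θ ∈ S ∧ V.T ∈ S := by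
  set Z := Subgroup.normalizer (S : Set G) with hZ
  have ht : V.t ∈ Z := by
    have : V.x * V.x * V.w * V.Xh * V.w * V.x * V.x * V.w = V.t := h1 (_, _) (by simp [rels1])
    rw [← this, hP.Xh]
    exact mul_mem (mul_mem (mul_mem (mul_mem (mul_mem (mul_mem (mul_mem hx hx) hw) (pow_mem hx _))
      hw) hx) hx) hw
  have hh : V.h ∈ Z := by
    have : V.Xg * V.w * V.Xgi * V.w * V.Xg * V.w = V.h := h1 (_, _) (by simp [rels1])
    rw [← this, hP.Xg, hP.Xgi]
    exact mul_mem (mul_mem (mul_mem (mul_mem (mul_mem (pow_mem hx _) hw) (pow_mem hx _)) hw)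
      (pow_mem hx _)) hw
  let xz : Z := ⟨V.x, hx⟩
  let V1 : W Z :=
    { s := ⟨V.s, Subgroup.le_normalizer hs⟩, x := xz, t := ⟨V.t, ht⟩, h := ⟨V.h, hh⟩,
      w := ⟨V.w, hw⟩, b := ⟨V.b, hb⟩, θ := ⟨V.θ, hθ⟩, T := ⟨V.T, hT⟩, B := 1, Θ := 1, z := 1,
      Xp := xz ^ p, Xgg := xz ^ gg, Xg := xz ^ g, Xgi := xz ^ gi, Xh := xz ^ h, XM := xz ^ M,
      XN := xz ^ N }
  have m : V1.map Z.subtype = { V with B := 1, Θ := 1, z := 1 } := by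
    simp only [V1, W.map, Subgroup.subtype_apply, map_pow, map_one, xz]
    rw [← hP.Xp, ← hP.Xgg, ← hP.Xg, ← hP.Xgi, ← hP.Xh, ← hP.XM, ← hP.XN]
  have k1 : Holds V1.rels1 := by
    apply Holds.of_map (f := Z.subtype) Subtype.val_injective
    rw [← map_rels1, m]; exact h1
  have k1' : Holds (V1.rels1' e) := by
    apply Holds.of_map (f := Z.subtype) Subtype.val_injective
    rw [← map_rels1', m]
    exact h1'
  have kP : V1.Pow p gg g gi h M N := ⟨rfl, rfl, rfl, rfl, rfl, rfl, rfl⟩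
  let q := QuotientGroup.mk' (S.subgroupOf Z)
  have kill := kill1 (V := V1.map q) (e := e) (p := p)
    ((QuotientGroup.eq_one_iff _).2 hs)
    (by rw [map_rels1]; exact k1.map q) (by rw [map_rels1']; exact k1'.map q) (kP.map q)
    Fact.out he
  obtain ⟨a1, a2, a3, a4, a5, a6, a7⟩ := kill
  have qm : ∀ y : Z, q y = 1 → (y : G) ∈ S := fun y hy =>
    Subgroup.mem_subgroupOf.1 ((QuotientGroup.eq_one_iff y).1 hy)
  exact ⟨qm _ a1, qm _ a2, qm _ a3, qm _ a4, qm _ a5, qm _ a6, qm _ a7⟩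

theorem stage1' (h4 : 4 * M < p) (hM : Odd M) {e gg g gi h N : ℕ}
    (h1 : Holds V.rels1) (h1' : Holds (V.rels1' e))
    (hP : V.Pow p gg g gi h M N) (he : e + 1 < p) 
    (hx : V.x ^ p = 1) (hs : StarRel (V.st p)) (cx : Cp (V.st p) V.x (px p))
    (cw : Cp (V.st p) V.w (pw p)) :
    ∀ S : Subgroup G, S = Subgroup.closure (Set.range (V.st p)) →
    V.x ∈ S ∧ V.t ∈ S ∧ V.h ∈ S ∧ V.w ∈ S ∧ V.b ∈ S ∧ V.θ ∈ S ∧ V.T ∈ S := by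
  have k1' := h1'
  simp only [Holds, rels1', List.forall_mem_cons] at h1'
  obtain ⟨r17, r18, r19, r20, r21, r22, r23, r24, r25, r26, r27, r28, r29, r30, -⟩ := h1'
  have ca := cp_a hx hs cx hP.XM
  have s0 := st_pt0 hx
  have sSM := st_SM hx hP.XM
  have sinf : V.st p none = V.Sinf := rfl
  -- b
  have cb : Cp (V.st p) V.b (pb h4) := by
    intro ω
    rcases pa_orbit (k := 1) (M := M) (by omega) ω with ⟨j, hj, n, rfl⟩ | ⟨n, rfl⟩
    · obtain rfl : j = 0 := by omega
      rw [zero_mul]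
      refine Cp.seed (ca 1 (by omega)) (ca 1 (by omega)) r17 (f17 h4) ?_ n
      rw [f18, ← ca 1 (by omega), s0]; exact r18
    · refine Cp.seed (ca 1 (by omega)) (ca 1 (by omega)) r17 (f17 h4) ?_ n
      rw [f19]; exact r19
  -- θ
  have cθ : Cp (V.st p) V.θ (pθ h4) := by
    intro ω
    rcases pa_orbit (k := 3) (M := M) (by omega) ω with ⟨j, hj, n, rfl⟩ | ⟨n, rfl⟩
    · refine Cp.seed (ca 3 (by omega)) (ca 3 (by omega)) r20 (f20 h4) ?_ n
      interval_cases j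
      · rw [zero_mul, f21, s0, sSM]; exact r21
      · rw [f22, sSM, sSM]; exact r22
      · rw [f22', sSM, s0, ← r22, ← r21]
        calc _ = (V.θ * V.θ * V.θ) * V.s * (V.θ * V.θ * V.θ)⁻¹ := by group
          _ = V.s := by rw [r24]; group
    · refine Cp.seed (ca 3 (by omega)) (ca 3 (by omega)) r20 (f20 h4) ?_ n
      rw [f23]; exact r23
  have cκ : Cp (V.st p) V.XM (px p ^ M) := by rw [hP.XM]; exact cx.pow M
  have cD : Cp (V.st p) V.D (pD h4) := cθ.mul ((cκ.mul cθ).mul cκ.inv)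
  have cbj : ∀ j, Cp (V.st p) (V.bj j) (pbj h4 j) :=
    fun j => ((cκ.pow j).mul cb).mul (cκ.pow j).inv
  have ce : Cp (V.st p) V.ebis (pebis h4) := (cb.mul (cbj 1)).inv.mul (ca 2 (by omega))
  -- T
  have cT0 : ∀ r : ZMod M, V.T * V.st p (qq p M 0 r) * V.T⁻¹ = V.st p (pT h4 hM (qq p M 0 r)) := by
    intro r
    have e : qq p M 0 r = (pb h4 ^ r.val) (pt p 0) := by
      have : ∀ n : ℕ, (pb h4 ^ n) (qq p M 0 0) = qq p M 0 n := by
        intro n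
        induction n with
        | zero => simp
        | succ n ih =>
          rw [pow_succ', Perm.mul_apply, ih]
          have := vv_apply (e1 h4) 0 (rot M) n
          rw [rot_apply] at this
          push_cast
          exact this
      have h := this r.val
      rw [qq_zero, zero_mul, ZMod.natCast_zmod_val] at h
      exact h.symm
    rw [e]
    refine Cp.seed cb (cb.mul cb) r26 (π := pT h4 hM) ?_ ?_ _
    · intro ω
      have := f26 h4 hM
      rw [mul_inv_eq_iff_eq_mul] at this
      exact Equiv.congr_fun this ω
    · rw [f28, s0]; exact r28
  have cT : Cp (V.st p) V.T (pT h4 hM) := by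
    intro ω
    rcases pa_cases (k := 2) (M := M) (by omega) ω with ⟨j, hj, r, rfl⟩ | h
    · interval_cases j
      · exact cT0 r
      · have hD0 : ∀ r, pD h4 (qq p M 0 r) = qq p M 1 r := by
          intro r
          rw [pD_eq]
          exact PP_apply (e1 h4) _ 0 r
        have r30' : V.T = V.D * V.T⁻¹ * V.D⁻¹ := by
          have := eq_inv_of_mul_eq_one_right r30
          calc V.T = (V.D * V.T * V.D⁻¹)⁻¹ := this
            _ = _ := by group
        have hi : V.T⁻¹ * V.st p (qq p M 0 r) * V.T = V.st p (qq p M 0 ((dbl hM)⁻¹ r)) := by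
          have := cT0 ((dbl hM)⁻¹ r)
          rw [pT_0] at this
          have e2 : dbl hM ((dbl hM)⁻¹ r) = r := (dbl hM).apply_symm_apply r
          rw [e2] at this
          rw [← this]; group
        rw [pT_1, ← hD0, ← hD0, ← cD, ← cD, ← hi]
        conv_lhs => rw [r30']
        group
    · have h2 : 2 * M < p := by omega
      obtain ⟨n, rfl⟩ := rest_orbit h2 h
      rw [← (pe_pow_none h2 (beta2_rest h4) n).1]
      refine Cp.seed ce ce r27 (f27 h4 hM) ?_ n
      rw [f29]; exact r29
  rintro S rfl
  refine stage1_kill h1 k1' hP he _ ?_ cx.mem_normalizer cw.mem_normalizer cb.mem_normalizer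
    cθ.mem_normalizer cT.mem_normalizer
  rw [← s0]
  exact Subgroup.subset_closure ⟨_, rfl⟩
end W

open Equiv
set_option linter.unusedSectionVars false
set_option linter.unusedVariables false

section
variable {Ω Ω' G : Type} [Group G] {s : Ω → G} [DecidableEq Ω] [DecidableEq Ω']

theorem exists_perm3 {i j k a b c : Ω} (hij : i ≠ j) (hik : i ≠ k) (hjk : j ≠ k)
    (hab : a ≠ b) (hac : a ≠ c) (hbc : b ≠ c) : ∃ π : Perm Ω, π i = a ∧ π j = b ∧ π k = c := by
  obtain ⟨π, h1⟩ : ∃ π : Perm Ω, π i = a := ⟨swap i a, swap_apply_left _ _⟩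
  obtain ⟨π, h1, h2⟩ : ∃ π : Perm Ω, π i = a ∧ π j = b := by
    refine ⟨swap (π j) b * π, ?_, ?_⟩
    · rw [Perm.mul_apply, h1, swap_apply_of_ne_of_ne _ hab]
      rw [← h1]; exact fun h => hij (π.injective h)
    · rw [Perm.mul_apply, swap_apply_left]
  refine ⟨swap (π k) c * π, ?_, ?_, ?_⟩
  · rw [Perm.mul_apply, h1, swap_apply_of_ne_of_ne _ hac]
    rw [← h1]; exact fun h => hik (π.injective h)
  · rw [Perm.mul_apply, h2, swap_apply_of_ne_of_ne _ hbc]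
    rw [← h2]; exact fun h => hjk (π.injective h)
  · rw [Perm.mul_apply, swap_apply_left]

theorem starRel_of_top (hR : Realised s = ⊤) {f : Ω' → Ω} (hf : Function.Injective f)
    (hs : StarRel (fun ω => s (f ω))) {i j k : Ω'} (hij : i ≠ j) (hik : i ≠ k) (hjk : j ≠ k) :
    StarRel s := by
  have mem : ∀ π : Perm Ω, π ∈ Realised s := fun π => hR ▸ Subgroup.mem_top π
  have fij := hf.ne hij
  have fik := hf.ne hik
  have fjk := hf.ne hjk
  refine ⟨?_, ?_, ?_⟩
  · intro a
    have := Realised.sq (mem (swap (f i) a)) (hs.sq i)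
    rwa [swap_apply_left] at this
  · intro a b hab
    by_cases h : ∃ c, a ≠ c ∧ b ≠ c
    · obtain ⟨c, hac, hbc⟩ := h
      obtain ⟨π, rfl, rfl, rfl⟩ := exists_perm3 fij fik fjk hab hac hbc
      exact Realised.br (mem π) (hs.br i j hij)
    · push Not at h
      exfalso
      rcases eq_or_ne a (f i) with rfl | h1
      · exact fjk ((h _ fij).symm.trans (h _ fik))
      · rcases eq_or_ne a (f j) with rfl | h2
        · exact fik ((h _ fij.symm).symm.trans (h _ fjk))
        · exact fij ((h _ h1).symm.trans (h _ h2))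
  · intro a b c hab hac hbc
    obtain ⟨π, rfl, rfl, rfl⟩ := exists_perm3 fij fik fjk hab hac hbc
    exact Realised.cm (mem π) (hs.cm i j k hij hik hjk)

theorem realised_top [Finite Ω] (o : Ω) (h : ∀ a, swap o a ∈ Realised s) : Realised s = ⊤ := by
  rw [eq_top_iff, ← Perm.closure_isSwap, Subgroup.closure_le]
  rintro _ ⟨a, b, hab, rfl⟩
  have h1 := h a
  rw [swap_comm] at h1
  by_cases e : o = a
  · subst e; exact h b
  · by_cases e' : o = b
    · subst e'; exact h1
    · have := mul_mem (mul_mem h1 (h b)) h1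
      have e2 : swap a o * swap o b * swap a o = swap a b := by
        have := swap_apply_apply (swap a o) o b
        rw [swap_apply_right, swap_apply_of_ne_of_ne (Ne.symm hab) (Ne.symm e')] at this
        rw [this, swap_inv]
      rwa [e2] at this

/-- `g` commutes with the transposition `(a b)`. -/
def Qc (s : Ω → G) (g : G) (a b : Ω) : Prop := a ≠ b → Commute g (s a * s b * s a)

theorem Qc.symm (hs : StarRel s) {g : G} {a b : Ω} (h : Qc s g a b) : Qc s g b a := by
  intro hab
  rw [hs.br b a hab]; exact h hab.symm

theorem Qc.trans (hs : StarRel s) {g : G} {a b c : Ω} (h : Qc s g a b) (h' : Qc s g b c) :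
    Qc s g a c := by
  intro hac
  rcases eq_or_ne a b with rfl | hab
  · exact h' hac
  rcases eq_or_ne b c with rfl | hbc
  · exact h hac
  have c1 := h hab
  have c2 := (c1.mul_right (h' hbc)).mul_right c1.inv_right
  have k := hs.cp_swap hab
  have k1 := k b
  have k2 := k c
  rw [swap_apply_right] at k1
  rw [swap_apply_of_ne_of_ne hac.symm hbc.symm] at k2
  have : s a * s c * s a = (s a * s b * s a) * (s b * s c * s b) * (s a * s b * s a)⁻¹ := by
    generalize s a * s b * s a = t at *
    rw [← k1]; conv_lhs => rw [← k2]
    group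
  rw [this]; exact c2

theorem Qc.conj {g y : G} {π : Perm Ω} (hy : Cp s y π) (hg : Commute g y) {a b : Ω}
    (h : Qc s g a b) : Qc s g (π a) (π b) := by
  intro hab
  have h' := h (fun e => hab (e ▸ rfl))
  have := (hg.mul_right h').mul_right hg.inv_right
  rw [← hy, ← hy]
  have e : y * s a * y⁻¹ * (y * s b * y⁻¹) * (y * s a * y⁻¹) = y * (s a * s b * s a) * y⁻¹ := by
    group
  rw [e]; exact this

theorem Qc.orbit (hs : StarRel s) {g y : G} {π : Perm Ω} (hy : Cp s y π) (hg : Commute g y)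
    {o : Ω} (h0 : Qc s g o (π o)) (ho : ∀ ω, ∃ n : ℕ, ω = (π ^ n) o) (a b : Ω) : Qc s g a b := by
  have h1 : ∀ n : ℕ, Qc s g ((π ^ n) o) ((π ^ (n + 1)) o) := by
    intro n
    induction n with
    | zero => simpa using h0
    | succ n ih =>
      rw [pow_succ' π n, pow_succ' π (n + 1)]
      exact Qc.conj hy hg ih
  have h2 : ∀ n : ℕ, Qc s g o ((π ^ n) o) := by
    intro n
    induction n with
    | zero => exact fun h => absurd rfl h
    | succ n ih => exact Qc.trans hs ih (h1 n)
  obtain ⟨m, rfl⟩ := ho a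
  obtain ⟨n, rfl⟩ := ho b
  exact Qc.trans hs (Qc.symm hs (h2 m)) (h2 n)

theorem comm_of_conj {g y : G} (h : g * y * g⁻¹ = y) : Commute g y := by
  rw [mul_inv_eq_iff_eq_mul] at h; exact h

theorem conj_of_commute {g y : G} (h : Commute g y) : g * y * g⁻¹ = y := by
  rw [mul_inv_eq_iff_eq_mul]; exact h
end

/-- the points of stage 2 -/
abbrev Om2 (p N : ℕ) : Type := Option (ZMod p) ⊕ (ZMod N ⊕ ZMod N)

namespace W
variable {G : Type} [Group G] {V : W G} {p : ℕ} [Fact p.Prime] {N : ℕ} [NeZero N]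

variable (V) in
def st2 (p N : ℕ) : Om2 p N → G
  | .inl ω => V.st p ω
  | .inr (.inl r) => V.Θ * V.st p (qq p N 0 r) * V.Θ⁻¹
  | .inr (.inr r) => V.Θ * (V.Θ * V.st p (qq p N 0 r) * V.Θ⁻¹) * V.Θ⁻¹
end W

variable {p : ℕ} [Fact p.Prime] {N : ℕ} [NeZero N]

def e2f (p N : ℕ) : Fin 4 × ZMod N → Om2 p N := fun q => 
  match q.1 with
  | 0 => .inl (qq p N 0 q.2)
  | 1 => .inr (.inl q.2)
  | 2 => .inr (.inr q.2)
  | 3 => .inl (qq p N 1 q.2)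

def e2 (h2 : 2 * N < p) : Fin 4 × ZMod N ↪ Om2 p N :=
  ⟨e2f p N, by
    rintro ⟨i, r⟩ ⟨j, r'⟩ h
    have key : ∀ i < 2, ∀ j < 2, qq p N i r = qq p N j r' → i = j ∧ r = r' :=
      fun i hi j hj => qq_inj h2 hi hj
    have k00 := key 0 (by omega) 0 (by omega)
    have k01 := key 0 (by omega) 1 (by omega)
    have k10 := key 1 (by omega) 0 (by omega)
    have k11 := key 1 (by omega) 1 (by omega)
    fin_cases i <;> fin_cases j <;> simp [e2f] at h ⊢ <;> first | exact h | skip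
    · exact (k00 h).2
    · exact absurd (k01 h).1 (by omega)
    · exact absurd (k10 h).1 (by omega)
    · exact (k11 h).2⟩

noncomputable def pTh (h2 : 2 * N < p) : Perm (Om2 p N) := PP (e2 h2) c3
noncomputable def pBB (h2 : 2 * N < p) : Perm (Om2 p N) :=
  vv (e2 h2) 0 (rot N) * (vv (e2 h2) 1 (rot N))⁻¹

section
variable (h2 : 2 * N < p)

theorem e2_0 (r : ZMod N) : e2 h2 (0, r) = .inl (qq p N 0 r) := rfl
theorem e2_1 (r : ZMod N) : e2 h2 (1, r) = .inr (.inl r) := rfl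
theorem e2_2 (r : ZMod N) : e2 h2 (2, r) = .inr (.inr r) := rfl
theorem e2_3 (r : ZMod N) : e2 h2 (3, r) = .inl (qq p N 1 r) := rfl

theorem pTh_0 (r : ZMod N) : pTh h2 (.inl (qq p N 0 r)) = .inr (.inl r) := PP_apply (e2 h2) c3 0 r
theorem pTh_1 (r : ZMod N) : pTh h2 (.inr (.inl r)) = .inr (.inr r) := PP_apply (e2 h2) c3 1 r
theorem pTh_2 (r : ZMod N) : pTh h2 (.inr (.inr r)) = .inl (qq p N 0 r) := PP_apply (e2 h2) c3 2 r
theorem pTh_rest (ω) (h : ∀ r, qq p N 0 r ≠ ω) : pTh h2 (.inl ω) = .inl ω := by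
  refine PP_notMem _ _ ?_
  intro j a e
  fin_cases j
  · exact absurd (Sum.inl_injective e) (h a)
  · cases e
  · cases e
  · decide

theorem rot_inv_apply (r : ZMod N) : (rot N)⁻¹ r = r - 1 := by
  rw [Perm.inv_eq_iff_eq, rot_apply]; ring

theorem pBB_0 (r : ZMod N) : pBB h2 (.inl (qq p N 0 r)) = .inl (qq p N 0 (r + 1)) := by
  rw [pBB, ← e2_0 h2, ← map_inv, Perm.mul_apply, vv_ne _ (by decide), vv_apply]; rfl
theorem pBB_1 (r : ZMod N) : pBB h2 (.inr (.inl r)) = .inr (.inl (r - 1)) := by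
  rw [pBB, ← e2_1 h2, ← map_inv, Perm.mul_apply, vv_apply, vv_ne _ (by decide), rot_inv_apply]; rfl
theorem pBB_2 (r : ZMod N) : pBB h2 (.inr (.inr r)) = .inr (.inr r) := by
  rw [pBB, ← e2_2 h2, ← map_inv, Perm.mul_apply, vv_ne _ (by decide), vv_ne _ (by decide)]
theorem pBB_rest (ω) (h : ∀ r, qq p N 0 r ≠ ω) : pBB h2 (.inl ω) = .inl ω := by
  rw [pBB, ← map_inv, Perm.mul_apply, vv_notMem (e2 h2) 1 _ (ω := Sum.inl ω), vv_notMem]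
  · intro a e; exact h a (Sum.inl_injective e)
  · intro a e; cases e
end

theorem rest0 (h1 : 1 * N < p) (ω : Option (ZMod p)) :
    (∃ r, ω = qq p N 0 r) ∨ ((∀ r, qq p N 0 r ≠ ω) ∧ ∃ n : ℕ, ω = (pa p N 1 ^ n) none) := by
  rcases pa_cases h1 ω with ⟨j, hj, r, rfl⟩ | h
  · obtain rfl : j = 0 := by omega
    exact Or.inl ⟨r, rfl⟩
  · exact Or.inr ⟨rest_notMem h1 h 0 (by omega), rest_orbit h1 h⟩

namespace W
variable {G : Type} [Group G] {V : W G}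

theorem stage2 (h2 : 2 * N < p) (hp : 3 < p) (hr : Holds V.rels2) (hXN : V.XN = V.x ^ N)
    (hx : V.x ^ p = 1) (hs : StarRel (V.st p)) (cx : Cp (V.st p) V.x (px p)) :
    StarRel (V.st2 p N) ∧ Cp (V.st2 p N) V.Θ (pTh h2) ∧ Cp (V.st2 p N) V.B (pBB h2) := by
  simp only [Holds, rels2, List.forall_mem_cons] at hr
  obtain ⟨r33, r34, r35, r36, r37, r38, r39, r40, r41, r42, r43, r44, r45, r46, r47, -⟩ := hr
  have h1 : 1 * N < p := by omega
  have hN := NeZero.pos N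
  have cxt := cp_xt hx hs cx
  have s0 := st_pt0 hx
  have sN : V.st p (pt p N) = V.SN := by rw [st_pt hx, SN, hXN]
  have ca : Cp (V.st p) V.a' (pa p N 1) := by
    have := hs.cp_swap (a := pt p (0 * N)) (b := pt p ((0 + 1) * N)) (fun h => by
      have := pt_inj (by omega) (by omega) h
      omega)
    rw [zero_add, one_mul, zero_mul, s0, sN] at this
    have := this.mul cxt
    have e : pa p N 1 = swap (pt p 0) (pt p N) * pxt p := by simp [pa]
    rw [e]; exact this
  have paq : ∀ r, pa p N 1 (qq p N 0 r) = qq p N 0 (r + 1) := pa_qq h1 (by omega)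
  have q0 : qq p N 0 (0 : ZMod N) = pt p 0 := by rw [qq_zero, zero_mul]
  have qn : ∀ n : ℕ, qq p N 0 (n : ZMod N) = (pa p N 1 ^ n) (pt p 0) := by
    intro n
    rw [← q0, pa_pow_qq h1 (by omega), zero_add]
  have zn : ∀ r : ZMod N, ∃ n : ℕ, r = (n : ZMod N) := fun r => ⟨r.val, (ZMod.natCast_zmod_val r).symm⟩
  -- B on the line
  have B0 : ∀ r, V.B * V.st p (qq p N 0 r) * V.B⁻¹ = V.st p (qq p N 0 (r + 1)) := by
    intro r
    obtain ⟨n, rfl⟩ := zn r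
    have := Cp.seed ca ca r33 (π := pa p N 1) (fun _ => rfl) (ω := pt p 0)
      (by rw [← ca, s0]; exact r34) n
    rw [← qn, paq] at this
    exact this
  have Br : ∀ n : ℕ, V.B * V.st p ((pa p N 1 ^ n) none) * V.B⁻¹ = V.st p ((pa p N 1 ^ n) none) :=
    fun n => Cp.seed ca ca r33 (π := id) (fun _ => rfl) (ω := none) r35 n
  -- zeta
  have xorb : ∀ ω, ∃ n : ℕ, ω = (pxt p ^ n) none := by
    intro ω
    rcases pa_orbit (k := 0) (M := N) (by omega) ω with ⟨j, hj, _⟩ | h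
    · omega
    · exact h
  have xt0 : V.xt * V.Sinf * V.xt⁻¹ = V.s := by
    have := cxt none
    rwa [pxt_none, s0] at this
  have zxt : Commute V.ζ V.xt := comm_of_conj r38
  have zs : Commute V.ζ V.s := comm_of_conj r39
  have ζ0 : ∀ ω, Commute V.ζ (V.st p ω) := by
    intro ω
    obtain ⟨n, rfl⟩ := xorb ω
    apply comm_of_conj
    refine Cp.seed cxt cxt r38 (π := id) (fun _ => rfl) ?_ n
    apply conj_of_commute
    show Commute V.ζ V.Sinf
    have e : V.Sinf = V.xt⁻¹ * V.s * V.xt := by rw [← xt0]; group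
    rw [e]
    exact (zxt.inv_right.mul_right zs).mul_right zxt
  have hζ : V.ζ = V.Θ * V.B * V.Θ⁻¹ := rfl
  have ΘΘ : V.Θ * V.Θ = V.Θ⁻¹ := eq_inv_of_mul_eq_one_left r40
  have ΘΘ' : V.Θ⁻¹ * V.Θ⁻¹ = V.Θ := by rw [← mul_inv_rev, ΘΘ, inv_inv]
  have f1 : ∀ r, V.st2 p N (.inr (.inl r)) = V.Θ * V.st p (qq p N 0 r) * V.Θ⁻¹ := fun _ => rfl
  have f2 : ∀ r, V.st2 p N (.inr (.inr r)) = V.Θ⁻¹ * V.st p (qq p N 0 r) * V.Θ := by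
    intro r
    show V.Θ * (V.Θ * V.st p (qq p N 0 r) * V.Θ⁻¹) * V.Θ⁻¹ = _
    calc _ = (V.Θ * V.Θ) * V.st p (qq p N 0 r) * (V.Θ⁻¹ * V.Θ⁻¹) := by group
      _ = _ := by rw [ΘΘ, ΘΘ']
  set B2 := V.Θ⁻¹ * V.B * V.Θ with hB2
  have r37' : V.B * V.ζ * B2 = 1 := by
    rw [ΘΘ, inv_inv] at r37; exact r37
  have ζ1 : ∀ r, V.ζ * V.st2 p N (.inr (.inl r)) * V.ζ⁻¹ = V.st2 p N (.inr (.inl (r + 1))) := by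
    intro r
    rw [f1, f1, ← B0, hζ]; group
  have B22 : ∀ r, B2 * V.st2 p N (.inr (.inr r)) * B2⁻¹ = V.st2 p N (.inr (.inr (r + 1))) := by
    intro r
    rw [f2, f2, ← B0, hB2]; group
  have Bs2 : ∀ r, Commute V.B (V.st2 p N (.inr (.inr r))) := by
    intro r
    have := conj_of_commute (ζ0 (qq p N 0 r))
    apply comm_of_conj
    rw [f2]
    conv_rhs => rw [← this]
    rw [hζ]; group
  have B2s1 : ∀ r, Commute B2 (V.st2 p N (.inr (.inl r))) := by
    intro r
    have := conj_of_commute (ζ0 (qq p N 0 r))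
    apply comm_of_conj
    rw [f1]
    conv_rhs => rw [← this]
    rw [hζ, hB2]
    have e : V.Θ * V.Θ * V.B * (V.Θ * V.Θ)⁻¹ = V.Θ⁻¹ * V.B * V.Θ := by
      rw [ΘΘ, inv_inv]
    rw [← e]; group
  have Bs1 : ∀ r, V.B * V.st2 p N (.inr (.inl r)) * V.B⁻¹ = V.st2 p N (.inr (.inl (r - 1))) := by
    intro r
    have e : V.B = B2⁻¹ * V.ζ⁻¹ := by
      rw [← mul_inv_rev]
      rw [mul_assoc] at r37'
      exact eq_inv_of_mul_eq_one_left r37'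
    have h := ζ1 (r - 1)
    rw [sub_add_cancel] at h
    have h' := conj_of_commute ((B2s1 (r - 1)).inv_left)
    rw [e, ← h]
    conv_rhs => rw [← h']
    group
  have ζ2 : ∀ r, V.ζ * V.st2 p N (.inr (.inr r)) * V.ζ⁻¹ = V.st2 p N (.inr (.inr (r - 1))) := by
    intro r
    have e : V.ζ = V.B⁻¹ * B2⁻¹ := by
      calc V.ζ = V.B⁻¹ * (V.B * V.ζ * B2) * B2⁻¹ := by group
        _ = _ := by rw [r37', mul_one]
    have h := B22 (r - 1)
    rw [sub_add_cancel] at h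
    have hconj := conj_of_commute ((Bs2 (r - 1)).inv_left)
    rw [e, ← h]
    conv_rhs => rw [← hconj]
    group
  -- Theta fixes the complement
  have Θr : ∀ n : ℕ, V.Θ * V.st p ((pa p N 1 ^ n) none) * V.Θ⁻¹ = V.st p ((pa p N 1 ^ n) none) := by
    intro n
    induction n with
    | zero => exact r42
    | succ n ih =>
      have hB := Br (n + 1)
      rw [pow_succ', Perm.mul_apply] at hB ⊢
      rw [← ca] at hB ⊢
      have hB' : V.B⁻¹ * (V.a' * V.st p ((pa p N 1 ^ n) none) * V.a'⁻¹) * V.B =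
          V.a' * V.st p ((pa p N 1 ^ n) none) * V.a'⁻¹ := by
        conv_lhs => rw [← hB]
        group
      calc _ = (V.Θ * V.a' * V.Θ⁻¹) * (V.Θ * V.st p ((pa p N 1 ^ n) none) * V.Θ⁻¹) *
            (V.Θ * V.a' * V.Θ⁻¹)⁻¹ := by group
        _ = V.B⁻¹ * (V.a' * V.st p ((pa p N 1 ^ n) none) * V.a'⁻¹) * V.B := by
            rw [ih, r41]; group
        _ = _ := hB'
  have cΘ : Cp (V.st2 p N) V.Θ (pTh h2) := by
    rintro (ω | r | r)
    · rcases rest0 h1 ω with ⟨r, rfl⟩ | ⟨h, n, hn⟩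
      · rw [pTh_0]; rfl
      · rw [pTh_rest h2 ω h, hn]; exact Θr n
    · rw [pTh_1]; rfl
    · rw [pTh_2, f2]
      have e : V.st2 p N (Sum.inl (qq p N 0 r)) = V.st p (qq p N 0 r) := rfl
      rw [e]; group
  have cB : Cp (V.st2 p N) V.B (pBB h2) := by
    rintro (ω | r | r)
    · rcases rest0 h1 ω with ⟨r, rfl⟩ | ⟨h, n, hn⟩
      · rw [pBB_0]; exact B0 r
      · rw [pBB_rest h2 ω h, hn]; exact Br n
    · rw [pBB_1]; exact Bs1 r
    · rw [pBB_2]; exact conj_of_commute (Bs2 r)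
  refine ⟨?_, cΘ, cB⟩
  -- commutation with the transpositions of the line
  have hα : ∀ g : G, Commute g V.xt → Commute g V.α → ∀ a b, Qc (V.st p) g a b := by
    intro g hg1 hg2
    refine Qc.orbit hs cxt hg1 (o := none) ?_ xorb
    have h0 : Qc (V.st p) g (pt p 0) (pt p 1) := by
      intro _
      rw [s0, st_pt hx, pow_one]; exact hg2
    have h1 := Qc.conj cxt.inv hg1.inv_right h0
    have e1 : (pxt p)⁻¹ (pt p 0) = none := by rw [Perm.inv_eq_iff_eq, pxt_none]
    have e2 : (pxt p)⁻¹ (pt p 1) = pt p 0 := by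
      rw [Perm.inv_eq_iff_eq, pxt_pt 0 (by omega)]
    rwa [e1, e2, ← pxt_none] at h1
  have f10 : V.st2 p N (.inr (.inl 0)) = V.s01 := by rw [f1, q0, s0]; rfl
  have f20 : V.st2 p N (.inr (.inr 0)) = V.s02 := by
    rw [f2, q0, s0, s02, ΘΘ, inv_inv]
  have ζQ : ∀ g, (∀ a b, Qc (V.st p) g a b) → ∀ a b, Qc (V.st p) (V.ζ * g * V.ζ⁻¹) a b := by
    intro g hg a b hab
    have hz : Commute V.ζ (V.st p a * V.st p b * V.st p a) :=
      ((ζ0 a).mul_right (ζ0 b)).mul_right (ζ0 a)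
    exact (hz.mul_left (hg a b hab)).mul_left hz.inv_left
  have Q1 : ∀ r a b, Qc (V.st p) (V.st2 p N (.inr (.inl r))) a b := by
    intro r
    obtain ⟨n, rfl⟩ := zn r
    induction n with
    | zero =>
      rw [Nat.cast_zero, f10]
      exact hα _ (comm_of_conj r44).symm (comm_of_conj r45).symm
    | succ n ih =>
      push_cast
      rw [← ζ1]
      exact ζQ _ ih
  have Q2 : ∀ r a b, Qc (V.st p) (V.st2 p N (.inr (.inr r))) a b := by
    intro r
    obtain ⟨n, hn⟩ := zn (-r)
    obtain rfl : r = -(n : ZMod N) := by rw [← hn, neg_neg]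
    clear hn
    induction n with
    | zero =>
      rw [Nat.cast_zero, neg_zero, f20]
      exact hα _ (comm_of_conj r46).symm (comm_of_conj r47).symm
    | succ n ih =>
      have e : -((n + 1 : ℕ) : ZMod N) = -(n : ZMod N) - 1 := by push_cast; ring
      rw [e, ← ζ2]
      exact ζQ _ ih
  have sw : ∀ a b : Option (ZMod p), a ≠ b →
      (swap (.inl a) (.inl b) : Perm (Om2 p N)) ∈ Realised (V.st2 p N) := by
    intro a b hab
    refine ⟨V.st p a * V.st p b * V.st p a, ?_⟩
    rintro (ω | r | r)
    · rw [show (swap (Sum.inl a) (Sum.inl b) : Perm (Om2 p N)) (Sum.inl ω) =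
        Sum.inl (swap a b ω) from (Sum.inl_injective.map_swap a b ω).symm]
      exact hs.cp_swap hab ω
    · rw [swap_apply_of_ne_of_ne (by simp) (by simp)]
      exact conj_of_commute (Q1 r a b hab).symm
    · rw [swap_apply_of_ne_of_ne (by simp) (by simp)]
      exact conj_of_commute (Q2 r a b hab).symm
  have cΘ' : pTh h2 ∈ Realised (V.st2 p N) := ⟨_, cΘ⟩
  have Θn : pTh h2 (.inl none) = .inl none := pTh_rest h2 _ (fun r => pt_ne_none _)
  have swΘ : ∀ a, swap (.inl none) a ∈ Realised (V.st2 p N) →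
      swap (.inl none) (pTh h2 a) ∈ Realised (V.st2 p N) := by
    intro a ha
    have := mul_mem (mul_mem cΘ' ha) (inv_mem cΘ')
    rwa [← swap_apply_apply, Θn] at this
  have w1 : ∀ r : ZMod N, swap (.inl none) (.inr (.inl r)) ∈ Realised (V.st2 p N) := by
    intro r
    rw [← pTh_0 h2]
    exact swΘ _ (sw _ _ (pt_ne_none _).symm)
  have top : Realised (V.st2 p N) = ⊤ := by
    refine realised_top (.inl none) ?_
    rintro (ω | r | r)
    · by_cases h : none = ω
      · subst h; rw [swap_self]; exact one_mem _
      · exact sw _ _ h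
    · exact w1 r
    · rw [← pTh_1 h2]; exact swΘ _ (w1 r)
  refine starRel_of_top top Sum.inl_injective hs (i := none) (j := pt p 0) (k := pt p 1)
    (pt_ne_none _).symm (pt_ne_none _).symm (fun h => ?_)
  have := pt_inj (by omega) (by omega) h
  omega

theorem stage2_kill (hr : Holds V.rels2) (S : Subgroup G) (hN : V.XN ∈ S)
    (hs : V.s ∈ S) (hx : V.x ∈ S) (hw : V.w ∈ S)
    (hB : V.B ∈ Subgroup.normalizer (S : Set G))
    (hΘ : V.Θ ∈ Subgroup.normalizer (S : Set G)) : V.B ∈ S ∧ V.Θ ∈ S := by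
  set Z := Subgroup.normalizer (S : Set G) with hZ
  have le : S ≤ Z := Subgroup.le_normalizer
  let V1 : W Z :=
    { s := ⟨V.s, le hs⟩, x := ⟨V.x, le hx⟩, t := 1, h := 1,
      w := ⟨V.w, le hw⟩, b := 1, θ := 1, T := 1, B := ⟨V.B, hB⟩, Θ := ⟨V.Θ, hΘ⟩, z := 1,
      Xp := 1, Xgg := 1, Xg := 1, Xgi := 1, Xh := 1, XM := 1,
      XN := ⟨V.XN, le hN⟩ }
  have k2 : Holds V1.rels2 := by
    apply Holds.of_map (f := Z.subtype) Subtype.val_injective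
    rw [← map_rels2]; exact hr
  let q := QuotientGroup.mk' (S.subgroupOf Z)
  have kill := kill2 (V := V1.map q) ((QuotientGroup.eq_one_iff _).2 hN)
    (by rw [map_rels2]; exact k2.map q)
  obtain ⟨a1, a2⟩ := kill
  have qm : ∀ y : Z, q y = 1 → (y : G) ∈ S := fun y hy =>
    Subgroup.mem_subgroupOf.1 ((QuotientGroup.eq_one_iff y).1 hy)
  exact ⟨qm _ a1, qm _ a2⟩
end W

open Equiv
set_option linter.unusedSectionVars false
set_option linter.unusedVariables false

namespace W
variable {G : Type} [Group G] {V : W G}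

variable (V) in
/-- the eleven generators lie in `S` -/
structure In (S : Subgroup G) : Prop where
  s : V.s ∈ S
  x : V.x ∈ S
  t : V.t ∈ S
  h : V.h ∈ S
  w : V.w ∈ S
  b : V.b ∈ S
  θ : V.θ ∈ S
  T : V.T ∈ S
  B : V.B ∈ S
  Θ : V.Θ ∈ S
  z : V.z ∈ S

theorem In.mono {S S' : Subgroup G} (h : V.In S) (hS : S ≤ S') : V.In S' :=
  ⟨hS h.s, hS h.x, hS h.t, hS h.h, hS h.w, hS h.b, hS h.θ, hS h.T, hS h.B, hS h.Θ, hS h.z⟩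

variable (V) in
/-- the stars, with the additional point -/
def st3 (p N : ℕ) : Option (Om2 p N) → G
  | none => V.z
  | some ω => V.st2 p N ω

/-- numerical parameters -/
structure Par (p : ℕ) [Fact p.Prime] (u : (ZMod p)ˣ) (M N e : ℕ) : Prop where
  gen : ∀ v : (ZMod p)ˣ, ∃ k : ℕ, u ^ k = v
  p3 : 3 < p
  odd : Odd M
  M4 : 4 * M < p
  N2 : 2 * N < p
  e1 : e + 1 < p
  eq : 4 * M + e = p

variable {p : ℕ} [Fact p.Prime] {M N e : ℕ} [NeZero M] [NeZero N] {u : (ZMod p)ˣ}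

theorem all_but_z (hp : Par p u M N e) {hh : ℕ}
    (hP : V.Pow p (u ^ 2 : ZMod p).val (u : ZMod p).val ((u⁻¹ : (ZMod p)ˣ) : ZMod p).val hh M N)
    (h1 : Holds V.rels1) (h1' : Holds (V.rels1' e)) (h2 : Holds V.rels2) :
    (V.x ^ p = 1 ∧ StarRel (V.st2 p N) ∧ Cp (V.st2 p N) V.Θ (pTh hp.N2) ∧
      StarRel (V.st p) ∧ Cp (V.st p) V.x (px p)) ∧
    ∀ S : Subgroup G, (∀ ω, V.st2 p N ω ∈ S) → V.z ∈ S → V.In S := by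
  obtain ⟨hx, hs, cx, cw⟩ := stage1 u hp.gen h1 hP
  obtain ⟨hs2, cΘ, cB⟩ := stage2 hp.N2 hp.p3 h2 hP.XN hx hs cx
  refine ⟨⟨hx, hs2, cΘ, hs, cx⟩, ?_⟩
  intro S hS hz
  obtain ⟨i1, i2, i3, i4, i5, i6, i7⟩ := stage1' hp.M4 hp.odd h1 h1' hP hp.e1 hx hs cx cw _ rfl
  have le : Subgroup.closure (Set.range (V.st p)) ≤ Subgroup.closure (Set.range (V.st2 p N)) := by
    rw [Subgroup.closure_le]
    rintro _ ⟨ω, rfl⟩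
    exact Subgroup.subset_closure ⟨.inl ω, rfl⟩
  have le2 : Subgroup.closure (Set.range (V.st2 p N)) ≤ S := by
    rw [Subgroup.closure_le]
    rintro _ ⟨ω, rfl⟩
    exact hS ω
  have ks : V.s ∈ Subgroup.closure (Set.range (V.st2 p N)) := by
    rw [← st_pt0 hx]
    exact Subgroup.subset_closure ⟨.inl (pt p 0), rfl⟩
  obtain ⟨i8, i9⟩ := stage2_kill h2 (Subgroup.closure (Set.range (V.st2 p N)))
    (by rw [hP.XN]; exact pow_mem (le i1) _) ks (le i1) (le i4) cB.mem_normalizer cΘ.mem_normalizer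
  exact ⟨le2 ks, le2 (le i1), le2 (le i2), le2 (le i3), le2 (le i4), le2 (le i5), le2 (le i6),
    le2 (le i7), le2 i8, le2 i9, hz⟩

theorem final_false (hp : Par p u M N e) {hh : ℕ}
    (hP : V.Pow p (u ^ 2 : ZMod p).val (u : ZMod p).val ((u⁻¹ : (ZMod p)ˣ) : ZMod p).val hh M N)
    (h : Holds (V.rels e false)) :
    StarRel (V.st2 p N) ∧ V.In (Subgroup.closure (Set.range (V.st2 p N))) := by
  obtain ⟨h1, h1', h2, h3⟩ := (holds_rels_iff V e false).1 h
  obtain ⟨⟨hx, hs2, -⟩, hI⟩ := all_but_z hp hP h1 h1' h2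
  refine ⟨hs2, hI _ (fun ω => Subgroup.subset_closure ⟨ω, rfl⟩) ?_⟩
  have : V.z = 1 := h3 (_, _) (by simp [relsz])
  rw [this]; exact one_mem _

theorem final_true (hp : Par p u M N e) {hh : ℕ}
    (hP : V.Pow p (u ^ 2 : ZMod p).val (u : ZMod p).val ((u⁻¹ : (ZMod p)ˣ) : ZMod p).val hh M N)
    (h : Holds (V.rels e true)) :
    StarRel (V.st3 p N) ∧ V.In (Subgroup.closure (Set.range (V.st3 p N))) := by
  obtain ⟨h1, h1', h2, h3⟩ := (holds_rels_iff V e true).1 h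
  obtain ⟨⟨hx, hs2, cΘ, hs, cx⟩, hI⟩ := all_but_z hp hP h1 h1' h2
  refine ⟨?_, hI _ (fun ω => Subgroup.subset_closure ⟨some ω, rfl⟩)
    (Subgroup.subset_closure ⟨none, rfl⟩)⟩
  simp only [Holds, relsz, List.forall_mem_cons] at h3
  obtain ⟨z1, z2, z3, z4, z5, -⟩ := h3
  have cxt := cp_xt hx hs cx
  have s0 := st_pt0 hx
  have p3 := hp.p3
  have xorb : ∀ ω, ∃ n : ℕ, ω = (pxt p ^ n) none := by
    intro ω
    rcases pa_orbit (k := 0) (M := N) (by omega) ω with ⟨j, hj, _⟩ | h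
    · omega
    · exact h
  have hg1 := (comm_of_conj z3).symm
  have hg2 := (comm_of_conj z4).symm
  have Q1 : ∀ a b, Qc (V.st p) V.z a b := by
    refine Qc.orbit hs cxt hg1 (o := none) ?_ xorb
    have h0 : Qc (V.st p) V.z (pt p 0) (pt p 1) := by
      intro _
      rw [s0, st_pt hx, pow_one]; exact hg2
    have h1 := Qc.conj cxt.inv hg1.inv_right h0
    have e1 : (pxt p)⁻¹ (pt p 0) = none := by rw [Perm.inv_eq_iff_eq, pxt_none]
    have e2 : (pxt p)⁻¹ (pt p 1) = pt p 0 := by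
      rw [Perm.inv_eq_iff_eq, pxt_pt 0 (by omega)]
    rwa [e1, e2, ← pxt_none] at h1
  have Qn : ∀ b : Om2 p N, Qc (V.st2 p N) V.z (.inl none) b := by
    have Θn : pTh hp.N2 (.inl none) = .inl none := pTh_rest hp.N2 _ (fun r => pt_ne_none _)
    have step : ∀ b, Qc (V.st2 p N) V.z (.inl none) b →
        Qc (V.st2 p N) V.z (.inl none) (pTh hp.N2 b) := by
      intro b hb
      have := Qc.conj cΘ (comm_of_conj z5).symm hb
      rwa [Θn] at this
    have l : ∀ b, Qc (V.st2 p N) V.z (.inl none) (.inl b) := by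
      intro b hb
      exact Q1 none b (fun e => hb (by rw [e]))
    have l1 : ∀ r, Qc (V.st2 p N) V.z (.inl none) (.inr (.inl r)) := by
      intro r
      rw [← pTh_0 hp.N2]; exact step _ (l _)
    rintro (b | r | r)
    · exact l b
    · exact l1 r
    · rw [← pTh_1 hp.N2]; exact step _ (l1 r)
  have Q : ∀ a b : Om2 p N, Qc (V.st2 p N) V.z a b := fun a b =>
    Qc.trans hs2 (Qc.symm hs2 (Qn a)) (Qn b)
  have sw : ∀ a b : Om2 p N, a ≠ b → swap (some a) (some b) ∈ Realised (V.st3 p N) := by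
    intro a b hab
    refine ⟨V.st2 p N a * V.st2 p N b * V.st2 p N a, ?_⟩
    rintro (_ | ω)
    · rw [swap_apply_of_ne_of_ne (by simp) (by simp)]
      exact conj_of_commute (Q a b hab).symm
    · rw [show (swap (some a) (some b) : Perm (Option (Om2 p N))) (some ω) =
        some (swap a b ω) from ((Option.some_injective _).map_swap a b ω).symm]
      exact hs2.cp_swap hab ω
  have hi : V.st2 p N (.inl none) = V.Sinf := rfl
  have swn : swap (some (.inl none)) none ∈ Realised (V.st3 p N) := by
    have hI := hs2.sq (.inl none)
    rw [hi] at hI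
    have hI' := inv_eq_of_mul_eq_one_left hI
    have hz' := inv_eq_of_mul_eq_one_left z1
    have hy : (V.Sinf * V.z * V.Sinf)⁻¹ = V.Sinf * V.z * V.Sinf := by
      rw [mul_inv_rev, mul_inv_rev, hI', hz', mul_assoc]
    refine ⟨V.Sinf * V.z * V.Sinf, ?_⟩
    rintro (_ | ω)
    · rw [swap_apply_right]
      show V.Sinf * V.z * V.Sinf * V.z * _ = V.Sinf
      rw [hy]
      calc V.Sinf * V.z * V.Sinf * V.z * (V.Sinf * V.z * V.Sinf)
          = V.Sinf * V.z * V.Sinf * V.z * (V.z * V.Sinf * V.z) := by rw [z2]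
        _ = V.Sinf * V.z * V.Sinf * (V.z * V.z) * V.Sinf * V.z := by group
        _ = V.Sinf * V.z * (V.Sinf * V.Sinf) * V.z := by rw [z1]; group
        _ = V.Sinf * (V.z * V.z) := by rw [hI]; group
        _ = V.Sinf := by rw [z1, mul_one]
    · by_cases hω : ω = .inl none
      · subst hω
        rw [swap_apply_left]
        show V.Sinf * V.z * V.Sinf * V.Sinf * _ = V.z
        rw [hy]
        calc V.Sinf * V.z * V.Sinf * V.Sinf * (V.Sinf * V.z * V.Sinf)
            = V.Sinf * V.z * (V.Sinf * V.Sinf) * (V.Sinf * V.z * V.Sinf) := by group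
          _ = V.Sinf * V.z * (V.z * V.Sinf * V.z) := by rw [hI, z2, mul_one]
          _ = V.Sinf * (V.z * V.z) * V.Sinf * V.z := by group
          _ = V.z := by rw [z1, mul_one, hI, one_mul]
      · rw [swap_apply_of_ne_of_ne (by simpa using hω) (by simp)]
        apply conj_of_commute
        show Commute _ (V.st2 p N ω)
        have q := (Qn ω (Ne.symm hω)).eq
        rw [hi] at q
        show V.Sinf * V.z * V.Sinf * V.st2 p N ω = V.st2 p N ω * (V.Sinf * V.z * V.Sinf)
        generalize V.st2 p N ω = y at *
        calc V.Sinf * V.z * V.Sinf * y = V.Sinf * V.z * V.Sinf * y * (V.Sinf * V.Sinf) := by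
              rw [hI, mul_one]
          _ = V.Sinf * (V.z * (V.Sinf * y * V.Sinf)) * V.Sinf := by group
          _ = V.Sinf * ((V.Sinf * y * V.Sinf) * V.z) * V.Sinf := by rw [q]
          _ = (V.Sinf * V.Sinf) * y * (V.Sinf * V.z * V.Sinf) := by group
          _ = _ := by rw [hI, one_mul]
  have top : Realised (V.st3 p N) = ⊤ := by
    refine realised_top (some (.inl none)) ?_
    rintro (_ | ω)
    · exact swn
    · by_cases h : .inl none = ω
      · subst h; rw [swap_self]; exact one_mem _
      · exact sw _ _ h
  refine starRel_of_top top (Option.some_injective _) hs2 (i := .inl none) (j := .inl (pt p 0))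
    (k := .inl (pt p 1)) (by simp [pt]) (by simp [pt]) (fun h => ?_)
  have := pt_inj (by omega) (by omega) (Sum.inl_injective h)
  omega
end W

open Equiv
set_option linter.unusedSectionVars false
set_option linter.unusedVariables false

/-- a representation of permutations together with stars -/
structure StRep {Ω H : Type} [Group H] [DecidableEq Ω] (E : Perm Ω →* H) (S : Ω → H) : Prop where
  conj : ∀ (π : Perm Ω) (ω : Ω), E π * S ω * (E π)⁻¹ = S (π ω)
  sw : ∀ a b, a ≠ b → S a * S b * S a = E (swap a b)
  sq : ∀ a, S a * S a = 1

section
variable {p : ℕ} [Fact p.Prime]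

theorem pmul_px (v : (ZMod p)ˣ) (n : ℕ) (hn : (n : ZMod p) = v) :
    pmul v * px p * (pmul v)⁻¹ = px p ^ n := by
  rw [mul_inv_eq_iff_eq_mul]
  ext1 ω
  cases ω with
  | none => simp [px_pow_none]
  | some i =>
    simp only [Perm.mul_apply, px_some, pmul_some, px_pow_some, hn]
    ring_nf

theorem px_p : px p ^ p = 1 := by
  ext1 ω
  cases ω with
  | none => simp [px_pow_none]
  | some i => simp [px_pow_some]

theorem pw_pmul_conj (v : (ZMod p)ˣ) : pw p * pmul v * (pw p)⁻¹ = (pmul v)⁻¹ := by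
  rw [mul_inv_eq_iff_eq_mul]
  ext1 ω
  exact pw_pmul v ω

theorem pw_sq : pw p * pw p = 1 := by ext1 ω; simp

theorem px_pw3 : (px p * pw p) ^ 3 = 1 := by
  ext1 ω
  have e : ∀ ω, ((px p * pw p) ^ 3) ω = px p (pw p (px p (pw p (px p (pw p ω))))) := by
    intro ω; simp [pow_succ, Perm.mul_apply]
  rw [e, Perm.one_apply]
  cases ω with
  | none =>
    rw [pw_none, px_some, zero_add, pw_some one_ne_zero]; simp
  | some i =>
    by_cases h0 : i = 0
    · subst h0
      rw [pw_zero, px_none, pw_none, px_some, zero_add, pw_some one_ne_zero]; simp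
    · rw [pw_some h0, px_some]
      by_cases h1 : i = 1
      · subst h1; simp
      · have h1' : i - 1 ≠ 0 := sub_ne_zero.2 h1
        have e1 : -i⁻¹ + 1 = (i - 1) / i := by field_simp; ring
        have e2 : -((i - 1) / i)⁻¹ + 1 = -(i - 1)⁻¹ := by field_simp; ring
        rw [e1, pw_some (div_ne_zero h1' h0), px_some, e2,
          pw_some (neg_ne_zero.2 (inv_ne_zero h1')), px_some, inv_neg, inv_inv]
        ring_nf

theorem pw_px_pmul (v : (ZMod p)ˣ) (m m' : ℕ) (hm : (m : ZMod p) = v)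
    (hm' : (m' : ZMod p) = (v : ZMod p)⁻¹) :
    px p ^ m * pw p * px p ^ m' * pw p * px p ^ m * pw p = pmul (v ^ 2) := by
  ext1 ω
  have hv : (v : ZMod p) ≠ 0 := v.ne_zero
  simp only [Perm.mul_apply]
  cases ω with
  | none =>
    rw [pw_none, px_pow_some, hm, zero_add, pw_some hv, px_pow_some, hm', neg_add_cancel, pw_zero,
      px_pow_none, pmul_none]
  | some i =>
    rw [pmul_some, Units.val_pow_eq_pow_val]
    by_cases h0 : i = 0
    · subst h0
      rw [pw_zero, px_pow_none, pw_none, px_pow_some, hm', zero_add, pw_some (inv_ne_zero hv),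
        px_pow_some, hm, inv_inv, neg_add_cancel, mul_zero]
    · rw [pw_some h0, px_pow_some, hm]
      by_cases h1 : v * i = 1
      · have e : -i⁻¹ + (v : ZMod p) = 0 := by
          rw [← eq_inv_of_mul_eq_one_left h1]; ring
        rw [e, pw_zero, px_pow_none, pw_none, px_pow_some, hm, zero_add, sq, mul_assoc, h1, mul_one]
      · have h1' : v * i - 1 ≠ 0 := sub_ne_zero.2 h1
        have e1 : -i⁻¹ + (v : ZMod p) = (v * i - 1) / i := by field_simp; ring
        have e2 : -((v * i - 1) / i)⁻¹ + (v : ZMod p)⁻¹ = -(v * (v * i - 1))⁻¹ := by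
          field_simp; ring
        rw [e1, pw_some (div_ne_zero h1' h0), px_pow_some, hm', e2,
          pw_some (neg_ne_zero.2 (inv_ne_zero (mul_ne_zero hv h1'))), px_pow_some, hm, inv_neg,
          inv_inv]
        ring_nf
end

namespace W
variable {H : Type} [Group H] {V : W H} {p : ℕ} [Fact p.Prime] {M : ℕ} [NeZero M]
  {F : Perm (Option (ZMod p)) →* H} {S : Option (ZMod p) → H}

theorem truth1 (hR : StRep F S) (u v : (ZMod p)ˣ) (hv : (v : ZMod p) = 2)
    {hh N : ℕ} (hhh : (hh : ZMod p) = (v : ZMod p)⁻¹)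
    (hs : V.s = S (pt p 0)) (hx : V.x = F (px p)) (ht : V.t = F (pmul (v ^ 2)))
    (hhe : V.h = F (pmul (u ^ 2))) (hw : V.w = F (pw p))
    (hP : V.Pow p (u ^ 2 : ZMod p).val (u : ZMod p).val ((u⁻¹ : (ZMod p)ˣ) : ZMod p).val hh M N) :
    Holds V.rels1 := by
  have i0 : V.Sinf = S none := by
    rw [Sinf, hw, hs, hR.conj]; congr 1; simp [pt]
  have i1 : V.S1 = S (some 1) := by
    rw [S1, hx, hs, hR.conj]; congr 1; simp [pt]
  have i2 : V.Sm1 = S (some (-1)) := by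
    rw [Sm1, hx, hs, ← map_inv]
    have := hR.conj (px p)⁻¹ (pt p 0)
    rw [← map_inv, inv_inv] at this
    rw [this]; congr 1
    rw [Perm.inv_eq_iff_eq]; simp [pt]
  have i3 : V.Sg = S (some u) := by
    rw [Sg, hP.Xg, hx, hs, ← map_pow, hR.conj, pt, px_pow_some]
    simp
  have i4 : V.Smgi = S (some (-(u : ZMod p)⁻¹)) := by
    rw [Smgi, hP.Xgi, hx, hs, ← map_pow, ← map_inv]
    have := hR.conj (px p ^ ((u⁻¹ : (ZMod p)ˣ) : ZMod p).val)⁻¹ (pt p 0)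
    rw [← map_inv, inv_inv] at this
    rw [this]; congr 1
    rw [Perm.inv_eq_iff_eq, px_pow_some, ZMod.natCast_zmod_val, Units.val_inv_eq_inv_val,
      neg_add_cancel]
    simp [pt]
  have ne : ∀ i : ZMod p, (none : Option (ZMod p)) ≠ some i := fun i => by simp
  have hu := u.ne_zero
  have p0 : pt p 0 = some 0 := by simp [pt]
  have comm : ∀ c : ZMod p, c ≠ 0 → V.Sinf * V.s * V.Sinf * S (some c) =
      S (some c) * (V.Sinf * V.s * V.Sinf) := by
    intro c hc
    rw [i0, hs, hR.sw _ _ (by simp [pt])]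
    have := hR.conj (swap none (pt p 0)) (some c)
    rw [swap_apply_of_ne_of_ne (by simp) (by simpa [pt] using hc), mul_inv_eq_iff_eq_mul] at this
    exact this
  simp only [Holds, rels1, List.forall_mem_cons]
  refine ⟨?_, ?_, ?_, ?_, ?_, ?_, ?_, ?_, ?_, ?_, ?_, ?_, ?_, ?_, ?_, ?_, ?_⟩
  · rw [ht, hx, ← map_inv, ← map_mul, ← map_mul, ← map_pow, pmul_px _ 4]
    push_cast; rw [hv]; norm_num
  · rw [hP.Xp, hx, ← map_pow, px_p, map_one]
  · rw [hP.Xgg, hhe, hx, ← map_inv, ← map_mul, ← map_mul, ← map_pow, pmul_px]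
    push_cast; rw [ZMod.natCast_zmod_val]
  · rw [hhe, hs, hR.conj]; congr 1; simp [pt]
  · rw [hw, hhe, ← map_inv, ← map_mul, ← map_mul, ← map_inv, pw_pmul_conj]
  · rw [hw, ← map_mul, pw_sq, map_one]
  · rw [i0, hx, hR.conj, px_none]
  · rw [i1, i2, hw, hR.conj, pw_some one_ne_zero, inv_one]
  · rw [i3, i4, hw, hR.conj, pw_some hu]
  · rw [hs]; exact hR.sq _
  · rw [i0, hs, hR.sw _ _ (by simp [pt]), hR.sw _ _ (by simp [pt]), swap_comm]
  · rw [i1]; exact comm 1 one_ne_zero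
  · rw [i3]; exact comm u hu
  · rw [hx, hw, ← map_mul, ← map_pow, px_pw3, map_one]
  · rw [ht, hP.Xh, hx, hw, ← pw_px_pmul v 2 hh (by rw [hv]; rfl) hhh]
    simp only [map_mul, map_pow, pow_two]
    group
  · rw [hhe, hP.Xg, hP.Xgi, hx, hw, ← pw_px_pmul u (u : ZMod p).val
      ((u⁻¹ : (ZMod p)ˣ) : ZMod p).val (ZMod.natCast_zmod_val _)
      (by rw [ZMod.natCast_zmod_val, Units.val_inv_eq_inv_val])]
    simp only [map_mul, map_pow]
  · simp

theorem truth_xt (hR : StRep F S) (hs : V.s = S (pt p 0)) (hx : V.x = F (px p))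
    (hw : V.w = F (pw p)) : V.Sinf = S none ∧ V.xt = F (pxt p) := by
  have i0 : V.Sinf = S none := by
    rw [Sinf, hw, hs, hR.conj]; congr 1; simp [pt]
  refine ⟨i0, ?_⟩
  rw [xt, i0, hs, hR.sw _ _ (by simp [pt]), hx, pxt, map_mul]

theorem truth1' (hR : StRep F S) (h4 : 4 * M < p) (hM : Odd M) {e gg g gi hh N : ℕ}
    (he : 4 * M + e = p)
    (hs : V.s = S (pt p 0)) (hx : V.x = F (px p)) (hw : V.w = F (pw p))
    (hb : V.b = F (pb h4)) (hθ : V.θ = F (pθ h4)) (hT : V.T = F (pT h4 hM))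
    (hP : V.Pow p gg g gi hh M N) :
    Holds (V.rels1' e) := by
  obtain ⟨i0, ixt⟩ := truth_xt hR hs hx hw
  have hM0 := NeZero.pos M
  have iSM : ∀ j, V.SM j = S (pt p (j * M)) := by
    intro j
    rw [SM, hP.XM, hx, hs, ← map_pow, ← map_pow, hR.conj, ← pow_mul, pt, px_pow_some]
    congr 1
    simp [pt, mul_comm]
  have ia : ∀ k, k * M < p → V.a k = F (pa p M k) := by
    intro k
    induction k with
    | zero => intro _; exact ixt
    | succ k ih =>
      intro hk
      have e : (k + 1) * M = k * M + M := by ring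
      rw [a, ih (by omega), iSM, iSM, hR.sw _ _ (fun h => by
        have := pt_inj (by omega) (by omega) h
        omega), pa, map_mul]
  have ia1 := ia 1 (by omega)
  have ia2 := ia 2 (by omega)
  have ia3 := ia 3 (by omega)
  have ia4 := ia 4 (by omega)
  have iD : V.D = F (pD h4) := by
    rw [D, hP.XM, hx, hθ, pD]; simp only [map_mul, map_inv, map_pow]
  have ibj : ∀ j, V.bj j = F (pbj h4 j) := by
    intro j
    rw [bj, hP.XM, hx, hb, pbj]; simp only [map_mul, map_inv, map_pow]
  have ie : V.ebis = F (pebis h4) := by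
    rw [ebis, hb, ibj, ia2, pebis]; simp only [map_mul, map_inv]
  have ir : V.rest = F (prest h4) := by
    rw [rest, hb, ibj, ibj, ibj, ia4, prest]; simp only [map_mul, map_inv]
  have pc : ∀ {π η : Perm (Option (ZMod p))}, (∀ ω, π (η ω) = η (π ω)) → F π * F η * (F π)⁻¹ = F η := by
    intro π η h
    rw [← map_inv, ← map_mul, ← map_mul, conj_of_comm h]
  simp only [Holds, rels1', List.forall_mem_cons]
  refine ⟨?_, ?_, ?_, ?_, ?_, ?_, ?_, ?_, ?_, ?_, ?_, ?_, ?_, ?_, ?_, ?_, ?_⟩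
  · rw [hb, ia1, pc (f17 h4)]
  · rw [hb, hs, ia1, hR.conj, hR.conj, f18]
  · rw [hb, i0, hR.conj, f19]
  · rw [hθ, ia3, pc (f20 h4)]
  · rw [hθ, hs, iSM, hR.conj, f21]
  · rw [hθ, iSM, iSM, hR.conj, f22]
  · rw [hθ, i0, hR.conj, f23]
  · rw [hθ, ← map_mul, ← map_mul, f24, map_one]
  · rw [iD, ← map_mul, f25, map_one]
  · rw [hT, hb, ← map_inv, ← map_mul, ← map_mul, f26, map_mul]
  · rw [hT, ie, pc (f27 h4 hM)]
  · rw [hT, hs, hR.conj, f28]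
  · rw [hT, i0, hR.conj, f29]
  · rw [hT, iD, ← map_inv, ← map_mul, ← map_mul, ← map_mul, f30, map_one]
  · have := congrArg F (f31 h4 hM)
    rw [map_one] at this
    rw [hT, hθ, ← this]
    simp only [map_mul, map_inv]
  · rw [ir, ← map_pow, f32 h4 he, map_one]
  · simp
end W

open Equiv
set_option linter.unusedSectionVars false
set_option linter.unusedVariables false

section
variable {A Ω : Type} (e : Fin 4 × A ↪ Ω) (ρ : Perm A)

theorem gen30 : PP e (swap 0 1 * swap 2 3) * (vv e 0 ρ * (vv e 1 ρ)⁻¹) *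
    (PP e (swap 0 1 * swap 2 3))⁻¹ * (vv e 0 ρ * (vv e 1 ρ)⁻¹) = 1 := by
  set P := PP e (swap 0 1 * swap 2 3) with hP
  have h0 : P * vv e 0 ρ * P⁻¹ = vv e 1 ρ := vv_PP _ _ _ _
  have h1 : P * vv e 1 ρ * P⁻¹ = vv e 0 ρ := vv_PP _ _ _ _
  calc _ = (P * vv e 0 ρ * P⁻¹) * (P * vv e 1 ρ * P⁻¹)⁻¹ * (vv e 0 ρ * (vv e 1 ρ)⁻¹) := by group
    _ = 1 := by rw [h0, h1]; group

theorem gen31 : (vv e 0 ρ * (vv e 1 ρ)⁻¹) * (PP e c3 * (vv e 0 ρ * (vv e 1 ρ)⁻¹) * (PP e c3)⁻¹) *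
    (PP e c3 * PP e c3 * (vv e 0 ρ * (vv e 1 ρ)⁻¹) * (PP e c3 * PP e c3)⁻¹) = 1 := by
  set P := PP e c3 with hP
  have h0 : P * vv e 0 ρ * P⁻¹ = vv e 1 ρ := vv_PP _ _ _ _
  have h1 : P * vv e 1 ρ * P⁻¹ = vv e 2 ρ := vv_PP _ _ _ _
  have h2 : P * vv e 2 ρ * P⁻¹ = vv e 0 ρ := vv_PP _ _ _ _
  have e1 : P * (vv e 0 ρ * (vv e 1 ρ)⁻¹) * P⁻¹ = vv e 1 ρ * (vv e 2 ρ)⁻¹ := by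
    calc _ = (P * vv e 0 ρ * P⁻¹) * (P * vv e 1 ρ * P⁻¹)⁻¹ := by group
      _ = _ := by rw [h0, h1]
  have e2 : P * P * (vv e 0 ρ * (vv e 1 ρ)⁻¹) * (P * P)⁻¹ = vv e 2 ρ * (vv e 0 ρ)⁻¹ := by
    calc _ = P * (P * (vv e 0 ρ * (vv e 1 ρ)⁻¹) * P⁻¹) * P⁻¹ := by group
      _ = (P * vv e 1 ρ * P⁻¹) * (P * vv e 2 ρ * P⁻¹)⁻¹ := by rw [e1]; group
      _ = _ := by rw [h1, h2]
  rw [e1, e2]; group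

theorem gen_zeta : PP e c3 * (vv e 0 ρ * (vv e 1 ρ)⁻¹) * (PP e c3)⁻¹ =
    vv e 1 ρ * (vv e 2 ρ)⁻¹ := by
  set P := PP e c3 with hP
  have h0 : P * vv e 0 ρ * P⁻¹ = vv e 1 ρ := vv_PP _ _ _ _
  have h1 : P * vv e 1 ρ * P⁻¹ = vv e 2 ρ := vv_PP _ _ _ _
  calc _ = (P * vv e 0 ρ * P⁻¹) * (P * vv e 1 ρ * P⁻¹)⁻¹ := by group
    _ = _ := by rw [h0, h1]
end

section
variable {p : ℕ} [Fact p.Prime] {N : ℕ} [NeZero N]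

/-- permutations of the line acting on the points of stage 2 -/
noncomputable def LL (p N : ℕ) : Perm (Option (ZMod p)) →* Perm (Om2 p N) :=
  via Function.Embedding.inl

theorem LL_inl (π : Perm (Option (ZMod p))) (ω) : LL p N π (.inl ω) = .inl (π ω) :=
  via_apply (e := Function.Embedding.inl) π ω
theorem LL_inr (π : Perm (Option (ZMod p))) (r) : LL p N π (.inr r) = .inr r :=
  via_notMem (e := Function.Embedding.inl) π (fun a h => by cases h)
theorem LL_swap (a b : Option (ZMod p)) : LL p N (swap a b) = swap (.inl a) (.inl b) := by
  ext1 ω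
  rcases ω with ω | r
  · rw [LL_inl]; exact Sum.inl_injective.map_swap a b ω
  · rw [LL_inr, swap_apply_of_ne_of_ne (by simp) (by simp)]

theorem LL_comm {π : Perm (Om2 p N)} (hπ : ∀ ω, π (.inl ω) = .inl ω) (η : Perm (Option (ZMod p))) :
    π * LL p N η * π⁻¹ = LL p N η := by
  rw [mul_inv_eq_iff_eq_mul]
  ext1 ω
  simp only [Perm.mul_apply]
  rcases ω with ω | r
  · rw [LL_inl, hπ, hπ, LL_inl]
  · rw [LL_inr]
    have : ∃ r', π (.inr r) = .inr r' := by
      rcases h : π (.inr r) with a | r'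
      · rw [← hπ a] at h
        cases π.injective h
      · exact ⟨r', rfl⟩
    obtain ⟨r', h⟩ := this
    rw [h, LL_inr]

variable (h2 : 2 * N < p)

theorem g33 (ω) : pBB h2 (LL p N (pa p N 1) ω) = LL p N (pa p N 1) (pBB h2 ω) := by
  have h1 : 1 * N < p := by omega
  rcases ω with ω | r | r
  · rw [LL_inl]
    rcases rest0 h1 ω with ⟨r, rfl⟩ | ⟨h, n, hn⟩
    · rw [pa_qq h1 (by omega), pBB_0, pBB_0, LL_inl, pa_qq h1 (by omega)]
    · rw [pBB_rest h2 ω h, LL_inl, pBB_rest]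
      exact pa_rest h1 (fun j hj r => by
        obtain rfl : j = 0 := by omega
        exact h r) 0 (by omega)
  · rw [LL_inr, pBB_1, LL_inr]
  · rw [LL_inr, pBB_2, LL_inr]

theorem g41 (ω) : pBB h2 (pTh h2 (LL p N (pa p N 1) ω)) = LL p N (pa p N 1) (pTh h2 ω) := by
  have h1 : 1 * N < p := by omega
  rcases ω with ω | r | r
  · rw [LL_inl]
    rcases rest0 h1 ω with ⟨r, rfl⟩ | ⟨h, n, hn⟩
    · rw [pa_qq h1 (by omega), pTh_0, pBB_1, pTh_0, LL_inr, add_sub_cancel_right]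
    · have h' : ∀ r, qq p N 0 r ≠ pa p N 1 ω := pa_rest h1 (fun j hj r => by
        obtain rfl : j = 0 := by omega
        exact h r) 0 (by omega)
      rw [pTh_rest h2 ω h, LL_inl, pTh_rest h2 _ h', pBB_rest h2 _ h']
  · rw [LL_inr, pTh_1, LL_inr, pBB_2]
  · rw [LL_inr, pTh_2, LL_inl, pBB_0, pa_qq h1 (by omega)]

noncomputable def pDD : Perm (Om2 p N) :=
  pTh h2 * (LL p N (px p ^ N) * pTh h2 * (LL p N (px p ^ N))⁻¹)

theorem pDD_eq : pDD h2 = PP (e2 h2) (swap 0 1 * swap 2 3) := by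
  have : LL p N (px p ^ N) * pTh h2 * (LL p N (px p ^ N))⁻¹ =
      PP (e2 h2) (swap 0 3 * c3 * (swap 0 3)⁻¹) := by
    refine PP_conj _ ?_
    intro j a hj
    fin_cases j
    · show LL p N (px p ^ N) (.inl (qq p N 0 a)) = .inl (qq p N 1 a)
      rw [LL_inl]
      have := kappa_qq (p := p) 0 a 1
      rw [pow_one] at this
      rw [this]
    · exact LL_inr _ _
    · exact LL_inr _ _
    · exact absurd rfl hj
  rw [pDD, this, pTh, ← PP_mul]
  congr 1
  decide
end

namespace W
variable {H : Type} [Group H] {V : W H} {p : ℕ} [Fact p.Prime] {N : ℕ} [NeZero N]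
  {E : Perm (Om2 p N) →* H} {S : Om2 p N → H}

theorem rep1 (hR : StRep E S) : StRep (E.comp (LL p N)) (fun ω => S (.inl ω)) := by
  refine ⟨?_, ?_, fun a => hR.sq _⟩
  · intro π ω
    show E (LL p N π) * _ * (E (LL p N π))⁻¹ = _
    rw [hR.conj, LL_inl]
  · intro a b hab
    rw [hR.sw _ _ (Sum.inl_injective.ne hab)]
    show _ = E (LL p N _)
    rw [LL_swap]

theorem truth2 (hR : StRep E S) (h2 : 2 * N < p) (p3 : 3 < p) 
    (hs : V.s = S (.inl (pt p 0))) (hx : V.x = E (LL p N (px p))) (hw : V.w = E (LL p N (pw p)))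
    (hB : V.B = E (pBB h2)) (hΘ : V.Θ = E (pTh h2)) (hXN : V.XN = V.x ^ N) :
    Holds V.rels2 ∧ V.Sinf = S (.inl none) ∧ V.xt = E (LL p N (pxt p)) ∧
      V.α = E (LL p N (swap (pt p 0) (pt p 1))) ∧ ∀ ω, V.st2 p N ω = S ω := by
  obtain ⟨i0, ixt⟩ := truth_xt (rep1 hR) hs hx hw
  have hN := NeZero.pos N
  have c : ∀ π, (E.comp (LL p N)) π = E (LL p N π) := fun _ => rfl
  rw [c] at ixt
  have iSN : V.SN = S (.inl (pt p N)) := by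
    rw [SN, hXN, hx, hs, ← map_pow, ← map_pow, hR.conj, LL_inl, pt, px_pow_some]
    simp [pt]
  have iS1 : V.S1 = S (.inl (pt p 1)) := by
    rw [S1, hx, hs, hR.conj, LL_inl]; simp [pt]
  have ia : V.a' = E (LL p N (pa p N 1)) := by
    rw [a', iSN, hs, ixt, hR.sw _ _ (fun h => by
      have := pt_inj (by omega) (by omega) (Sum.inl_injective h)
      omega), ← LL_swap, ← map_mul, ← map_mul]
    simp [pa]
  have iα : V.α = E (LL p N (swap (pt p 0) (pt p 1))) := by
    rw [α, iS1, hs, hR.sw _ _ (fun h => by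
      have := pt_inj (by omega) (by omega) (Sum.inl_injective h)
      omega), ← LL_swap]
  have iD : V.D' = E (pDD h2) := by
    rw [D', hXN, hx, hΘ, pDD]; simp only [map_mul, map_inv, map_pow]
  have q0 : qq p N 0 (0 : ZMod N) = pt p 0 := by rw [qq_zero, zero_mul]
  have i01 : V.s01 = S (.inr (.inl 0)) := by
    rw [s01, hΘ, hs, hR.conj, ← q0, pTh_0]
  have i02 : V.s02 = S (.inr (.inr 0)) := by
    rw [s02, hΘ, hs, ← map_mul, hR.conj, Perm.mul_apply, ← q0, pTh_0, pTh_1]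
  set pz : Perm (Om2 p N) := pTh h2 * pBB h2 * (pTh h2)⁻¹ with hpz
  have iζ : V.ζ = E pz := by
    rw [ζ, hΘ, hB, hpz]; simp only [map_mul, map_inv]
  have pzl : ∀ ω, pz (.inl ω) = .inl ω := by
    intro ω
    rw [hpz, pTh, pBB, gen_zeta, ← map_inv, Perm.mul_apply, vv_notMem (e2 h2) 2 _ (ω := Sum.inl ω),
      vv_notMem]
    · intro a e; cases e
    · intro a e; cases e
  have pn : pBB h2 (.inl none) = .inl none := pBB_rest h2 _ (fun r => pt_ne_none _)
  have Θn : pTh h2 (.inl none) = .inl none := pTh_rest h2 _ (fun r => pt_ne_none _)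
  refine ⟨?_, i0, ixt, iα, ?_⟩
  · simp only [Holds, rels2, List.forall_mem_cons]
    refine ⟨?_, ?_, ?_, ?_, ?_, ?_, ?_, ?_, ?_, ?_, ?_, ?_, ?_, ?_, ?_, ?_⟩
    · rw [hB, ia, mul_inv_eq_iff_eq_mul, ← map_mul, ← map_mul]
      congr 1
      ext1 ω; exact g33 h2 ω
    · rw [hB, hs, ia, hR.conj, hR.conj, ← q0, pBB_0, LL_inl, pa_qq (by omega) (by omega)]
    · rw [hB, i0, hR.conj, pn]
    · have := congrArg E (gen30 (e2 h2) (rot N))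
      rw [map_one] at this
      rw [iD, hB, ← this, pDD_eq, pBB]
      simp only [map_mul, map_inv]
    · have := congrArg E (gen31 (e2 h2) (rot N))
      rw [map_one] at this
      rw [ζ, hΘ, hB, ← this, pTh, pBB]
      simp only [map_mul, map_inv]
    · rw [iζ, ixt, ← map_inv, ← map_mul, ← map_mul, LL_comm pzl]
    · rw [iζ, hs, hR.conj, pzl]
    · rw [hΘ, ← map_mul, ← map_mul, pTh, ← PP_mul, ← PP_mul,
        show c3 * c3 * c3 = 1 by decide, PP_one, map_one]
    · rw [hΘ, ia, hB, mul_inv_eq_iff_eq_mul, mul_assoc, eq_inv_mul_iff_mul_eq, ← map_mul, ← map_mul,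
        ← map_mul]
      congr 1
      ext1 ω; exact g41 h2 ω
    · rw [hΘ, i0, hR.conj, Θn]
    · rw [iD, ← map_mul, pDD_eq, ← PP_mul,
        show (swap 0 1 * swap 2 3 * (swap 0 1 * swap 2 3) : Perm (Fin 4)) = 1 by decide, PP_one,
        map_one]
    · rw [i01, ixt, hR.conj, LL_inr]
    · rw [i01, iα, hR.conj, LL_inr]
    · rw [i02, ixt, hR.conj, LL_inr]
    · rw [i02, iα, hR.conj, LL_inr]
    · simp
  · have st1 : ∀ ω, V.st p ω = S (.inl ω) := by
      rintro (_ | i)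
      · exact i0
      · rw [st, hx, hs, ← map_pow, ← map_pow, hR.conj, LL_inl, pt, px_pow_some]
        simp
    rintro (ω | r | r)
    · exact st1 ω
    · show V.Θ * V.st p (qq p N 0 r) * V.Θ⁻¹ = _
      rw [st1, hΘ, hR.conj, pTh_0]
    · show V.Θ * (V.Θ * V.st p (qq p N 0 r) * V.Θ⁻¹) * V.Θ⁻¹ = _
      rw [st1, hΘ, hR.conj, hR.conj, pTh_0, pTh_1]

/-- the model -/
noncomputable def mdl (E : Perm (Om2 p N) →* H) (S : Om2 p N → H) (zz : H) (u v : (ZMod p)ˣ)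
    {M e : ℕ} [NeZero M] (hp : Par p u M N e) (hh : ℕ) : W H :=
  let X := E (LL p N (px p))
  { s := S (.inl (pt p 0)), x := X, t := E (LL p N (pmul (v ^ 2))), h := E (LL p N (pmul (u ^ 2))),
    w := E (LL p N (pw p)), b := E (LL p N (pb hp.M4)), θ := E (LL p N (pθ hp.M4)),
    T := E (LL p N (pT hp.M4 hp.odd)), B := E (pBB hp.N2), Θ := E (pTh hp.N2), z := zz,
    Xp := X ^ p, Xgg := X ^ (u ^ 2 : ZMod p).val, Xg := X ^ (u : ZMod p).val,
    Xgi := X ^ ((u⁻¹ : (ZMod p)ˣ) : ZMod p).val, Xh := X ^ hh, XM := X ^ M, XN := X ^ N }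

theorem truth (hR : StRep E S) {zz : H} {u v : (ZMod p)ˣ} {M e : ℕ} [NeZero M]
    (hp : Par p u M N e) (hv : (v : ZMod p) = 2) {hh : ℕ} (hhh : (hh : ZMod p) = (v : ZMod p)⁻¹)
    (δ : Bool) (hz0 : δ = false → zz = 1) (hz1 : δ = true → zz * zz = 1)
    (hz2 : δ = true → ∀ ω, S ω * zz * S ω = zz * S ω * zz)
    (hz3 : δ = true → ∀ π, E π * zz * (E π)⁻¹ = zz) :
    Holds ((mdl E S zz u v hp hh).rels e δ) ∧
    (mdl E S zz u v hp hh).Pow p (u ^ 2 : ZMod p).val (u : ZMod p).val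
      ((u⁻¹ : (ZMod p)ˣ) : ZMod p).val hh M N ∧
    ∀ ω, (mdl E S zz u v hp hh).st2 p N ω = S ω := by
  set V := mdl E S zz u v hp hh with hV
  have hP : V.Pow p (u ^ 2 : ZMod p).val (u : ZMod p).val
      ((u⁻¹ : (ZMod p)ˣ) : ZMod p).val hh M N := ⟨rfl, rfl, rfl, rfl, rfl, rfl, rfl⟩
  obtain ⟨k2, i0, ixt, iα, hst⟩ := truth2 (V := V) hR hp.N2 hp.p3 rfl rfl rfl rfl rfl rfl
  refine ⟨(holds_rels_iff V e δ).2 ⟨?_, ?_, k2, ?_⟩, hP, hst⟩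
  · exact truth1 (rep1 hR) u v hv hhh rfl rfl rfl rfl rfl hP
  · exact truth1' (rep1 hR) hp.M4 hp.odd hp.eq rfl rfl rfl rfl rfl rfl hP
  · cases δ with
    | false =>
      simp only [Holds, relsz, List.forall_mem_cons]
      exact ⟨hz0 rfl, by simp⟩
    | true =>
      simp only [Holds, relsz, List.forall_mem_cons]
      refine ⟨hz1 rfl, ?_, ?_, ?_, ?_, by simp⟩
      · rw [i0]; exact hz2 rfl _
      · rw [ixt]; exact hz3 rfl _
      · rw [iα]; exact hz3 rfl _
      · exact hz3 rfl _
end W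

open Equiv
set_option linter.unusedSectionVars false
set_option linter.unusedVariables false

section
variable {Ω : Type} [Fintype Ω] [DecidableEq Ω]

theorem closure_stars : Subgroup.closure (Set.range (fun ω : Ω => swap none (some ω))) =
    (⊤ : Subgroup (Perm (Option Ω))) := by
  rw [eq_top_iff, ← Perm.closure_isSwap, Subgroup.closure_le]
  have hs : ∀ ω : Ω, swap none (some ω) ∈
      Subgroup.closure (Set.range (fun ω : Ω => swap none (some ω))) :=
    fun ω => Subgroup.subset_closure ⟨ω, rfl⟩
  rintro σ ⟨a, b, hab, rfl⟩
  rcases a with _ | a <;> rcases b with _ | b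
  · exact absurd rfl hab
  · exact hs b
  · rw [swap_comm]; exact hs a
  · have : swap (some a) (some b) = swap none (some a) * swap none (some b) *
        (swap none (some a) : Perm (Option Ω))⁻¹ := by
      rw [← swap_apply_apply, swap_apply_left, swap_apply_of_ne_of_ne (by simp) hab.symm]
    rw [this]
    exact mul_mem (mul_mem (hs a) (hs b)) (inv_mem (hs a))

/-- the criterion for a presentation -/
theorem present {m : ℕ} (ψ : FreeGroup (Fin m) →* Perm (Option Ω)) (R : Set (FreeGroup (Fin m)))
    (hR : ∀ r ∈ R, ψ r = 1) (st : Ω → FreeGroup (Fin m))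
    (hst : ∀ ω, ψ (st ω) = swap none (some ω))
    (hs : StarRel (fun ω => QuotientGroup.mk' (Subgroup.normalClosure R) (st ω)))
    (hin : ∀ i, QuotientGroup.mk' (Subgroup.normalClosure R) (FreeGroup.of i) ∈
      Subgroup.closure (Set.range
        (fun ω => QuotientGroup.mk' (Subgroup.normalClosure R) (st ω)))) :
    Function.Surjective ψ ∧ ψ.ker = Subgroup.normalClosure R := by
  have hle : Subgroup.normalClosure R ≤ ψ.ker := Subgroup.normalClosure_le_normal
    (fun r hr => hR r hr)
  constructor
  · rw [← MonoidHom.range_eq_top, eq_top_iff, ← closure_stars, Subgroup.closure_le]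
    rintro _ ⟨ω, rfl⟩
    exact ⟨st ω, hst ω⟩
  · refine le_antisymm ?_ hle
    intro g hg
    set q := QuotientGroup.mk' (Subgroup.normalClosure R) with hq
    let φ := QuotientGroup.lift (Subgroup.normalClosure R) ψ hle
    have hφ : ∀ g, φ (q g) = ψ g := fun g => rfl
    have all : ∀ g, q g ∈ Subgroup.closure (Set.range (fun ω => q (st ω))) := by
      intro g
      have : g ∈ Subgroup.closure (Set.range (FreeGroup.of : Fin m → FreeGroup (Fin m))) := by
        rw [FreeGroup.closure_range_of]; trivial
      induction this using Subgroup.closure_induction with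
      | mem x hx => obtain ⟨i, rfl⟩ := hx; exact hin i
      | one => rw [map_one]; exact one_mem _
      | mul x y _ _ hx hy => rw [map_mul]; exact mul_mem hx hy
      | inv x _ hx => rw [map_inv]; exact inv_mem hx
    have := hs.faithful φ (fun ω => hst ω) Finset.univ (q g) (by simpa using all g) hg
    exact (QuotientGroup.eq_one_iff g).1 this
end

theorem HasBoundedPresentation.mono {G : Type} [Group G] {g r : ℕ} {L L' : ℝ}
    (h : HasBoundedPresentation G g r L) (hL : L ≤ L') : HasBoundedPresentation G g r L' := by
  obtain ⟨m, π, R, h1, h2, h3, h4, h5⟩ := h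
  exact ⟨m, π, R, h1, h2, h3, h4, h5.trans hL⟩

theorem HasBoundedPresentation.equiv {G H : Type} [Group G] [Group H] (f : G ≃* H) {g r : ℕ} {L : ℝ}
    (h : HasBoundedPresentation G g r L) : HasBoundedPresentation H g r L := by
  obtain ⟨m, π, R, h1, h2, h3, h4, h5⟩ := h
  refine ⟨m, f.toMonoidHom.comp π, R, h1, f.surjective.comp h2, h3, ?_, h5⟩
  rw [← h4]
  ext x
  simp [MonoidHom.mem_ker]

section
variable {Ω Ψ : Type} [DecidableEq Ω] [DecidableEq Ψ]

/-- the standard representation on a larger set, the centre of the stars being `c` -/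
theorem stRep (ι : Ω ↪ Ψ) (c : Ψ) (hc : ∀ ω, ι ω ≠ c) :
    StRep (via ι) (fun ω => swap c (ι ω)) := by
  refine ⟨?_, ?_, ?_⟩
  · intro π ω
    rw [← swap_apply_apply, via_apply, via_notMem π hc]
  · intro a b hab
    have hab' : ι a ≠ ι b := ι.injective.ne hab
    have e : swap c (ι a) * swap c (ι b) * swap c (ι a) = swap (ι a) (ι b) := by
      have := swap_apply_apply (swap c (ι a)) c (ι b)
      rw [swap_apply_left, swap_apply_of_ne_of_ne (hc b) hab'.symm, swap_inv] at this
      exact this.symm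
    rw [e]
    ext1 ω
    by_cases hω : ∃ d, ι d = ω
    · obtain ⟨d, rfl⟩ := hω
      rw [via_apply]
      exact (ι.injective.map_swap a b d).symm
    · push Not at hω
      rw [via_notMem _ hω, swap_apply_of_ne_of_ne (hω a).symm (hω b).symm]
  · intro a; exact swap_mul_self _ _
end

/-- a short word for `x ^ n` -/
def hw {H : Type} [Group H] (t x : H) (n : ℕ) : H :=
  if hn : n = 0 then 1 else t * hw t x (n / 4) * t⁻¹ * x ^ (n % 4)
termination_by n
decreasing_by omega

theorem hw_zero {H : Type} [Group H] (t x : H) : hw t x 0 = 1 := by rw [hw]; simp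
theorem hw_pos {H : Type} [Group H] (t x : H) {n : ℕ} (hn : n ≠ 0) :
    hw t x n = t * hw t x (n / 4) * t⁻¹ * x ^ (n % 4) := by rw [hw]; simp [hn]

theorem map_hw {H K : Type} [Group H] [Group K] (f : H →* K) (t x : H) (n : ℕ) :
    f (hw t x n) = hw (f t) (f x) n := by
  induction n using Nat.strong_induction_on with
  | _ n ih =>
    by_cases hn : n = 0
    · subst hn; simp [hw_zero]
    · rw [hw_pos _ _ hn, hw_pos _ _ hn]
      simp [ih (n / 4) (by omega)]

theorem hw_eq {H : Type} [Group H] {t x : H} (h : t * x * t⁻¹ = x ^ 4) (n : ℕ) :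
    hw t x n = x ^ n := by
  induction n using Nat.strong_induction_on with
  | _ n ih =>
    by_cases hn : n = 0
    · subst hn; simp [hw_zero]
    · rw [hw_pos _ _ hn, ih (n / 4) (by omega), ← conj_pow, h, ← pow_mul, ← pow_add]
      congr 1; omega

theorem fnorm_pow_le {α : Type} [DecidableEq α] (x : FreeGroup α) (k : ℕ) :
    (x ^ k).norm ≤ k * x.norm := by
  induction k with
  | zero => simp
  | succ k ih =>
    rw [pow_succ]
    have := FreeGroup.norm_mul_le (x ^ k) x
    nlinarith

theorem norm_hw {m : ℕ} (i j : Fin m) (n : ℕ) :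
    (hw (FreeGroup.of i) (FreeGroup.of j) n).norm ≤ 5 * (Nat.log 2 n + 1) := by
  induction n using Nat.strong_induction_on with
  | _ n ih =>
    by_cases hn : n = 0
    · subst hn; simp [hw_zero]
    · have hx : (FreeGroup.of j ^ (n % 4)).norm ≤ 3 := by
        refine (fnorm_pow_le _ _).trans ?_
        rw [FreeGroup.norm_of]; omega
      have key : (hw (FreeGroup.of i) (FreeGroup.of j) n).norm ≤
          (hw (FreeGroup.of i) (FreeGroup.of j) (n / 4)).norm + 5 := by
        rw [hw_pos _ _ hn]
        have h1 := FreeGroup.norm_mul_le (FreeGroup.of i * hw (FreeGroup.of i) (FreeGroup.of j) (n / 4) * (FreeGroup.of i)⁻¹) (FreeGroup.of j ^ (n % 4))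
        have h2 := FreeGroup.norm_mul_le (FreeGroup.of i * hw (FreeGroup.of i) (FreeGroup.of j) (n / 4)) ((FreeGroup.of i)⁻¹)
        have h3 := FreeGroup.norm_mul_le (FreeGroup.of i) (hw (FreeGroup.of i) (FreeGroup.of j) (n / 4))
        rw [FreeGroup.norm_inv_eq] at h2
        rw [FreeGroup.norm_of] at h2 h3
        omega
      rcases lt_or_ge n 4 with h4 | h4
      · have : n / 4 = 0 := by omega
        rw [this, hw_zero, FreeGroup.norm_one] at key
        omega
      · have h5 := ih (n / 4) (by omega)
        have h6 : Nat.log 2 (n / 4) + 1 ≤ Nat.log 2 n := by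
          have e1 : Nat.log 2 (n / 2) = Nat.log 2 n - 1 := Nat.log_div_base 2 n
          have e2 : Nat.log 2 (n / 4) ≤ Nat.log 2 (n / 2) := Nat.log_mono_right (by omega)
          have e3 : 0 < Nat.log 2 n := Nat.log_pos (by norm_num) (by omega)
          omega
        omega

theorem norm_lift_le {k m B : ℕ} (f : Fin k → FreeGroup (Fin m)) (hf : ∀ i, (f i).norm ≤ B)
    (u : FreeGroup (Fin k)) : (FreeGroup.lift f u).norm ≤ u.norm * B := by
  have key : ∀ L : List (Fin k × Bool),
      (FreeGroup.lift f (FreeGroup.mk L)).norm ≤ L.length * B := by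
    intro L
    induction L with
    | nil => simp [← FreeGroup.one_eq_mk]
    | cons a L ih =>
      have e : FreeGroup.mk (a :: L) = FreeGroup.mk [a] * FreeGroup.mk L := by
        rw [FreeGroup.mul_mk]; rfl
      rw [e, map_mul]
      have h1 := FreeGroup.norm_mul_le (FreeGroup.lift f (FreeGroup.mk [a])) (FreeGroup.lift f (FreeGroup.mk L))
      have h2 : (FreeGroup.lift f (FreeGroup.mk [a])).norm ≤ B := by
        obtain ⟨i, b⟩ := a
        cases b
        · have : FreeGroup.lift f (FreeGroup.mk [(i, false)]) = (f i)⁻¹ := by simp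
          rw [this, FreeGroup.norm_inv_eq]; exact hf i
        · have : FreeGroup.lift f (FreeGroup.mk [(i, true)]) = f i := by simp
          rw [this]; exact hf i
      rw [List.length_cons]
      nlinarith
  have := key u.toWord
  rwa [FreeGroup.mk_toWord] at this

open Equiv
set_option linter.unusedSectionVars false
set_option linter.unusedVariables false

namespace W

/-- the eighteen letters -/
def V18 : W (FreeGroup (Fin 18)) :=
  ⟨.of 0, .of 1, .of 2, .of 3, .of 4, .of 5, .of 6, .of 7, .of 8, .of 9, .of 10, .of 11, .of 12,
    .of 13, .of 14, .of 15, .of 16, .of 17⟩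

/-- the words for the eighteen letters in eleven generators -/
def words (p gg g gi h M N : ℕ) : Fin 18 → FreeGroup (Fin 11) :=
  ![.of 0, .of 1, .of 2, .of 3, .of 4, .of 5, .of 6, .of 7, .of 8, .of 9, .of 10,
    hw (.of 2) (.of 1) p, hw (.of 2) (.of 1) gg, hw (.of 2) (.of 1) g, hw (.of 2) (.of 1) gi,
    hw (.of 2) (.of 1) h, hw (.of 2) (.of 1) M, hw (.of 2) (.of 1) N]

def V0 (p gg g gi h M N : ℕ) : W (FreeGroup (Fin 11)) := 
  V18.map (FreeGroup.lift (words p gg g gi h M N))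

def gens {H : Type} (V : W H) : Fin 11 → H :=
  ![V.s, V.x, V.t, V.h, V.w, V.b, V.θ, V.T, V.B, V.Θ, V.z]

theorem V0_map {H : Type} [Group H] (V : W H) (p gg g gi h M N : ℕ)
    (hP : V.Pow p gg g gi h M N) (ht : V.t * V.x * V.t⁻¹ = V.x ^ 4) :
    (V0 p gg g gi h M N).map (FreeGroup.lift V.gens) = V := by
  obtain ⟨h1, h2, h3, h4, h5, h6, h7⟩ := hP
  obtain ⟨s, x, t, h, w, b, θ, T, B, Θ, z, Xp, Xgg, Xg, Xgi, Xh, XM, XN⟩ := V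
  simp only at h1 h2 h3 h4 h5 h6 h7 ht
  subst h1 h2 h3 h4 h5 h6 h7
  simp [V0, W.map, V18, words, map_hw, gens, hw_eq ht]

theorem V0_pow {H : Type} [Group H] (f : FreeGroup (Fin 11) →* H) (p gg g gi h M N : ℕ)
    (ht : f (.of 2) * f (.of 1) * (f (.of 2))⁻¹ = f (.of 1) ^ 4) :
    ((V0 p gg g gi h M N).map f).Pow p gg g gi h M N := by
  constructor <;> simp [V0, W.map, V18, words, map_hw, hw_eq ht]

theorem norm_words {p gg g gi h M N n : ℕ} (h1 : p ≤ n) (h2 : gg ≤ n) (h3 : g ≤ n) (h4 : gi ≤ n)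
    (h5 : h ≤ n) (h6 : M ≤ n) (h7 : N ≤ n) (i : Fin 18) :
    (words p gg g gi h M N i).norm ≤ 5 * (Nat.log 2 n + 1) := by
  have k : ∀ a, a ≤ n → (hw (FreeGroup.of (2 : Fin 11)) (.of 1) a).norm ≤ 5 * (Nat.log 2 n + 1) := by
    intro a ha
    refine (norm_hw _ _ _).trans ?_
    have := Nat.log_mono_right (b := 2) ha
    omega
  have k' : ∀ a : Fin 11, (FreeGroup.of a).norm ≤ 5 * (Nat.log 2 n + 1) := by
    intro a; rw [FreeGroup.norm_of]; omega
  fin_cases i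
  exacts [k' _, k' _, k' _, k' _, k' _, k' _, k' _, k' _, k' _, k' _, k' _,
    k _ h1, k _ h2, k _ h3, k _ h4, k _ h5, k _ h6, k _ h7]

/-- total length of the relators in the eighteen letters -/
def len18 (e : ℕ) (δ : Bool) : ℕ :=
  ((V18.rels e δ).map (fun q => (q.1 * q.2⁻¹).norm)).sum

def relators {m : ℕ} (V : W (FreeGroup (Fin m))) (e : ℕ) (δ : Bool) : Finset (FreeGroup (Fin m)) :=
  ((V.rels e δ).map (fun q => q.1 * q.2⁻¹)).toFinset

theorem card_relators {m : ℕ} (V : W (FreeGroup (Fin m))) (e : ℕ) (δ : Bool) :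
    (V.relators e δ).card ≤ 58 := by
  refine (List.toFinset_card_le _).trans ?_
  rw [List.length_map]
  exact rels_length V e δ

theorem sum_toFinset_le {α : Type} [DecidableEq α] (f : α → ℕ) (l : List α) :
    ∑ w ∈ l.toFinset, f w ≤ (l.map f).sum := by
  induction l with
  | nil => simp
  | cons a l ih =>
    rw [List.toFinset_cons, List.map_cons, List.sum_cons]
    by_cases ha : a ∈ l.toFinset
    · rw [Finset.insert_eq_of_mem ha]; omega
    · rw [Finset.sum_insert ha]; omega

theorem sum_relators {p gg g gi h M N n : ℕ} (h1 : p ≤ n) (h2 : gg ≤ n) (h3 : g ≤ n) (h4 : gi ≤ n)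
    (h5 : h ≤ n) (h6 : M ≤ n) (h7 : N ≤ n) (e : ℕ) (δ : Bool) :
    ∑ w ∈ (V0 p gg g gi h M N).relators e δ, w.norm ≤ len18 e δ * (5 * (Nat.log 2 n + 1)) := by
  refine (sum_toFinset_le _ _).trans ?_
  rw [V0, map_rels, List.map_map, List.map_map, len18, ← List.sum_map_mul_right]
  refine List.sum_le_sum ?_
  intro q _
  have := norm_lift_le _ (norm_words h1 h2 h3 h4 h5 h6 h7) (q.1 * q.2⁻¹)
  simpa using this

theorem relators_holds {m : ℕ} {H : Type} [Group H] (V : W (FreeGroup (Fin m))) (e : ℕ) (δ : Bool)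
    (f : FreeGroup (Fin m) →* H) :
    Holds ((V.map f).rels e δ) ↔ ∀ r ∈ V.relators e δ, f r = 1 := by
  rw [map_rels]
  simp only [Holds, relators, List.mem_toFinset, List.mem_map, forall_exists_index, and_imp,
    forall_apply_eq_imp_iff₂, Prod.map_fst, Prod.map_snd, map_mul, map_inv, mul_inv_eq_one]

theorem In.gens {H : Type} [Group H] {V : W H} {S : Subgroup H} (hV : V.In S) (i : Fin 11) :
    V.gens i ∈ S := by
  fin_cases i
  exacts [hV.s, hV.x, hV.t, hV.h, hV.w, hV.b, hV.θ, hV.T, hV.B, hV.Θ, hV.z]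

theorem V0_gens {H : Type} [Group H] (f : FreeGroup (Fin 11) →* H) (p gg g gi h M N : ℕ) (i) :
    ((V0 p gg g gi h M N).map f).gens i = f (.of i) := by
  fin_cases i <;> simp [V0, W.map, V18, words, gens]

theorem arith_bound {n S K : ℕ} (h : S ≤ K * (5 * (Nat.log 2 n + 1))) :
    ((11 + S : ℕ) : ℝ) ≤ (11 + 5 * K : ℕ) * (1 + Real.logb 2 n) := by
  have b2 : (Nat.log 2 n : ℝ) ≤ Real.logb 2 n := by exact_mod_cast Real.natLog_le_logb n 2
  have b3 : 11 + S ≤ (11 + 5 * K) * (Nat.log 2 n + 1) := by nlinarith [Nat.zero_le (Nat.log 2 n)]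
  calc ((11 + S : ℕ) : ℝ) ≤ ((11 + 5 * K) * (Nat.log 2 n + 1) : ℕ) := by exact_mod_cast b3
    _ ≤ _ := by
        rw [Nat.cast_mul]
        apply mul_le_mul_of_nonneg_left _ (Nat.cast_nonneg _)
        push_cast; linarith

/-- the presentation attached to the family of stars `stf` -/
theorem main_gen {Ω : Type} [Fintype Ω] [DecidableEq Ω] {p gg g gi h M N n e : ℕ} {δ : Bool}
    (h1 : p ≤ n) (h2 : gg ≤ n) (h3 : g ≤ n) (h4 : gi ≤ n)
    (h5 : h ≤ n) (h6 : M ≤ n) (h7 : N ≤ n)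
    (stf : ∀ {G : Type} [Group G], W G → Ω → G)
    (stf_map : ∀ {G K : Type} [Group G] [Group K] (f : G →* K) (V : W G) (ω : Ω),
      stf (V.map f) ω = f (stf V ω))
    (final : ∀ {G : Type} [Group G] (V : W G), V.Pow p gg g gi h M N → Holds (V.rels e δ) →
      StarRel (stf V) ∧ V.In (Subgroup.closure (Set.range (stf V))))
    (Vm : W (Perm (Option Ω))) (hP : Vm.Pow p gg g gi h M N) (hm : Holds (Vm.rels e δ))
    (hst : ∀ ω, stf Vm ω = swap none (some ω)) :
    HasBoundedPresentation (Perm (Option Ω)) 18 58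
      ((11 + 5 * len18 e δ : ℕ) * (1 + Real.logb 2 n)) := by
  have first : ∀ {G : Type} [Group G] (V : W G), Holds (V.rels e δ) → 
      V.t * V.x * V.t⁻¹ = V.x ^ 4 := by
    intro G _ V hV
    exact ((holds_rels_iff V e δ).1 hV).1 (_, _) (by simp [rels1])
  set U := V0 p gg g gi h M N with hU
  have hUm : U.map (FreeGroup.lift Vm.gens) = Vm := V0_map Vm _ _ _ _ _ _ _ hP (first Vm hm)
  set R := U.relators e δ with hR
  set q := QuotientGroup.mk' (Subgroup.normalClosure (R : Set (FreeGroup (Fin 11)))) with hq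
  have hq1 : Holds ((U.map q).rels e δ) := by
    rw [relators_holds]
    intro r hr
    exact (QuotientGroup.eq_one_iff r).2 (Subgroup.subset_normalClosure hr)
  have hqP : (U.map q).Pow p gg g gi h M N := by
    apply V0_pow
    have := first _ hq1
    simpa [hU, V0, W.map, V18, words] using this
  obtain ⟨f1, f2⟩ := final _ hqP hq1
  have est : stf (U.map q) = fun ω => q (stf U ω) := funext fun ω => stf_map q U ω
  rw [est] at f1 f2
  obtain ⟨k1, k2⟩ := present (FreeGroup.lift Vm.gens) (R : Set (FreeGroup (Fin 11)))
    ((relators_holds U e δ _).1 (by rw [hUm]; exact hm)) (stf U)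
    (fun ω => by rw [← stf_map, hUm, hst]) f1
    (fun i => by
      have := f2.gens i
      rwa [V0_gens] at this)
  refine ⟨11, FreeGroup.lift Vm.gens, R, by norm_num, k1, card_relators _ _ _, k2, ?_⟩
  exact arith_bound (sum_relators h1 h2 h3 h4 h5 h6 h7 e δ)
end W

open Equiv
set_option linter.unusedSectionVars false
set_option linter.unusedVariables false

namespace W
variable {G K : Type} [Group G] [Group K]

theorem map_st (f : G →* K) (V : W G) (p : ℕ) (ω) : (V.map f).st p ω = f (V.st p ω) := by
  cases ω <;> simp [st, map_Sinf] <;> simp [W.map]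

theorem map_st2 (f : G →* K) (V : W G) (p N : ℕ) (ω) : (V.map f).st2 p N ω = f (V.st2 p N ω) := by
  rcases ω with ω | r | r <;> simp [st2, map_st] <;> simp [W.map]

theorem map_st3 (f : G →* K) (V : W G) (p N : ℕ) (ω) : (V.map f).st3 p N ω = f (V.st3 p N ω) := by
  rcases ω with _ | ω
  · rfl
  · exact map_st2 f V p N ω

section
variable {p : ℕ} [Fact p.Prime] {M N e : ℕ} [NeZero M] [NeZero N] {u : (ZMod p)ˣ}

theorem big_false (hp : Par p u M N e) {n : ℕ} (hn : p + 1 + 2 * N + 1 = n) :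
    HasBoundedPresentation (Perm (Fin n)) 18 58
      ((11 + 5 * len18 e false : ℕ) * (1 + Real.logb 2 n)) := by
  have p3 := hp.p3
  have h2 : (2 : ZMod p) ≠ 0 := by
    intro h
    have : ((2 : ℕ) : ZMod p) = 0 := by exact_mod_cast h
    rw [ZMod.natCast_eq_zero_iff] at this
    have := Nat.le_of_dvd (by norm_num) this
    omega
  have hodd : p % 2 = 1 := (Nat.Prime.eq_two_or_odd (Fact.out : p.Prime)).resolve_left (by omega)
  have hhh : (((p + 1) / 2 : ℕ) : ZMod p) = ((Units.mk0 (2 : ZMod p) h2 : (ZMod p)ˣ) : ZMod p)⁻¹ := by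
    rw [Units.val_mk0]
    apply eq_inv_of_mul_eq_one_left
    have : ((p + 1) / 2) * 2 = p + 1 := by omega
    have h : ((((p + 1) / 2 * 2 : ℕ)) : ZMod p) = ((p + 1 : ℕ) : ZMod p) := by rw [this]
    push_cast at h
    simpa using h
  have hR : StRep (via (Function.Embedding.some : Om2 p N ↪ _)) (fun ω => swap none (some ω)) :=
    stRep _ none (by simp)
  obtain ⟨t1, t2, t3⟩ := truth hR (zz := 1) (v := Units.mk0 2 h2) hp rfl hhh false
    (fun _ => rfl) (by simp) (by simp) (by simp)
  have hlt : ∀ a : ZMod p, a.val ≤ n := fun a => by have := ZMod.val_lt a; omega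
  have m4 := hp.M4
  have n2 := hp.N2
  have main := main_gen (n := n) (Ω := Om2 p N) (by omega) (hlt _) (hlt _) (hlt _) (by omega)
    (by omega) (by omega) (fun V => V.st2 p N) (fun f V ω => map_st2 f V p N ω)
    (fun V hV hr => final_false hp hV hr) _ t2 t1 t3
  refine main.equiv (Equiv.permCongrHom (Fintype.equivFinOfCardEq ?_))
  simp [ZMod.card]
  omega

theorem big_true (hp : Par p u M N e) {n : ℕ} (hn : p + 1 + 2 * N + 2 = n) :
    HasBoundedPresentation (Perm (Fin n)) 18 58
      ((11 + 5 * len18 e true : ℕ) * (1 + Real.logb 2 n)) := by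
  have p3 := hp.p3
  have h2 : (2 : ZMod p) ≠ 0 := by
    intro h
    have : ((2 : ℕ) : ZMod p) = 0 := by exact_mod_cast h
    rw [ZMod.natCast_eq_zero_iff] at this
    have := Nat.le_of_dvd (by norm_num) this
    omega
  have hodd : p % 2 = 1 := (Nat.Prime.eq_two_or_odd (Fact.out : p.Prime)).resolve_left (by omega)
  have hhh : (((p + 1) / 2 : ℕ) : ZMod p) = ((Units.mk0 (2 : ZMod p) h2 : (ZMod p)ˣ) : ZMod p)⁻¹ := by
    rw [Units.val_mk0]
    apply eq_inv_of_mul_eq_one_left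
    have : ((p + 1) / 2) * 2 = p + 1 := by omega
    have h : ((((p + 1) / 2 * 2 : ℕ)) : ZMod p) = ((p + 1 : ℕ) : ZMod p) := by rw [this]
    push_cast at h
    simpa using h
  let ι : Om2 p N ↪ Option (Option (Om2 p N)) :=
    Function.Embedding.some.trans Function.Embedding.some
  have hι : ∀ ω, ι ω = some (some ω) := fun _ => rfl
  have hR : StRep (via ι) (fun ω => swap none (ι ω)) := stRep _ none (by simp [hι])
  obtain ⟨t1, t2, t3⟩ := truth hR (zz := swap none (some none)) (v := Units.mk0 2 h2) hp rfl hhh true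
    (by simp) (fun _ => swap_mul_self _ _)
    (fun _ ω => by
      have e1 := swap_apply_apply (swap (none : Option (Option (Om2 p N))) (ι ω)) none (some none)
      have e2 := swap_apply_apply (swap (none : Option (Option (Om2 p N))) (some none)) none (ι ω)
      rw [swap_inv, swap_apply_left, swap_apply_of_ne_of_ne (by simp) (by simp [hι])] at e1
      rw [swap_inv, swap_apply_left, swap_apply_of_ne_of_ne (by simp [hι]) (by simp [hι])] at e2
      rw [← e1, ← e2, swap_comm])
    (fun _ π => by
      rw [← swap_apply_apply, via_notMem π (by simp [hι]), via_notMem π (by simp [hι])])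
  have hlt : ∀ a : ZMod p, a.val ≤ n := fun a => by have := ZMod.val_lt a; omega
  have m4 := hp.M4
  have n2 := hp.N2
  have main := main_gen (n := n) (Ω := Option (Om2 p N)) (by omega) (hlt _) (hlt _) (hlt _) (by omega)
    (by omega) (by omega) (fun V => V.st3 p N) (fun f V ω => map_st3 f V p N ω)
    (fun V hV hr => final_true hp hV hr) _ t2 t1 (by
      rintro (_ | ω)
      · rfl
      · exact t3 ω)
  refine main.equiv (Equiv.permCongrHom (Fintype.equivFinOfCardEq ?_))
  simp [ZMod.card]
  omega
end

theorem exists_par {p N : ℕ} [Fact p.Prime] (h5 : 5 ≤ p) (hN : 2 * N < p) :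
    ∃ (u : (ZMod p)ˣ) (M e : ℕ), 0 < M ∧ e < 8 ∧ Par p u M N e := by
  obtain ⟨u, hu⟩ := IsCyclic.exists_generator (α := (ZMod p)ˣ)
  have hodd : p % 2 = 1 := (Nat.Prime.eq_two_or_odd (Fact.out : p.Prime)).resolve_left (by omega)
  refine ⟨u, 2 * ((p - 4) / 8) + 1, p - 4 * (2 * ((p - 4) / 8) + 1), by omega, by omega,
    ⟨?_, by omega, ⟨_, rfl⟩, by omega, hN, by omega, by omega⟩⟩
  intro v
  have := (mem_powers_iff_mem_zpowers (x := u) (y := v)).2 (hu v)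
  obtain ⟨k, hk⟩ := this
  exact ⟨k, hk⟩

theorem big {n : ℕ} (hn : 9 ≤ n) : ∃ e < 8, ∃ δ : Bool,
    HasBoundedPresentation (Perm (Fin n)) 18 58
      ((11 + 5 * len18 e δ : ℕ) * (1 + Real.logb 2 n)) := by
  obtain ⟨m, hm⟩ : ∃ m, n = 2 * m + 3 ∨ n = 2 * m + 4 := ⟨(n - 3) / 2, by omega⟩
  obtain ⟨p, pp, hmp, hp2⟩ := Nat.exists_prime_lt_and_le_two_mul m (by omega)
  have : Fact p.Prime := ⟨pp⟩
  have h5 : 5 ≤ p := by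
    by_contra h
    have : p = 4 := by omega
    subst this
    exact absurd pp (by norm_num)
  have hodd : p % 2 = 1 := (Nat.Prime.eq_two_or_odd pp).resolve_left (by omega)
  obtain ⟨N, hN⟩ : ∃ N, 2 * m + 1 = p + 2 * N := ⟨(2 * m + 1 - p) / 2, by omega⟩
  have : NeZero N := ⟨by omega⟩
  obtain ⟨u, M, e, hM, he, hp⟩ := exists_par (p := p) (N := N) h5 (by omega)
  have : NeZero M := ⟨by omega⟩
  rcases hm with hm | hm
  · exact ⟨e, he, false, big_false hp (by omega)⟩
  · exact ⟨e, he, true, big_true hp (by omega)⟩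

theorem big_all : ∃ C : ℝ, 0 ≤ C ∧ ∀ n : ℕ, 9 ≤ n →
    HasBoundedPresentation (Perm (Fin n)) 18 58 (C * (1 + Real.logb 2 n)) := by
  refine ⟨((∑ e ∈ Finset.range 8, ∑ δ : Bool, (11 + 5 * len18 e δ) : ℕ) : ℝ), Nat.cast_nonneg _, ?_⟩
  intro n hn
  obtain ⟨e, he, δ, h⟩ := big hn
  refine h.mono (mul_le_mul_of_nonneg_right (Nat.cast_le.2 ?_) ?_)
  · have h1 : 11 + 5 * len18 e δ ≤ ∑ δ : Bool, (11 + 5 * len18 e δ) :=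
      Finset.single_le_sum (f := fun δ => 11 + 5 * len18 e δ) (fun _ _ => Nat.zero_le _)
        (Finset.mem_univ δ)
    exact h1.trans (Finset.single_le_sum (f := fun e => ∑ δ : Bool, (11 + 5 * len18 e δ))
      (fun _ _ => Nat.zero_le _) (Finset.mem_range.2 he))
  · have : 0 ≤ Real.logb 2 n := Real.logb_nonneg (by norm_num) (by exact_mod_cast (by omega : 1 ≤ n))
    linarith
end W

open Equiv
set_option linter.unusedSectionVars false
set_option linter.unusedVariables false

namespace Small
variable {m : ℕ} [NeZero m]

/-- the stars of the small presentation -/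
def S {G : Type} [Group G] (s x : G) (i : ZMod m) : G := x ^ i.val * s * (x ^ i.val)⁻¹

section
variable {G : Type} [Group G] {s x : G}

theorem S_zero : S s x (0 : ZMod m) = s := by simp [S]

theorem S_add (hx : x ^ m = 1) (a i : ZMod m) :
    S s x (a + i) = x ^ a.val * S s x i * (x ^ a.val)⁻¹ := by
  have e : x ^ (a + i).val = x ^ a.val * x ^ i.val := by
    rw [← pow_add, ZMod.val_add, ← pow_mod_orderOf, ← pow_mod_orderOf (n := a.val + i.val),
      Nat.mod_mod_of_dvd _ (orderOf_dvd_of_pow_eq_one hx)]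
  rw [S, S, e]; group

theorem star (hs : s * s = 1) (hx : x ^ m = 1)
    (hb : ∀ j : ZMod m, s * S s x j * s = S s x j * s * S s x j)
    (hc : ∀ j k : ZMod m, j ≠ 0 → k ≠ 0 → j ≠ k →
      s * S s x j * s * S s x k = S s x k * (s * S s x j * s)) :
    StarRel (S s x : ZMod m → G) := by
  have key : ∀ a b : ZMod m, S s x b = x ^ a.val * S s x (b - a) * (x ^ a.val)⁻¹ := by
    intro a b
    rw [← S_add hx, add_sub_cancel]
  refine ⟨?_, ?_, ?_⟩
  · intro a
    calc S s x a * S s x a = x ^ a.val * (s * s) * (x ^ a.val)⁻¹ := by rw [S]; group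
      _ = 1 := by rw [hs]; group
  · intro a b _
    rw [key a b, S]
    generalize x ^ a.val = y
    have := hb (b - a)
    calc _ = y * (s * S s x (b - a) * s) * y⁻¹ := by group
      _ = _ := by rw [this]; group
  · intro a b c hab hac hbc
    rw [key a b, key a c, S]
    generalize x ^ a.val = y
    have := hc (b - a) (c - a) (sub_ne_zero.2 hab.symm) (sub_ne_zero.2 hac.symm)
      (fun h => hbc (sub_left_injective h))
    calc _ = y * (s * S s x (b - a) * s * S s x (c - a)) * y⁻¹ := by group
      _ = _ := by rw [this]; group

/-- `x` lies in the group generated by the stars -/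
theorem x_mem (hx : x ^ m = 1) (hsx : (s * x) ^ (m + 1) = 1) :
    x ∈ Subgroup.closure (Set.range (S s x : ZMod m → G)) := by
  set K := Subgroup.closure (Set.range (S s x : ZMod m → G)) with hK
  have hs : s ∈ K := Subgroup.subset_closure ⟨0, S_zero⟩
  have nx : ∀ y ∈ K, x * y * x⁻¹ ∈ K := by
    intro y hy
    induction hy using Subgroup.closure_induction with
    | mem y hy =>
      obtain ⟨i, rfl⟩ := hy
      refine Subgroup.subset_closure ⟨1 + i, ?_⟩
      rw [S_add hx]
      by_cases h1 : m = 1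
      · subst h1
        rw [pow_one] at hx
        simp [hx]
      · have : Fact (1 < m) := ⟨by have := NeZero.pos m; omega⟩
        rw [ZMod.val_one, pow_one]
    | one => simp
    | mul a b _ _ ha hb =>
      have : x * (a * b) * x⁻¹ = (x * a * x⁻¹) * (x * b * x⁻¹) := by group
      rw [this]; exact mul_mem ha hb
    | inv a _ ha =>
      have : x * a⁻¹ * x⁻¹ = (x * a * x⁻¹)⁻¹ := by group
      rw [this]; exact inv_mem ha
  have npow : ∀ k : ℕ, ∃ y ∈ K, (s * x) ^ k = y * x ^ k := by
    intro k
    induction k with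
    | zero => exact ⟨1, one_mem _, by simp⟩
    | succ k ih =>
      obtain ⟨y, hy, e⟩ := ih
      refine ⟨s * (x * y * x⁻¹), mul_mem hs (nx y hy), ?_⟩
      rw [pow_succ', e, pow_succ']; group
  obtain ⟨y, hy, e⟩ := npow (m + 1)
  rw [hsx, pow_succ, hx, one_mul] at e
  rw [eq_inv_of_mul_eq_one_right e.symm]
  exact inv_mem hy
end

/-- the rotation -/
def rot (m : ℕ) : Perm (Option (ZMod m)) := optionCongr (Equiv.addRight 1)

theorem rot_pow_some (k : ℕ) (i : ZMod m) : (rot m ^ k) (some i) = some (i + k) := by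
  induction k with
  | zero => simp
  | succ k ih => rw [pow_succ', Perm.mul_apply, ih]; simp [rot, add_assoc]

theorem rot_pow_none (k : ℕ) : (rot m ^ k) none = none := by
  induction k with
  | zero => simp
  | succ k ih => rw [pow_succ', Perm.mul_apply, ih]; simp [rot]

theorem rot_m : rot m ^ m = 1 := by
  ext1 ω
  cases ω
  · simp [rot_pow_none]
  · simp [rot_pow_some]

theorem S_model (i : ZMod m) : S (swap none (some 0)) (rot m) i = swap none (some i) := by
  rw [S, ← swap_apply_apply, rot_pow_none, rot_pow_some]
  simp

theorem long_model : (swap none (some 0) * rot m) ^ (m + 1) = 1 := by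
  set c : Perm (Option (ZMod m)) := swap none (some 0) * rot m with hc
  have c0 : c none = some 0 := by simp [hc, rot]
  have c1 : ∀ i : ZMod m, i + 1 ≠ 0 → c (some i) = some (i + 1) := by
    intro i hi
    simp only [hc, Perm.mul_apply, rot, optionCongr_apply, Option.map_some, coe_addRight]
    exact swap_apply_of_ne_of_ne (by simp) (by simpa using hi)
  have c2 : ∀ i : ZMod m, i + 1 = 0 → c (some i) = none := by
    intro i hi
    simp [hc, Perm.mul_apply, rot, hi]
  have k : ∀ k < m, (c ^ (k + 1)) none = some (k : ZMod m) := by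
    intro k hk
    induction k with
    | zero => simp [c0]
    | succ k ih =>
      rw [pow_succ', Perm.mul_apply, ih (by omega), c1]
      · push_cast; rfl
      · intro h
        have : ((k + 1 : ℕ) : ZMod m) = 0 := by push_cast; exact h
        rw [ZMod.natCast_eq_zero_iff] at this
        exact absurd (Nat.le_of_dvd (by omega) this) (by omega)
  have hm := NeZero.pos m
  have top : (c ^ (m + 1)) none = none := by
    have h1 := k (m - 1) (by omega)
    rw [Nat.sub_add_cancel hm] at h1
    rw [pow_succ', Perm.mul_apply, h1, c2]
    have : ((m - 1 + 1 : ℕ) : ZMod m) = 0 := by rw [Nat.sub_add_cancel hm]; simp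
    exact_mod_cast this
  ext1 ω
  cases ω with
  | none => simpa using top
  | some i =>
    have h1 := k i.val (ZMod.val_lt i)
    rw [ZMod.natCast_zmod_val] at h1
    rw [← h1, ← Perm.mul_apply, ← pow_add, add_comm, pow_add, Perm.mul_apply, top]
    rfl

/-- the relators -/
def R (m : ℕ) [NeZero m] : Finset (FreeGroup (Fin 2)) :=
  let s : FreeGroup (Fin 2) := .of 0
  let x : FreeGroup (Fin 2) := .of 1
  ({s * s, x ^ m, (s * x) ^ (m + 1)} ∪
    Finset.univ.image (fun j : ZMod m => s * S s x j * s * (S s x j * s * S s x j)⁻¹)) ∪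
    ((Finset.univ.erase 0 ×ˢ Finset.univ.erase 0).filter (fun q : ZMod m × ZMod m => q.1 ≠ q.2)).image
      (fun q => s * S s x q.1 * s * S s x q.2 * (S s x q.2 * (s * S s x q.1 * s))⁻¹)

theorem card_R (hm : m ≤ 7) : (R m).card ≤ 58 := by
  refine (Finset.card_union_le _ _).trans ?_
  have h1 := Finset.card_union_le ({.of 0 * .of 0, .of 1 ^ m, (.of 0 * .of 1) ^ (m + 1)} :
    Finset (FreeGroup (Fin 2)))
    (Finset.univ.image (fun j : ZMod m => .of 0 * S (.of 0) (.of 1) j * .of 0 *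
      (S (.of 0) (.of 1) j * .of 0 * S (.of 0) (.of 1) j)⁻¹))
  have h2 := Finset.card_le_three (a := FreeGroup.of (0 : Fin 2) * .of 0) (b := .of 1 ^ m)
    (c := (.of 0 * .of 1) ^ (m + 1))
  have h3 := Finset.card_image_le (s := Finset.univ) (f := fun j : ZMod m => 
      FreeGroup.of (0 : Fin 2) * S (.of 0) (.of 1) j * .of 0 *
      (S (.of 0) (.of 1) j * .of 0 * S (.of 0) (.of 1) j)⁻¹)
  rw [Finset.card_univ, ZMod.card] at h3
  have h4 : ((Finset.univ.erase 0 ×ˢ Finset.univ.erase 0).filter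
      (fun q : ZMod m × ZMod m => q.1 ≠ q.2)).card ≤ 36 := by
    refine (Finset.card_filter_le _ _).trans ?_
    rw [Finset.card_product, Finset.card_erase_of_mem (Finset.mem_univ _), Finset.card_univ,
      ZMod.card]
    have : m - 1 ≤ 6 := by omega
    exact Nat.mul_le_mul this this
  have h5 := (Finset.card_image_le (s := ((Finset.univ.erase 0 ×ˢ Finset.univ.erase 0).filter
      (fun q : ZMod m × ZMod m => q.1 ≠ q.2))) (f := fun q => FreeGroup.of (0 : Fin 2) *
      S (.of 0) (.of 1) q.1 * .of 0 * S (.of 0) (.of 1) q.2 *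
      (S (.of 0) (.of 1) q.2 * (.of 0 * S (.of 0) (.of 1) q.1 * .of 0))⁻¹)).trans h4
  exact (Nat.add_le_add (h1.trans (Nat.add_le_add h2 (h3.trans hm))) h5).trans (by norm_num)

theorem map_S {G H : Type} [Group G] [Group H] (f : G →* H) (s x : G) (i : ZMod m) :
    f (S s x i) = S (f s) (f x) i := by simp [S]

/-- relators in terms of relations -/
theorem R_iff {H : Type} [Group H] (f : FreeGroup (Fin 2) →* H) (s x : H) (hs : f (.of 0) = s)
    (hx : f (.of 1) = x) : (∀ r ∈ R m, f r = 1) ↔ s * s = 1 ∧ x ^ m = 1 ∧ (s * x) ^ (m + 1) = 1 ∧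
    (∀ j : ZMod m, s * S s x j * s = S s x j * s * S s x j) ∧
    (∀ j k : ZMod m, j ≠ 0 → k ≠ 0 → j ≠ k →
      s * S s x j * s * S s x k = S s x k * (s * S s x j * s)) := by
  have a1 : ∀ P : FreeGroup (Fin 2) → Prop, (∀ r ∈ R m, P r) ↔
      (P (.of 0 * .of 0) ∧ P (.of 1 ^ m) ∧ P ((.of 0 * .of 1) ^ (m + 1)) ∧
      (∀ j : ZMod m, P (.of 0 * S (.of 0) (.of 1) j * .of 0 *
      (S (.of 0) (.of 1) j * .of 0 * S (.of 0) (.of 1) j)⁻¹)) ∧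
      (∀ j k : ZMod m, j ≠ 0 → k ≠ 0 → j ≠ k → P (.of 0 *
      S (.of 0) (.of 1) j * .of 0 * S (.of 0) (.of 1) k *
      (S (.of 0) (.of 1) k * (.of 0 * S (.of 0) (.of 1) j * .of 0))⁻¹))) := by
    intro P
    simp only [R, Finset.mem_union, Finset.mem_insert, Finset.mem_singleton, Finset.mem_image,
      Finset.mem_filter, Finset.mem_product, Finset.mem_erase, Finset.mem_univ, and_true, true_and]
    constructor
    · intro h
      exact ⟨h _ (by tauto), h _ (by tauto), h _ (by tauto), fun j => h _ (.inl (.inr ⟨j, rfl⟩)),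
        fun j k hj hk hjk => h _ (.inr ⟨(j, k), ⟨⟨hj, hk⟩, hjk⟩, rfl⟩)⟩
    · rintro ⟨h1, h2, h3, h4, h5⟩ r (((rfl | rfl | rfl) | ⟨j, rfl⟩) | ⟨⟨j, k⟩, ⟨⟨hj, hk⟩, hjk⟩, rfl⟩)
      exacts [h1, h2, h3, h4 j, h5 j k hj hk hjk]
  rw [a1]
  simp only [map_mul, map_inv, map_pow, map_S, hs, hx, mul_inv_eq_one]

theorem small (hm : m ≤ 7) : ∃ L : ℝ, HasBoundedPresentation (Perm (Fin (m + 1))) 18 58 L := by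
  let ψ : FreeGroup (Fin 2) →* Perm (Option (ZMod m)) :=
    FreeGroup.lift ![swap none (some 0), rot m]
  have p0 : ψ (.of 0) = swap none (some 0) := by simp [ψ]
  have p1 : ψ (.of 1) = rot m := by simp [ψ]
  set q := QuotientGroup.mk' (Subgroup.normalClosure (R m : Set (FreeGroup (Fin 2)))) with hq
  have ht : ∀ i j : ZMod m, i ≠ j → swap none (some i) * swap none (some j) * swap none (some i) = 
      (swap (some i) (some j) : Perm (Option (ZMod m))) := by
    intro i j hij
    have := swap_apply_apply (swap none (some i)) none (some j)
    rw [swap_inv, swap_apply_left, swap_apply_of_ne_of_ne (by simp) (by simpa using hij.symm)] at this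
    exact this.symm
  have hψ : ∀ r ∈ R m, ψ r = 1 := by
    rw [R_iff ψ _ _ p0 p1]
    refine ⟨swap_mul_self _ _, rot_m, long_model, ?_, ?_⟩
    · intro j
      rw [S_model]
      by_cases hj : j = 0
      · rw [hj]
      · rw [ht _ _ (Ne.symm hj), ht _ _ hj, swap_comm]
    · intro j k hj hk hjk
      rw [S_model, S_model, ht _ _ (Ne.symm hj)]
      rw [← mul_inv_eq_iff_eq_mul, ← swap_apply_apply, swap_apply_of_ne_of_ne (by simp) (by simp),
        swap_apply_of_ne_of_ne (by simpa using hk) (by simpa using hjk.symm)]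
  have hqR : ∀ r ∈ R m, q r = 1 := fun r hr =>
    (QuotientGroup.eq_one_iff r).2 (Subgroup.subset_normalClosure hr)
  rw [R_iff q _ _ rfl rfl] at hqR
  obtain ⟨h1, h2, h3, h4, h5⟩ := hqR
  have est : (fun i : ZMod m => q (S (.of 0) (.of 1) i)) = S (q (.of 0)) (q (.of 1)) :=
    funext fun i => map_S q _ _ i
  obtain ⟨k1, k2⟩ := present ψ (R m : Set (FreeGroup (Fin 2))) hψ
    (fun i : ZMod m => S (.of 0) (.of 1) i)
    (fun i => by rw [map_S, p0, p1, S_model])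
    (by rw [← hq, est]; exact star h1 h2 h4 h5)
    (by
      rw [← hq, est]
      intro i
      fin_cases i
      · exact Subgroup.subset_closure ⟨0, S_zero⟩
      · exact x_mem h2 h3)
  have main : HasBoundedPresentation (Perm (Option (ZMod m))) 18 58
    ((2 + ∑ w ∈ R m, FreeGroup.norm w : ℕ) : ℝ) :=
    ⟨2, ψ, R m, by norm_num, k1, card_R hm, k2, le_rfl⟩
  refine ⟨_, main.equiv (Equiv.permCongrHom (Fintype.equivFinOfCardEq ?_))⟩
  simp [ZMod.card]
end Small

/-- There is a constant `C` such that for every `n ≥ 2` the symmetric group `S_n` has a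
presentation with at most `18` generators and at most `58` relators, of length at most
`C·(1 + log₂ n)`. -/
theorem symmetricGroup_short_bounded_presentation :
    ∃ C : ℝ, ∀ n : ℕ, 2 ≤ n →
      HasBoundedPresentation (Equiv.Perm (Fin n)) 18 58 (C * (1 + Real.logb 2 n)) := by
  obtain ⟨C, hC, hbig⟩ := W.big_all
  have hsmall : ∀ n : ℕ, ∃ L : ℝ, 2 ≤ n → n ≤ 8 →
      HasBoundedPresentation (Equiv.Perm (Fin n)) 18 58 L := by
    intro n
    by_cases hn : 2 ≤ n ∧ n ≤ 8
    · obtain ⟨m, rfl⟩ : ∃ m, n = m + 1 := ⟨n - 1, by omega⟩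
      have : NeZero m := ⟨by omega⟩
      obtain ⟨L, hL⟩ := Small.small (m := m) (by omega)
      exact ⟨L, fun _ _ => hL⟩
    · exact ⟨0, fun h1 h2 => absurd ⟨h1, h2⟩ hn⟩
  choose f hf using hsmall
  refine ⟨C + ∑ k ∈ Finset.range 9, |f k|, ?_⟩
  intro n hn
  have hlog : 0 ≤ Real.logb 2 n := Real.logb_nonneg (by norm_num) (by exact_mod_cast (by omega : 1 ≤ n))
  have hsum : 0 ≤ ∑ k ∈ Finset.range 9, |f k| := Finset.sum_nonneg (fun _ _ => abs_nonneg _)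
  rcases le_or_gt n 8 with h8 | h8
  · refine (hf n hn h8).mono ?_
    have h1 : |f n| ≤ ∑ k ∈ Finset.range 9, |f k| :=
      Finset.single_le_sum (f := fun k => |f k|) (fun _ _ => abs_nonneg _)
        (Finset.mem_range.2 (by omega))
    have h2 := le_abs_self (f n)
    nlinarith [mul_nonneg (add_nonneg hC hsum) hlog]
  · refine (hbig n h8).mono ?_
    exact mul_le_mul_of_nonneg_right (by linarith) (by linarith)
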